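/- For every even integer ℓ ≥ 4 there exists N₀(ℓ) such that every edge-colored graph (G,c) on n ≥ N₀(ℓ) vertices with δ^c(G) ≥ (n+5)/3 contains a rainbow ℓ-cycle. -/

import Mathlib

open Finset

variable {V : Type*}

/-- Number of distinct colors on edges incident to `v`. -/
noncomputable def colorDeg (G : SimpleGraph V) (c : Sym2 V → ℕ) (v : V) : ℕ :=
  Set.ncard {α : ℕ | ∃ u, G.Adj u v ∧ c s(u, v) = α}

/-- Number of distinct colors `c({u,v})` over `u ∈ N(v) ∩ U`. -/
noncomputable def colorDegOn (G : SimpleGraph V) (c : Sym2 V → ℕ) (v : V) (U : Set V) : ℕ :=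
  Set.ncard {α : ℕ | ∃ u ∈ U, G.Adj u v ∧ c s(u, v) = α}

/-- Minimum color-degree `δ^c(G)`. -/
noncomputable def minColorDeg (G : SimpleGraph V) (c : Sym2 V → ℕ) : ℕ :=
  ⨅ v : V, colorDeg G c v

/-- `(G,c)` is edge-minimal: no proper spanning subgraph has the same minimum color-degree. -/
def EdgeMinimal (G : SimpleGraph V) (c : Sym2 V → ℕ) : Prop :=
  ∀ H : SimpleGraph V, H ≤ G → H ≠ G → minColorDeg H c ≠ minColorDeg G c

/-- `(G,c)` contains a rainbow cycle on `ℓ` vertices. -/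
def HasRainbowCycle (G : SimpleGraph V) (c : Sym2 V → ℕ) (ℓ : ℕ) : Prop :=
  ∃ (u : V) (p : G.Walk u u), p.IsCycle ∧ p.length = ℓ ∧ (p.edges.map c).Nodup

/-- There is a rainbow path from `v` to `y` on `k` vertices whose edge colors avoid `C`. -/
def RainbowPathAvoiding (G : SimpleGraph V) (c : Sym2 V → ℕ) (v y : V) (k : ℕ)
    (C : Set ℕ) : Prop :=
  ∃ p : G.Walk v y, p.IsPath ∧ p.length + 1 = k ∧ (p.edges.map c).Nodup ∧
    ∀ e ∈ p.edges, c e ∉ C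

/-- `σ_{v,X}(y)`: the number of colors `X`-separating `y` from `v`. -/
noncomputable def sepCount (G : SimpleGraph V) (c : Sym2 V → ℕ) (v : V) (X : Set V)
    (y : V) : ℕ :=
  Set.ncard {α : ℕ | ∃ x ∈ X, G.Adj x y ∧ c s(x, y) = α ∧ c s(v, x) ≠ α}

/-- `ρ_{v,X}(y)`: the number of colors restricted for `y` by `(v,X)`. -/
noncomputable def restrCount (G : SimpleGraph V) (c : Sym2 V → ℕ) (v : V) (X : Set V)
    (y : V) : ℕ :=
  Set.ncard {α : ℕ | (∃ x ∈ X, G.Adj x y ∧ c s(x, y) = α ∧ c s(v, x) ≠ α) ∧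
    ∀ w, G.Adj w y → w ∉ X → c s(w, y) ≠ α}

/-- The replication number `R(G,c) = max_{v,α} |N_α(v)|`. -/
noncomputable def repNum (G : SimpleGraph V) (c : Sym2 V → ℕ) : ℕ :=
  ⨆ v : V, ⨆ α : ℕ, Set.ncard {u : V | G.Adj u v ∧ c s(u, v) = α}

/-- `N_!(v)`: neighbors `u` of `v` whose color `c({u,v})` appears on exactly one edge at `v`. -/
def bangNbhd (G : SimpleGraph V) (c : Sym2 V → ℕ) (v : V) : Set V :=
  {u : V | G.Adj u v ∧ Set.ncard {w : V | G.Adj w v ∧ c s(w, v) = c s(u, v)} = 1}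

/-! Suppose that there is no rainbow `ℓ`-cycle and that `n + 5 ≤ 3 * d`, where `d` is the minimum
color degree. Let every vertex select `d` neighbors along edges of distinct colors; this gives a
digraph with all out-degrees equal to `d` and with adjacency matrix `A`. In a family of closed
walks a repeated vertex or color costs a degree of freedom, so if no closed `ℓ`-walk yields a
rainbow cycle, then there are only `o(d ^ ℓ)` of them and `tr (A ^ ℓ) = o(d ^ ℓ)`. The eigenvalue
`d` contributes `d ^ ℓ`, while the other eigenvalues satisfy `∑ |μ| ^ 2 ≤ n * d - d ^ 2 ≤ 2 * d ^ 2`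
by Schur's inequality. As `ℓ` is even, cancelling `d ^ ℓ` forces a conjugate pair of eigenvalues of
modulus about `d`. Then `∑ ((A ^ 2) u v) ^ 2` is close to its maximum `3 * d ^ 4`, and the digraph
is close to a blow-up of a directed triangle with parts of size `d`.

If `3 ∣ ℓ`, the blow-up contains too many closed `ℓ`-walks. Otherwise, closed walks with one or two
reversed edges show that almost all edges from one part to a given vertex of the next part have the
same color. After deleting exceptional vertices this structure is robust enough for rainbow paths
between prescribed vertices to be built greedily, so that each edge deviating from it is severely
restricted, and counting the colors at suitable vertices gives `3 * d < n + 5`. -/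

namespace RainbowEvenCycle

universe u

open Filter

/-! ### Rainbow paths and cores -/

/-- `RainbowPath G c a b k S C`: there is a rainbow path of length `k` from `a` to `b` whose vertex
set is `S` and whose color set is `C`. Paths are extended and glued using `S` and `C` only, so the
underlying walk is not recorded. -/
inductive RainbowPath [DecidableEq V] (G : SimpleGraph V) (c : Sym2 V → ℕ) :
    V → V → ℕ → Finset V → Finset ℕ → Prop
  | nil (a : V) : RainbowPath G c a a 0 {a} ∅
  | cons {a b e : V} {k : ℕ} {S : Finset V} {C : Finset ℕ} (hadj : G.Adj a b) (haS : a ∉ S)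
      (hcC : c s(a, b) ∉ C) (h : RainbowPath G c b e k S C) :
      RainbowPath G c a e (k + 1) (insert a S) (insert (c s(a, b)) C)

namespace RainbowPath

variable [DecidableEq V] {G : SimpleGraph V} {c : Sym2 V → ℕ} {a b e f : V} {k k' : ℕ}
  {S S' : Finset V} {C C' : Finset ℕ}

lemma card_support_le (h : RainbowPath G c a b k S C) : #S ≤ k + 1 := by
  induction h with
  | nil _ => simp
  | cons _ _ _ _ ih => exact (card_insert_le _ _).trans (by lia)

lemma card_colors_le (h : RainbowPath G c a b k S C) : #C ≤ k := by
  induction h with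
  | nil _ => simp
  | cons _ _ _ _ ih => exact (card_insert_le _ _).trans (by lia)

lemma exists_walk (h : RainbowPath G c a b k S C) :
    ∃ p : G.Walk a b, p.IsPath ∧ p.length = k ∧ (p.edges.map c).Nodup ∧
      ∀ e ∈ p.edges, c e ∈ C := by
  suffices ∃ p : G.Walk a b, p.IsPath ∧ p.length = k ∧ (p.edges.map c).Nodup ∧
      p.support.toFinset = S ∧ ∀ e ∈ p.edges, c e ∈ C by grind
  induction h with
  | nil a => exact ⟨.nil, by simp⟩
  | @cons a b e k S C hadj haS hcC _ ih =>
    obtain ⟨p, hpath, hlen, hnodup, rfl, hC⟩ := ih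
    refine ⟨.cons hadj p, ?_, by simp [hlen], ?_, by simp, ?_⟩
    · exact (SimpleGraph.Walk.cons_isPath_iff _ _).2 ⟨hpath, by simpa using haS⟩
    · simp only [SimpleGraph.Walk.edges_cons, List.map_cons, List.nodup_cons, List.mem_map]
      exact ⟨fun ⟨x, hx, hxc⟩ ↦ hcC (hxc ▸ hC x hx), hnodup⟩
    · simp only [SimpleGraph.Walk.edges_cons, List.mem_cons, forall_eq_or_imp]
      exact ⟨mem_insert_self _ _, fun x hx ↦ mem_insert_of_mem (hC x hx)⟩

lemma append (h : RainbowPath G c a b k S C) (h' : RainbowPath G c b e k' S' C')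
    (hS : ∀ x ∈ S, x ∈ S' → x = b) (hC : Disjoint C C') :
    RainbowPath G c a e (k + k') (S ∪ S') (C ∪ C') := by
  induction h with
  | nil b =>
    have hb : b ∈ S' := by cases h' <;> simp
    simpa [union_eq_right.2 (singleton_subset_iff.2 hb)] using h'
  | @cons a x b k S C hadj haS hcC hpath ih =>
    have hbS : b ∈ S := by clear * - hpath; induction hpath <;> simp_all
    rw [disjoint_insert_left] at hC
    have hrest := ih h' (fun x hx ↦ hS x (mem_insert_of_mem hx)) hC.2
    rw [insert_union, insert_union, Nat.add_right_comm]
    refine hrest.cons hadj ?_ (notMem_union.2 ⟨hcC, hC.1⟩)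
    exact notMem_union.2 ⟨haS, fun haS' ↦ haS (hS a (mem_insert_self _ _) haS' ▸ hbS)⟩

lemma hasRainbowCycle (h : RainbowPath G c a b k S C) (h' : RainbowPath G c b a k' S' C')
    (hS : ∀ x ∈ S, x ∈ S' → x = a ∨ x = b) (hC : Disjoint C C') (hab : a ≠ b) :
    HasRainbowCycle G c (k + k') := by
  cases h with
  | nil => exact absurd rfl hab
  | @cons _ x _ k S C hadj haS hcC hpath =>
    rw [disjoint_insert_left] at hC
    have hclosing : RainbowPath G c x a (k + k') (S ∪ S') (C ∪ C') :=
      hpath.append h' (fun y hy hy' ↦ (hS y (mem_insert_of_mem hy) hy').resolve_left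
        fun hya ↦ haS (hya ▸ hy)) hC.2
    obtain ⟨p, hp, hlen, hnodup, hpC⟩ := hclosing.exists_walk
    have hnew : ∀ e ∈ p.edges, c e ≠ c s(a, x) := fun e he hce ↦
      notMem_union.2 ⟨hcC, hC.1⟩ (hce ▸ hpC e he)
    refine ⟨a, .cons hadj p, (SimpleGraph.Walk.cons_isCycle_iff _ _).2 ⟨hp, fun he ↦ hnew _ he rfl⟩,
      by simp only [SimpleGraph.Walk.length_cons]; lia, ?_⟩
    simpa [hnodup] using hnew

lemma single (hab : G.Adj a b) : RainbowPath G c a b 1 {a, b} {c s(a, b)} := by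
  simpa using (nil b).cons hab (by simpa using hab.ne) (by simp)

lemma pair (hab : G.Adj a b) (hbe : G.Adj b e) (hae : a ≠ e) (hc : c s(a, b) ≠ c s(b, e)) :
    RainbowPath G c a e 2 {a, b, e} {c s(a, b), c s(b, e)} :=
  (single hbe).cons hab (by simp [hae, hab.ne]) (by simpa using hc)

lemma triple (hab : G.Adj a b) (hbe : G.Adj b e) (hef : G.Adj e f) (hae : a ≠ e) (haf : a ≠ f)
    (hbf : b ≠ f) (h₁₂ : c s(a, b) ≠ c s(b, e)) (h₁₃ : c s(a, b) ≠ c s(e, f))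
    (h₂₃ : c s(b, e) ≠ c s(e, f)) :
    RainbowPath G c a f 3 {a, b, e, f} {c s(a, b), c s(b, e), c s(e, f)} :=
  (pair hbe hef hbf h₂₃).cons hab (by simp [hae, haf, hab.ne]) (by simp [h₁₂, h₁₃])

end RainbowPath

lemma sum_zmod_three (f : ZMod 3 → ℕ) (j : ZMod 3) :
    ∑ i, f i = f j + f (j + 1) + f (j + 2) := by
  have huniv : (univ : Finset (ZMod 3)) = {0, 1, 2} := by decide
  rw [← Equiv.sum_comp (Equiv.addLeft j) f, huniv, sum_insert (by decide), sum_insert (by decide),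
    sum_singleton]
  simp [add_assoc]

open scoped Classical in
/-- An almost extremal configuration at scale `d`: almost all vertices are split into three parts of
size about `d`, indexed cyclically, almost all edges are present from `part i` to `part (i + 1)`,
and the edges arriving at `v` from the preceding part have color `color v`, different vertices of
a part having different colors. -/
structure Core (G : SimpleGraph V) (c : Sym2 V → ℕ) (d : ℕ) where
  part : ZMod 3 → Finset V
  color : V → ℕ
  nonempty : ∀ i, (part i).Nonempty
  eq_of_mem : ∀ {i j v}, v ∈ part i → v ∈ part j → i = j
  color_injOn : ∀ i, Set.InjOn color (part i)
  card_part_le : ∀ i, 1000 * #(part i) ≤ 1001 * d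
  card_out_ge : ∀ {i v}, v ∈ part i →
    999 * d ≤ 1000 * #{u ∈ part (i + 1) | G.Adj v u ∧ c s(v, u) = color u}
  card_in_ge : ∀ {i v}, v ∈ part i →
    999 * d ≤ 1000 * #{u ∈ part (i - 1) | G.Adj u v ∧ c s(u, v) = color v}
  exists_cover : ∃ R : Finset V, 1000 * #R ≤ d ∧ ∀ v ∉ R, ∃ i, v ∈ part i

namespace Core

variable {G : SimpleGraph V} {c : Sym2 V → ℕ} {d ℓ : ℕ} (K : Core G c d) {i j : ZMod 3}
  {u v w x : V}

open scoped Classical in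
/-- The out-neighborhood of `w` in `part j`: the neighbors `u` joined to `w` by an edge of color
`color u`. -/
noncomputable def outNbhd (j : ZMod 3) (w : V) : Finset V :=
  {u ∈ K.part j | G.Adj w u ∧ c s(w, u) = K.color u}

open scoped Classical in
/-- The in-neighborhood of `w` in `part j`: the neighbors `u` joined to `w` by an edge of color
`color w`. -/
noncomputable def inNbhd (j : ZMod 3) (w : V) : Finset V :=
  {u ∈ K.part j | G.Adj u w ∧ c s(u, w) = K.color w}

lemma mem_outNbhd : u ∈ K.outNbhd j w ↔ u ∈ K.part j ∧ G.Adj w u ∧ c s(w, u) = K.color u := by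
  simp [outNbhd]

lemma mem_inNbhd : u ∈ K.inNbhd j w ↔ u ∈ K.part j ∧ G.Adj u w ∧ c s(u, w) = K.color w := by
  simp [inNbhd]

lemma outNbhd_subset : K.outNbhd j w ⊆ K.part j := fun _ h ↦ (K.mem_outNbhd.1 h).1

lemma inNbhd_subset : K.inNbhd j w ⊆ K.part j := fun _ h ↦ (K.mem_inNbhd.1 h).1

lemma card_outNbhd_ge (hv : v ∈ K.part i) : 999 * d ≤ 1000 * #(K.outNbhd (i + 1) v) :=
  K.card_out_ge hv

lemma card_inNbhd_ge (hv : v ∈ K.part i) : 999 * d ≤ 1000 * #(K.inNbhd (i - 1) v) :=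
  K.card_in_ge hv

lemma exists_fresh {T F : Finset V} {C : Finset ℕ} (hT : T ⊆ K.part i) (hcard : #F + #C < #T) :
    ∃ x ∈ T, x ∉ F ∧ K.color x ∉ C := by
  classical
  have hinj : Set.InjOn K.color ({x ∈ T | K.color x ∈ C} : Finset V) := (K.color_injOn i).mono
    fun x hx ↦ hT (mem_filter.1 hx).1
  have hC : #{x ∈ T | K.color x ∈ C} ≤ #C :=
    card_le_card_of_injOn _ (fun x hx ↦ (mem_filter.1 hx).2) hinj
  have hunion := card_union_le F {x ∈ T | K.color x ∈ C}
  obtain ⟨x, hxT, hx⟩ := exists_mem_notMem_of_card_lt_card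
    (s := F ∪ {x ∈ T | K.color x ∈ C}) (t := T) (by lia)
  grind

lemma card_le_card_inter_inNbhd [DecidableEq V] {T : Finset V} (hT : T ⊆ K.part j)
    (hu : u ∈ K.part (j + 1)) : 1000 * #T ≤ 1000 * #(T ∩ K.inNbhd j u) + 2 * d := by
  have hin := K.card_inNbhd_ge hu
  have hpart := K.card_part_le j
  rw [add_sub_cancel_right] at hin
  have hunion := card_le_card (union_subset hT (K.inNbhd_subset (j := j) (w := u)))
  have := card_union_add_card_inter T (K.inNbhd j u)
  lia

/-- `w` has a non-negligible out-neighborhood in `part j`. -/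
def Rich (j : ZMod 3) (w : V) : Prop := d ≤ 100 * #(K.outNbhd j w)

/-- `w` is joined to almost all of `part j` by out-edges. -/
def Full (j : ZMod 3) (w : V) : Prop := 970 * d ≤ 1000 * #(K.outNbhd j w)

variable {K}

lemma Full.rich (h : K.Full j w) : K.Rich j w := by
  unfold Full at h
  unfold Rich
  lia

variable (K)

lemma rich_of_mem (hv : v ∈ K.part i) : K.Rich (i + 1) v :=
  Full.rich ((by lia : 970 * d ≤ 999 * d).trans (K.card_outNbhd_ge hv))

lemma exists_next_vertex {k : ℕ} {F : Finset V} {C : Finset ℕ}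
    (hd : 1000 * (#F + #C + 10) ≤ d) (hw : K.Rich j w) (hu : u ∈ K.part (j + (k + 1 : ℕ))) :
    ∃ x ∈ K.outNbhd j w, x ∉ F ∧ K.color x ∉ C ∧ (k = 0 → u ∈ K.outNbhd (j + 1) x) := by
  classical
  unfold Rich at hw
  rcases eq_or_ne k 0 with rfl | hk
  · have hu : u ∈ K.part (j + 1) := by simpa using hu
    have hinter := K.card_le_card_inter_inNbhd K.outNbhd_subset hu (T := K.outNbhd j w)
    obtain ⟨x, hx, hxF, hxC⟩ := K.exists_fresh (T := K.outNbhd j w ∩ K.inNbhd j u) (F := F) (C := C)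
      (inter_subset_left.trans K.outNbhd_subset) (by lia)
    rw [mem_inter, mem_inNbhd] at hx
    exact ⟨x, hx.1, hxF, hxC, fun _ ↦ K.mem_outNbhd.2 ⟨hu, hx.2.2⟩⟩
  · obtain ⟨x, hx, hxF, hxC⟩ := K.exists_fresh (F := F) (C := C)
      (K.outNbhd_subset (j := j) (w := w)) (by lia)
    exact ⟨x, hx, hxF, hxC, fun h ↦ absurd h hk⟩

lemma exists_rainbowPath [DecidableEq V] {k : ℕ} {F : Finset V} {C : Finset ℕ}
    (hd : 1000 * (#F + #C + 3 * k + 10) ≤ d) (hw : K.Rich j w) (hu : u ∈ K.part (j + k))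
    (hwu : w ≠ u) (huC : K.color u ∉ C) (hk : k = 0 → u ∈ K.outNbhd j w) :
    ∃ S D, RainbowPath G c w u (k + 1) S D ∧ (∀ x ∈ S, x = w ∨ x = u ∨ x ∉ F) ∧
      Disjoint D C := by
  induction k generalizing j w F C with
  | zero =>
    obtain ⟨-, hadj, hc⟩ := K.mem_outNbhd.1 (hk rfl)
    exact ⟨_, _, .single hadj, by simp +contextual [or_imp], by simpa [hc] using huC⟩
  | succ k ih =>
    have hF := (card_insert_le w (insert u F)).trans (by grw [card_insert_le u F])
    have hC := card_insert_le (K.color u) C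
    obtain ⟨x, hx, hxF, hxC, hxu⟩ := K.exists_next_vertex (F := insert w (insert u F))
      (C := insert (K.color u) C) (by lia) hw hu
    obtain ⟨hxj, hadj, hc⟩ := K.mem_outNbhd.1 hx
    simp only [mem_insert, not_or] at hxF hxC
    have hF' := card_insert_le w F
    have hC' := card_insert_le (K.color x) C
    obtain ⟨S, D, hpath, hS, hD⟩ := ih (F := insert w F) (C := insert (K.color x) C) (by lia)
      (K.rich_of_mem hxj) (by rwa [add_assoc, add_comm 1, ← Nat.cast_add_one]) hxF.2.1
      (by grind) hxu
    rw [disjoint_insert_right] at hD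
    refine ⟨_, _, hpath.cons hadj (by grind) (by rw [hc]; exact hD.1), by grind, ?_⟩
    rw [disjoint_insert_left, hc]
    exact ⟨hxC.2, hD.2⟩

lemma hasRainbowCycle [DecidableEq V] {r : ℕ} {S : Finset V} {C : Finset ℕ}
    (hd : 1000 * (10 * ℓ + 10) ≤ d) (hpath : RainbowPath G c u w r S C) (hw : K.Rich j w)
    (hu : u ∈ K.part i) (hmod : i + r + 1 = j + ℓ) (hwu : w ≠ u) (huC : K.color u ∉ C)
    (hr : r < ℓ) (hlast : r + 1 = ℓ → u ∈ K.outNbhd j w) : HasRainbowCycle G c ℓ := by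
  obtain ⟨k, rfl⟩ : ∃ k, ℓ = r + (k + 1) := ⟨ℓ - r - 1, by lia⟩
  have hu' : u ∈ K.part (j + k) := by
    convert hu using 2
    push_cast at hmod
    linear_combination -hmod
  have hScard := hpath.card_support_le
  have hCcard := hpath.card_colors_le
  obtain ⟨S', D, hpath', hS, hD⟩ := K.exists_rainbowPath (F := S) (C := C) (by lia) hw hu' hwu huC
    fun hk ↦ hlast (by lia)
  exact hpath.hasRainbowCycle hpath' (by grind) hD.symm hwu.symm

end Core

open scoped Classical in
/-- The set of colors of the edges at `v`. -/
noncomputable def colorSet [Fintype V] (G : SimpleGraph V) (c : Sym2 V → ℕ) (v : V) : Finset ℕ :=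
  ({u | G.Adj v u} : Finset V).image fun u ↦ c s(v, u)

lemma mem_colorSet [Fintype V] {G : SimpleGraph V} {c : Sym2 V → ℕ} {v : V} {α : ℕ} :
    α ∈ colorSet G c v ↔ ∃ u, G.Adj v u ∧ c s(v, u) = α := by
  simp [colorSet]

lemma colorDeg_eq_card_colorSet [Fintype V] (G : SimpleGraph V) (c : Sym2 V → ℕ) (v : V) :
    colorDeg G c v = #(colorSet G c v) := by
  rw [colorDeg, ← Set.ncard_coe_finset]
  congr 1
  ext α
  simp [mem_colorSet, G.adj_comm, Sym2.eq_swap]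

/-- A core of a graph without a rainbow cycle of length `ℓ`, where `3 ∤ ℓ`, in which every color
degree is at least `d`. -/
structure RainbowFreeCore (G : SimpleGraph V) (c : Sym2 V → ℕ) (d ℓ : ℕ) extends Core G c d where
  four_le : 4 ≤ ℓ
  even : Even ℓ
  mod_three : (ℓ : ZMod 3) = 1 ∨ (ℓ : ZMod 3) = 2
  large : 1000 * (10 * ℓ + 10) ≤ d
  not_hasRainbowCycle : ¬ HasRainbowCycle G c ℓ
  le_colorDeg : ∀ v, d ≤ colorDeg G c v

namespace Core

variable {G : SimpleGraph V} {c : Sym2 V → ℕ} {d : ℕ} (K : Core G c d) {i j : ZMod 3} {v w : V}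

/-- An edge from `v ∈ part i` to `w` whose color is not the one of the edges arriving at `v` from
the preceding part. -/
structure Improper (i : ZMod 3) (v w : V) : Prop where
  mem : v ∈ K.part i
  adj : G.Adj v w
  color_ne : c s(v, w) ≠ K.color v

open scoped Classical in
/-- The set of colors of the improper edges from `part i` to `w`. -/
noncomputable def improperColors (i : ZMod 3) (w : V) : Finset ℕ :=
  {v ∈ K.part i | K.Improper i v w}.image fun v ↦ c s(v, w)

lemma mem_improperColors {α : ℕ} :
    α ∈ K.improperColors i w ↔ ∃ v, K.Improper i v w ∧ c s(v, w) = α := by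
  simp only [improperColors, mem_image, mem_filter]
  exact exists_congr fun v ↦ by grind [Improper]

lemma finite (K : Core G c d) : Finite V := by
  obtain ⟨R, -, hR⟩ := K.exists_cover
  refine Set.finite_univ_iff.1 ((R.finite_toSet.union
    (Set.finite_iUnion fun i ↦ (K.part i).finite_toSet)).subset fun v _ ↦ ?_)
  by_cases hv : v ∈ R
  · exact .inl hv
  · exact .inr (Set.mem_iUnion.2 (hR v hv))

end Core

namespace RainbowFreeCore

variable {G : SimpleGraph V} {c : Sym2 V → ℕ} {d ℓ : ℕ} (K : RainbowFreeCore G c d ℓ)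
  {i j : ZMod 3} {u u' v w : V}

lemma not_improper (hw : K.Rich j w) : ¬ K.Improper (j + ℓ + 1) v w := by
  classical
  rintro ⟨hv, hadj, hne⟩
  have hl := K.four_le
  exact K.not_hasRainbowCycle <| K.hasRainbowCycle K.large (.single hadj) hw hv (by grind)
    hadj.ne' (by simpa using hne.symm) (by lia) (by lia)

lemma exists_common_inNbhd {F : Finset V} (hF : 1000 * #F < 900 * d) (hu : u ∈ K.part j)
    (hu' : u' ∈ K.part j) : ∃ x ∈ K.inNbhd (j - 1) u, x ∈ K.inNbhd (j - 1) u' ∧ x ∉ F := by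
  classical
  have hin := K.card_inNbhd_ge hu
  have hinter := K.card_le_card_inter_inNbhd (j := j - 1) K.inNbhd_subset (by simpa using hu')
    (T := K.inNbhd (j - 1) u)
  obtain ⟨x, hx, hxF⟩ := exists_mem_notMem_of_card_lt_card (s := F)
    (t := K.inNbhd (j - 1) u ∩ K.inNbhd (j - 1) u') (by lia)
  exact ⟨x, mem_of_mem_inter_left hx, mem_of_mem_inter_right hx, hxF⟩

lemma color_eq_of_improper_of_improper (hu : K.Improper j u w) (hu' : K.Improper j u' w)
    (hc : c s(u, w) ≠ c s(u', w)) : K.color u = c s(u', w) ∨ K.color u' = c s(u, w) := by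
  classical
  by_contra! ⟨h₁, h₂⟩
  have hl := K.four_le
  have hd := K.large
  have huu' : u ≠ u' := by rintro rfl; exact hc rfl
  apply K.not_hasRainbowCycle
  rcases K.mod_three with hmod | hmod
  · obtain ⟨x, hx, hx', hxF⟩ := K.exists_common_inNbhd (F := {w, u, u'})
      (by grind [card_le_three (a := w) (b := u) (c := u')]) hu.mem hu'.mem
    simp only [mem_insert, mem_singleton, not_or] at hxF
    obtain ⟨hxj, hxu, hcx⟩ := K.mem_inNbhd.1 hx
    obtain ⟨-, hxu', hcx'⟩ := K.mem_inNbhd.1 hx'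
    have hcol := (K.color_injOn j).ne hu.mem hu'.mem huu'
    have hpath := RainbowPath.triple (c := c) hu'.adj hu.adj.symm hxu.symm huu'.symm
      (Ne.symm hxF.2.2) (Ne.symm hxF.1) (by grind [Sym2.eq_swap]) (by grind [Sym2.eq_swap])
      (by grind [Sym2.eq_swap, hu.color_ne])
    refine K.hasRainbowCycle hd hpath (K.rich_of_mem hxj) hu'.mem (by grind) hxF.2.2
      (by grind [Sym2.eq_swap, hu'.color_ne]) (by lia) fun _ ↦ ?_
    exact K.mem_outNbhd.2 ⟨by simpa using hu'.mem, hxu', hcx'⟩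
  · have hpath := RainbowPath.pair (c := c) hu'.adj hu.adj.symm huu'.symm
      (by grind [Sym2.eq_swap])
    exact K.hasRainbowCycle hd hpath (K.rich_of_mem hu.mem) hu'.mem (by grind) huu'
      (by grind [Sym2.eq_swap, hu'.color_ne]) (by lia) (by lia)

lemma card_improperColors_le (j : ZMod 3) (w : V) : #(K.improperColors j w) ≤ 3 := by
  classical
  rcases (K.improperColors j w).eq_empty_or_nonempty with h | ⟨α, hα⟩
  · simp [h]
  obtain ⟨u, hu, rfl⟩ := K.mem_improperColors.1 hα
  obtain ⟨β, hβ⟩ : ∃ β, ∀ u' ∈ K.part j, K.color u' = c s(u, w) → c s(u', w) = β := by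
    by_cases h : ∃ u₀ ∈ K.part j, K.color u₀ = c s(u, w)
    · obtain ⟨u₀, hu₀, hcu₀⟩ := h
      exact ⟨c s(u₀, w), fun u' hu' hcu' ↦
        by rw [K.color_injOn j hu' hu₀ (hcu'.trans hcu₀.symm)]⟩
    · exact ⟨0, fun u' hu' hcu' ↦ absurd ⟨u', hu', hcu'⟩ h⟩
  have hsub : K.improperColors j w ⊆ {c s(u, w), K.color u, β} := by
    intro α' hα'
    obtain ⟨u', hu', rfl⟩ := K.mem_improperColors.1 hα'
    by_cases hc : c s(u, w) = c s(u', w)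
    · simp [hc]
    · rcases K.color_eq_of_improper_of_improper hu hu' hc with h | h
      · simp [h]
      · simp [hβ u' hu'.mem h]
  exact (card_le_card hsub).trans card_le_three

lemma card_outNbhd_sum_ge (w : V) :
    999 * d ≤ 1000 * (∑ j, #(K.outNbhd j w) + 9) := by
  classical
  have := K.finite
  have := Fintype.ofFinite V
  obtain ⟨R, hR, hcover⟩ := K.exists_cover
  have hsub : colorSet G c w ⊆ R.image (fun u ↦ c s(w, u)) ∪
      univ.biUnion fun j ↦ (K.outNbhd j w).image K.color ∪ K.improperColors j w := by
    intro α hα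
    obtain ⟨u, hadj, rfl⟩ := mem_colorSet.1 hα
    by_cases hu : u ∈ R
    · exact mem_union_left _ (mem_image_of_mem _ hu)
    obtain ⟨j, hj⟩ := hcover u hu
    refine mem_union_right _ (mem_biUnion.2 ⟨j, mem_univ _, ?_⟩)
    by_cases hc : c s(w, u) = K.color u
    · rw [hc]
      exact mem_union_left _ (mem_image_of_mem _ (K.mem_outNbhd.2 ⟨hj, hadj, hc⟩))
    · rw [Sym2.eq_swap] at hc ⊢
      exact mem_union_right _ (K.mem_improperColors.2 ⟨u, ⟨hj, hadj.symm, hc⟩, rfl⟩)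
  have hpart : ∀ j ∈ univ, #((K.outNbhd j w).image K.color ∪ K.improperColors j w) ≤
      #(K.outNbhd j w) + 3 := fun j _ ↦ (card_union_le _ _).trans
    (add_le_add card_image_le (K.card_improperColors_le j w))
  have hdeg := (K.le_colorDeg w).trans_eq (colorDeg_eq_card_colorSet G c w)
  have hcard := (card_le_card hsub).trans <| (card_union_le _ _).trans
    (add_le_add card_image_le (card_biUnion_le.trans (sum_le_sum hpart)))
  simp only [sum_add_distrib, sum_const, card_univ, ZMod.card, smul_eq_mul] at hcard
  lia

lemma exists_rich (w : V) : ∃ j, K.Rich j w := by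
  by_contra! h
  have hsum := K.card_outNbhd_sum_ge w
  have hd := K.large
  have hle : ∀ j ∈ univ, 100 * #(K.outNbhd j w) ≤ d := fun j _ ↦ (not_le.1 (h j)).le
  have hsum' := sum_le_sum hle
  rw [← mul_sum] at hsum'
  simp only [sum_const, card_univ, ZMod.card, smul_eq_mul] at hsum'
  lia

lemma full_of_forall_rich (h : ∀ i, K.Rich i w → i = j) : K.Full j w := by
  have hsum := K.card_outNbhd_sum_ge w
  have hd := K.large
  rw [sum_zmod_three _ j] at hsum
  have h₁ : ¬ K.Rich (j + 1) w := fun hr ↦ absurd (h _ hr) (add_ne_left.2 (by decide))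
  have h₂ : ¬ K.Rich (j + 2) w := fun hr ↦ absurd (h _ hr) (add_ne_left.2 (by decide))
  unfold Core.Rich at h₁ h₂
  unfold Core.Full
  lia

end RainbowFreeCore

namespace RainbowFreeCore

variable {G : SimpleGraph V} {c : Sym2 V → ℕ} {d ℓ : ℕ} (K : RainbowFreeCore G c d ℓ)
  {i j : ZMod 3} {u v w : V}

lemma exists_improper (hw : w ∈ K.part i) : ∃ v, K.Improper (i - 1) v w := by
  have hd := K.large
  have hin := K.card_inNbhd_ge hw
  obtain ⟨v, hv, -, hcv⟩ := K.exists_fresh (F := ∅) (C := {K.color w})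
    (K.inNbhd_subset (j := i - 1) (w := w)) (by simp; lia)
  obtain ⟨hvi, hadj, hc⟩ := K.mem_inNbhd.1 hv
  exact ⟨v, hvi, hadj, by grind⟩

lemma rich_unique (h : ∀ k, ∃ i ≠ k, ∃ v, K.Improper i v w) (hi : K.Rich i w)
    (hj : K.Rich j w) : i = j := by
  by_contra hij
  -- If `i ≠ j` then improper edges to `w` can only come from the third of the classes
  -- `i + ℓ + 1` and `j + ℓ + 1`.
  obtain ⟨k, hk, v, hv⟩ := h (-(i + ℓ + 1) - (j + ℓ + 1))
  have hcases : k = i + ℓ + 1 ∨ k = j + ℓ + 1 := by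
    clear * - hij hk
    generalize (ℓ : ZMod 3) = l at *
    revert i j k l
    decide
  rcases hcases with rfl | rfl
  · exact K.not_improper hi hv
  · exact K.not_improper hj hv

lemma exists_class (w : V) : ∃ k : ZMod 3, (∀ i, w ∈ K.part i → k = i) ∧
    ∀ i v, K.Improper i v w → k = i + 1 ∨ K.Full (i + ℓ - 1) w ∧ k = i + ℓ + 1 := by
  by_cases h : ∃ k, ∀ i v, K.Improper i v w → i = k
  · obtain ⟨k, hk⟩ := h
    refine ⟨k + 1, fun i hi ↦ ?_, fun i v hv ↦ .inl (by rw [hk i v hv])⟩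
    obtain ⟨v, hv⟩ := K.exists_improper hi
    rw [← hk _ v hv, sub_add_cancel]
  · have hmany : ∀ k, ∃ i ≠ k, ∃ v, K.Improper i v w := by
      push Not at h
      exact fun k ↦ (h k).imp fun i ⟨v, hv, hik⟩ ↦ ⟨hik, v, hv⟩
    obtain ⟨j, hj⟩ := K.exists_rich w
    have hfull : K.Full j w := K.full_of_forall_rich fun i hi ↦ K.rich_unique hmany hi hj
    refine ⟨j - 1, fun i hi ↦ ?_, fun i v hv ↦ ?_⟩
    · rw [K.rich_unique hmany hj (K.rich_of_mem hi), add_sub_cancel_right]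
    · have hne : i ≠ j + ℓ + 1 := by rintro rfl; exact K.not_improper hj hv
      have hcases : i = j + 1 ∨ i = j + 1 - ℓ := by
        have hmod := K.mod_three
        clear * - hne hmod
        generalize (ℓ : ZMod 3) = l at *
        revert i j l
        decide
      rcases hcases with rfl | rfl
      · exact .inl (by grind)
      · exact .inr ⟨by convert hfull using 1; ring, by grind⟩

/-- The class of a vertex: it extends the index of the part containing it to all vertices in such a
way that improper edges from `part i` to a class other than `i + 1` are severely restricted. -/
noncomputable def cls (w : V) : ZMod 3 := (K.exists_class w).choose

lemma cls_of_mem (hw : w ∈ K.part i) : K.cls w = i := (K.exists_class w).choose_spec.1 i hw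

/-- An improper edge from `v ∈ part i` to a vertex outside the class `i + 1`. -/
structure Defect (i : ZMod 3) (v w : V) : Prop where
  improper : K.Improper i v w
  cls_ne : K.cls w ≠ i + 1

variable {K}

lemma Defect.full (h : K.Defect i v w) : K.Full (i + ℓ - 1) w :=
  (((K.exists_class w).choose_spec.2 i v h.improper).resolve_left h.cls_ne).1

lemma Defect.cls_eq (h : K.Defect i v w) : K.cls w = i + ℓ + 1 :=
  (((K.exists_class w).choose_spec.2 i v h.improper).resolve_left h.cls_ne).2

end RainbowFreeCore

/-! ### Defects -/

section Majority

variable {α β : Type*} {X : Finset α} {t : ℕ}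

lemma exists_card_filter_ne_le [DecidableEq β] {f : α → β} {B : α → Finset α}
    (hX : X.Nonempty) (hB : ∀ x ∈ X, #(B x) ≤ t)
    (hf : ∀ x ∈ X, ∀ y ∈ X, y ∉ B x → x ∉ B y → f x = f y) :
    ∃ b, #{x ∈ X | f x ≠ b} ≤ 2 * t := by
  classical
  have hcount : ∑ y ∈ X, #{x ∈ X | y ∈ B x} = ∑ x ∈ X, #{y ∈ X | y ∈ B x} :=
    sum_card_bipartiteAbove_eq_sum_card_bipartiteBelow fun y x ↦ y ∈ B x
  have hsum : ∑ y ∈ X, #{x ∈ X | y ∈ B x} ≤ ∑ _y ∈ X, t :=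
    hcount.trans_le <| sum_le_sum fun x hx ↦
      (card_le_card fun y hy ↦ (mem_filter.1 hy).2).trans (hB x hx)
  obtain ⟨y, hy, hyt⟩ := exists_le_of_sum_le hX hsum
  refine ⟨f y, (card_le_card fun x hx ↦ ?_).trans <|
    (card_union_le {x ∈ X | y ∈ B x} (B y)).trans (by grind)⟩
  grind

lemma exists_bool_selection {D : Finset β} (hD : D.Nonempty) :
    ∃ s : Bool → β, (∀ i, s i ∈ D) ∧ ∀ b, (∀ i, s i = b) → D = {b} := by
  obtain ⟨a, ha⟩ | ⟨a, ha, b, hb, hab⟩ := hD.exists_eq_singleton_or_nontrivial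
  · exact ⟨fun _ ↦ a, by simp [ha], fun b hb ↦ by rw [ha, show a = b from hb true]⟩
  · refine ⟨fun i ↦ if i then a else b, by grind, fun e he ↦ ?_⟩
    exact absurd ((he true).trans (he false).symm) (by simpa using hab)

lemma exists_card_filter_ne_singleton_le [DecidableEq β] {D : α → Finset β}
    {B : α → β → Finset α} (hX : X.Nonempty) (hD : ∀ x ∈ X, (D x).Nonempty)
    (hB : ∀ x ∈ X, ∀ a ∈ D x, #(B x a) ≤ t)
    (h : ∀ x ∈ X, ∀ y ∈ X, x ≠ y → ∀ a ∈ D x, ∀ b ∈ D y, y ∉ B x a → x ∉ B y b → a = b) :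
    ∃ b, #{x ∈ X | D x ≠ {b}} ≤ 4 * (t + 1) := by
  classical
  obtain ⟨x₀, hx₀⟩ := hX
  obtain ⟨s₀, -⟩ := exists_bool_selection (hD x₀ hx₀)
  have : Nonempty (Bool → β) := ⟨s₀⟩
  choose! s hsD hs using fun x hx ↦ exists_bool_selection (hD x hx)
  have hcard : ∀ p ∈ X ×ˢ univ, #(insert p.1 (B p.1 (s p.1 p.2)) ×ˢ (univ : Finset Bool)) ≤
      (t + 1) * 2 := fun p hp ↦ by
    have hp₁ := (mem_product.1 hp).1
    rw [card_product]
    exact Nat.mul_le_mul ((card_insert_le _ _).trans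
      (Nat.succ_le_succ (hB _ hp₁ _ (hsD _ hp₁ _)))) le_rfl
  have heq : ∀ p ∈ X ×ˢ univ, ∀ q ∈ X ×ˢ univ, q ∉ insert p.1 (B p.1 (s p.1 p.2)) ×ˢ univ →
      p ∉ insert q.1 (B q.1 (s q.1 q.2)) ×ˢ univ → s p.1 p.2 = s q.1 q.2 := fun p hp q hq ↦ by
    have := h p.1 (mem_product.1 hp).1 q.1 (mem_product.1 hq).1
    grind
  obtain ⟨b, hb⟩ := exists_card_filter_ne_le (Nonempty.product ⟨x₀, hx₀⟩ univ_nonempty) hcard heq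
  refine ⟨b, (card_le_card fun x hx ↦ ?_).trans <|
    (card_image_le (f := Prod.fst)).trans (hb.trans (by lia))⟩
  simp only [mem_image, mem_filter, mem_product, Prod.exists]
  have := hs x
  grind

end Majority

namespace Core

variable {G : SimpleGraph V} {c : Sym2 V → ℕ} {d ℓ k : ℕ} (K : Core G c d) {i j j' : ZMod 3}
  {v w v' w' : V}

lemma hasRainbowCycle_of_two_edges (hd : 1000 * (10 * ℓ + 10) ≤ d) (hw : K.Rich j w)
    (hw' : K.Rich j' w') (hv : v ∈ K.part i) (hv' : v' ∈ K.part (j + k))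
    (hmod : i + k + 4 = j' + ℓ) (hk : 1 ≤ k) (hkl : k + 5 ≤ ℓ) (hadj : G.Adj v w)
    (hadj' : G.Adj v' w') (hvert : [v, w, v', w'].Nodup)
    (hcol : [c s(v, w), c s(v', w'), K.color v, K.color v'].Nodup) : HasRainbowCycle G c ℓ := by
  classical
  simp only [List.nodup_cons, List.mem_cons, List.not_mem_nil, or_false, not_or] at hvert hcol
  have hFcard := card_le_two (a := v) (b := w')
  have hCcard := card_le_three (a := c s(v, w)) (b := c s(v', w')) (c := K.color v)
  obtain ⟨S, D, hpath, hS, hD⟩ := K.exists_rainbowPath (F := {v, w'})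
    (C := {c s(v, w), c s(v', w'), K.color v}) (by lia) hw hv' hvert.2.1.1 (by grind) (by lia)
  simp only [disjoint_insert_right, disjoint_singleton_right] at hD
  have hlong := (hpath.cons hadj (by grind) hD.1).append (RainbowPath.single hadj') (by grind)
    (by simp only [disjoint_singleton_right, mem_insert, not_or]; grind)
  exact K.hasRainbowCycle hd hlong hw' hv (by push_cast; linear_combination hmod) (by grind)
    (by grind) (by lia) (by lia)

lemma Full.card_sdiff_le [DecidableEq V] {K : Core G c d} (h : K.Full j w) :
    1000 * #(K.part j \ K.outNbhd j w) ≤ 31 * d := by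
  have hpart := K.card_part_le j
  have hsdiff := card_sdiff_add_card_eq_card (K.outNbhd_subset (j := j) (w := w))
  unfold Full at h
  lia

end Core

namespace RainbowFreeCore

variable {G : SimpleGraph V} {c : Sym2 V → ℕ} {d ℓ : ℕ} (K : RainbowFreeCore G c d ℓ)
  {i j : ZMod 3} {u v w v' w' : V}

lemma eight_le (K : RainbowFreeCore G c d ℓ) (hmod : (ℓ : ZMod 3) = 2) : 8 ≤ ℓ := by
  have hl := K.four_le
  obtain ⟨m, rfl⟩ := K.even
  by_contra! hlt
  obtain rfl | rfl : m = 2 ∨ m = 3 := by lia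
  all_goals exact absurd hmod (by decide)

open scoped Classical in
/-- The vertices of `part i` that cannot be combined with the defect edge `s(v, w)` to force a
second defect edge to have the same color. -/
noncomputable def conflictSet (i : ZMod 3) (v w : V) : Finset V :=
  {u ∈ K.part i | K.color u = c s(v, w) ∨ u = w ∨ ((ℓ : ZMod 3) = 1 ∧ u ∉ K.outNbhd i w)}

lemma mem_conflictSet : u ∈ K.conflictSet i v w ↔ u ∈ K.part i ∧
    (K.color u = c s(v, w) ∨ u = w ∨ ((ℓ : ZMod 3) = 1 ∧ u ∉ K.outNbhd i w)) := by
  simp [conflictSet]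

variable {K}

lemma Defect.color_eq_of_mod_eq_one (h : K.Defect i v w) (h' : K.Defect i v' w') (hvv' : v ≠ v')
    (hc : K.color v' ≠ c s(v, w)) (hc' : K.color v ≠ c s(v', w')) (hmod : (ℓ : ZMod 3) = 1)
    (hout : v' ∈ K.outNbhd i w) (hout' : v ∈ K.outNbhd i w') : c s(v, w) = c s(v', w') := by
  classical
  by_contra hne
  have hl := K.four_le
  have hcol := (K.color_injOn i).ne h.improper.mem h'.improper.mem hvv'
  obtain ⟨-, hadj, hcout⟩ := K.mem_outNbhd.1 hout
  obtain ⟨-, hadj', -⟩ := K.mem_outNbhd.1 hout'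
  have himp := h.improper.color_ne
  have himp' := h'.improper.color_ne
  have hww' : w ≠ w' := by rintro rfl; exact himp' (by rw [Sym2.eq_swap, hcout])
  have hpath := RainbowPath.triple h.improper.adj hadj h'.improper.adj hvv' hadj'.ne' hww'
    (by grind) hne (by grind)
  exact K.not_hasRainbowCycle <| K.hasRainbowCycle K.large hpath h'.full.rich h.improper.mem
    (by grind) hadj'.ne (by grind) (by lia) fun _ ↦ by rwa [hmod, add_sub_cancel_right]

lemma Defect.color_eq_of_mod_eq_two (h : K.Defect i v w) (h' : K.Defect i v' w') (hvv' : v ≠ v')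
    (hc : K.color v' ≠ c s(v, w)) (hc' : K.color v ≠ c s(v', w')) (hmod : (ℓ : ZMod 3) = 2)
    (hvw' : v ≠ w') (hwv' : w ≠ v') : c s(v, w) = c s(v', w') := by
  classical
  by_contra hne
  have hl := K.eight_le hmod
  have himp := h.improper.color_ne
  have himp' := h'.improper.color_ne
  have hadj := h.improper.adj
  have hadj' := h'.improper.adj
  apply K.not_hasRainbowCycle
  by_cases hww' : w = w'
  · subst hww'
    have hpath := RainbowPath.pair (c := c) hadj' hadj.symm hvv'.symm (by grind [Sym2.eq_swap])
    exact K.hasRainbowCycle K.large hpath (K.rich_of_mem h.improper.mem) h'.improper.mem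
      (by grind) hvv' (by grind [Sym2.eq_swap]) (by lia) (by lia)
  · have hcol := (K.color_injOn i).ne h.improper.mem h'.improper.mem hvv'
    refine K.hasRainbowCycle_of_two_edges K.large (k := 2) h.full.rich h'.full.rich h.improper.mem
      ?_ (by grind) (by lia) (by lia) hadj hadj' (by grind [hadj.ne, hadj'.ne]) (by grind)
    convert h'.improper.mem using 2
    grind

lemma Defect.color_eq (h : K.Defect i v w) (h' : K.Defect i v' w') (hvv' : v ≠ v')
    (hv' : v' ∉ K.conflictSet i v w) (hv : v ∉ K.conflictSet i v' w') :
    c s(v, w) = c s(v', w') := by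
  simp only [mem_conflictSet, h.improper.mem, h'.improper.mem, true_and, not_or, not_and,
    not_not] at hv hv'
  rcases K.mod_three with hmod | hmod
  · exact h.color_eq_of_mod_eq_one h' hvv' hv'.1 hv.1 hmod (hv'.2.2 hmod) (hv.2.2 hmod)
  · exact h.color_eq_of_mod_eq_two h' hvv' hv'.1 hv.1 hmod hv.2.1 (Ne.symm hv'.2.1)

lemma Defect.card_conflictSet_le (h : K.Defect i v w) : 1000 * #(K.conflictSet i v w) ≤ 32 * d := by
  classical
  have hd := K.large
  have hcolor : #{u ∈ K.part i | K.color u = c s(v, w)} ≤ 1 := card_le_one.2 fun u hu u' hu' ↦ by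
    rw [mem_filter] at hu hu'
    exact K.color_injOn i hu.1 hu'.1 (hu.2.trans hu'.2.symm)
  have hfull : 1000 * #{u ∈ K.part i | (ℓ : ZMod 3) = 1 ∧ u ∉ K.outNbhd i w} ≤ 31 * d := by
    by_cases hmod : (ℓ : ZMod 3) = 1
    · have := h.full
      rw [hmod, add_sub_cancel_right] at this
      refine le_trans (Nat.mul_le_mul_left _ (card_le_card ?_)) this.card_sdiff_le
      grind
    · simp [hmod]
  have hsub : K.conflictSet i v w ⊆ ({u ∈ K.part i | K.color u = c s(v, w)} ∪ {w}) ∪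
      {u ∈ K.part i | (ℓ : ZMod 3) = 1 ∧ u ∉ K.outNbhd i w} := fun u hu ↦ by
    rw [mem_conflictSet] at hu
    grind
  have hcard := (card_le_card hsub).trans <| (card_union_le _ _).trans
    (add_le_add_left (card_union_le _ _) _)
  rw [card_singleton] at hcard
  lia

end RainbowFreeCore

lemma exists_saturated {active : ZMod 3 → Prop} {x : ZMod 3 → ℕ} {d : ℕ}
    (hsum : ∑ i, x i + 5 ≤ 3 * d) (hactive : ∀ i, active i → d ≤ x i + 2)
    (hinactive : ∀ i, ¬ active i → d ≤ x i + 1) :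
    ∃ a, active a ∧ active (a + 1) ∧ x a + 2 ≤ d ∧ (active (a + 2) → x (a + 2) + 2 ≤ d) ∧
      (¬ active (a + 2) → x (a + 2) + 1 ≤ d) := by
  rw [sum_zmod_three x 0] at hsum
  have hindex : (0 : ZMod 3) + 1 = 1 ∧ (0 : ZMod 3) + 2 = 2 ∧ (1 : ZMod 3) + 1 = 2 ∧
      (1 : ZMod 3) + 2 = 0 ∧ (2 : ZMod 3) + 1 = 0 ∧ (2 : ZMod 3) + 2 = 1 := by decide
  by_contra! h
  have h₀ := h 0
  have h₁ := h 1
  have h₂ := h 2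
  have ha₀ := hactive 0
  have ha₁ := hactive 1
  have ha₂ := hactive 2
  have hi₀ := hinactive 0
  have hi₁ := hinactive 1
  have hi₂ := hinactive 2
  clear h hactive hinactive
  simp only [hindex] at *
  by_cases active 0 <;> by_cases active 1 <;> by_cases active 2 <;> grind

namespace Core

variable {G : SimpleGraph V} {c : Sym2 V → ℕ} {d : ℕ} (K : Core G c d)

lemma le_card_part (i : ZMod 3) : 999 * d ≤ 1000 * #(K.part i) := by
  obtain ⟨v, hv⟩ := K.nonempty (i - 1)
  have hout := K.card_outNbhd_ge hv
  rw [sub_add_cancel] at hout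
  exact hout.trans (Nat.mul_le_mul_left _ (card_le_card K.outNbhd_subset))

end Core

namespace RainbowFreeCore

variable [Fintype V] {G : SimpleGraph V} {c : Sym2 V → ℕ} {d ℓ : ℕ} (K : RainbowFreeCore G c d ℓ)
  {i a : ZMod 3} {b b' : ℕ} {v w y z : V}

open scoped Classical in
/-- The colors, other than `color v`, that `v ∈ part i` does not see on edges to the class `i + 1`;
edges of such a color are defects. -/
noncomputable def defectColors (i : ZMod 3) (v : V) : Finset ℕ :=
  {α ∈ colorSet G c v | α ≠ K.color v ∧ ∀ w, G.Adj v w → c s(v, w) = α → K.cls w ≠ i + 1}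

lemma mem_defectColors {α : ℕ} : α ∈ K.defectColors i v ↔ α ∈ colorSet G c v ∧ α ≠ K.color v ∧
    ∀ w, G.Adj v w → c s(v, w) = α → K.cls w ≠ i + 1 := by
  simp [defectColors]

lemma exists_defect {α : ℕ} (hv : v ∈ K.part i) (hα : α ∈ K.defectColors i v) :
    ∃ w, K.Defect i v w ∧ c s(v, w) = α := by
  obtain ⟨hmem, hne, hcls⟩ := K.mem_defectColors.1 hα
  obtain ⟨w, hadj, rfl⟩ := mem_colorSet.1 hmem
  exact ⟨w, ⟨⟨hv, hadj, hne⟩, hcls w hadj rfl⟩, rfl⟩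

/-- Almost all vertices of `part i` have `b` as their only defect color. -/
def Majority (i : ZMod 3) (b : ℕ) : Prop :=
  1000 * #{v ∈ K.part i | K.defectColors i v ≠ {b}} ≤ 130 * d

lemma exists_majority (h : ∀ v ∈ K.part i, (K.defectColors i v).Nonempty) :
    ∃ b, K.Majority i b := by
  have hd := K.large
  choose! f hf hfc using fun v (hv : v ∈ K.part i) α (hα : α ∈ K.defectColors i v) ↦
    K.exists_defect hv hα
  obtain ⟨b, hb⟩ := exists_card_filter_ne_singleton_le (t := 32 * d / 1000)
    (B := fun v α ↦ K.conflictSet i v (f v α)) (K.nonempty i) h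
    (fun v hv α hα ↦ by have := (hf v hv α hα).card_conflictSet_le; lia)
    fun v hv v' hv' hne α hα α' hα' hvα hvα' ↦ by
      rw [← hfc v hv α hα, ← hfc v' hv' α' hα']
      exact (hf v hv α hα).color_eq (hf v' hv' α' hα') hne hvα hvα'
  exact ⟨b, by unfold Majority; lia⟩

variable {K} in
lemma Majority.exists_mem (h : K.Majority i b) {T : Finset V} {C : Finset ℕ} (hT : T ⊆ K.part i)
    (hTcard : 500 * d ≤ 1000 * #T) (hC : #C ≤ 3) :
    ∃ v ∈ T, K.defectColors i v = {b} ∧ K.color v ∉ C := by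
  have hd := K.large
  unfold Majority at h
  obtain ⟨v, hv, hvF, hvC⟩ := K.exists_fresh
    (F := {v ∈ K.part i | K.defectColors i v ≠ {b}}) (C := C) hT (by lia)
  exact ⟨v, hv, by simpa [hT hv] using hvF, hvC⟩

variable {K} in
lemma Majority.exists_mem_part (h : K.Majority i b) {C : Finset ℕ} (hC : #C ≤ 3) :
    ∃ v ∈ K.part i, K.defectColors i v = {b} ∧ K.color v ∉ C :=
  h.exists_mem subset_rfl (by have := K.le_card_part i; lia) hC

/-- The set of vertices of class `i`. -/
noncomputable def classSet (i : ZMod 3) : Finset V := {w | K.cls w = i}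

lemma mem_classSet : w ∈ K.classSet i ↔ K.cls w = i := by simp [classSet]

lemma sum_card_classSet : ∑ i, #(K.classSet i) = Fintype.card V :=
  (card_eq_sum_card_fiberwise fun w _ ↦ mem_coe.2 (mem_univ (K.cls w))).symm

/-- `z ∈ part i` is joined to the entire class `i + 1` by improper edges of distinct colors. -/
structure Tight (i : ZMod 3) (z : V) : Prop where
  improper : ∀ {w}, K.cls w = i + 1 → K.Improper i z w
  injOn : Set.InjOn (fun w ↦ c s(z, w)) {w | K.cls w = i + 1}

open scoped Classical in
lemma le_card_image_improper (hz : z ∈ K.part i) :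
    d ≤ #(({w ∈ K.classSet (i + 1) | K.Improper i z w}).image fun w ↦ c s(z, w)) +
      #(K.defectColors i z) + 1 := by
  have hsub : colorSet G c z ⊆ insert (K.color z)
      (({w ∈ K.classSet (i + 1) | K.Improper i z w}).image (fun w ↦ c s(z, w)) ∪
        K.defectColors i z) := fun α hα ↦ by
    by_cases hαz : α = K.color z
    · simp [hαz]
    by_cases hdef : α ∈ K.defectColors i z
    · simp [hdef]
    have hcls : ∃ w, G.Adj z w ∧ c s(z, w) = α ∧ K.cls w = i + 1 := by
      by_contra! hcls
      exact hdef (K.mem_defectColors.2 ⟨hα, hαz, hcls⟩)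
    obtain ⟨w, hadj, rfl, hw⟩ := hcls
    refine mem_insert_of_mem (mem_union_left _ (mem_image_of_mem _ (mem_filter.2 ?_)))
    exact ⟨K.mem_classSet.2 hw, hz, hadj, hαz⟩
  calc d ≤ #(colorSet G c z) := (K.le_colorDeg z).trans_eq (colorDeg_eq_card_colorSet G c z)
    _ ≤ _ := (card_le_card hsub).trans ((card_insert_le _ _).trans
      (Nat.succ_le_succ (card_union_le _ _)))

lemma le_card_classSet (hz : z ∈ K.part i) :
    d ≤ #(K.classSet (i + 1)) + #(K.defectColors i z) + 1 := by
  classical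
  refine (K.le_card_image_improper hz).trans ?_
  gcongr
  exact card_image_le.trans (card_filter_le _ _)

lemma tight_of_card_le (hz : z ∈ K.part i)
    (h : #(K.classSet (i + 1)) + #(K.defectColors i z) + 1 ≤ d) : K.Tight i z := by
  classical
  have himage := K.le_card_image_improper hz
  have hle := card_image_le (s := {w ∈ K.classSet (i + 1) | K.Improper i z w})
    (f := fun w ↦ c s(z, w))
  have hfilter := card_filter_le (K.classSet (i + 1)) (fun w ↦ K.Improper i z w)
  have hinj := card_image_iff.1 (hle.antisymm (by lia))
  have hall := card_filter_eq_iff.1 (hfilter.antisymm (by lia))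
  exact ⟨fun hw ↦ hall _ (K.mem_classSet.2 hw), hinj.mono fun w hw ↦
    mem_coe.2 (mem_filter.2 ⟨K.mem_classSet.2 hw, hall w (K.mem_classSet.2 hw)⟩)⟩

end RainbowFreeCore

namespace RainbowFreeCore

variable {G : SimpleGraph V} {c : Sym2 V → ℕ} {d ℓ : ℕ} {K : RainbowFreeCore G c d ℓ}
  {a : ZMod 3} {b b' : ℕ} {w y z : V}

lemma Tight.color_eq_of_defect (hmod : (ℓ : ZMod 3) = 1) (hz : z ∈ K.part (a + 2))
    (ht : K.Tight (a + 2) z) (hw : K.Defect (a + 1) y w) :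
    c s(z, w) = c s(y, w) ∨ c s(z, w) = K.color y := by
  classical
  by_contra! ⟨hcw, hcy⟩
  have hl := K.four_le
  have hyz : y ≠ z := by
    rintro rfl
    exact absurd (K.eq_of_mem hw.improper.mem hz) (add_ne_add_right a |>.2 (by decide))
  have hzw := (ht.improper (w := w) (by rw [hw.cls_eq]; grind)).adj
  have hpath := RainbowPath.pair (c := c) hw.improper.adj hzw.symm hyz (by grind [Sym2.eq_swap])
  exact K.not_hasRainbowCycle <| K.hasRainbowCycle K.large hpath (K.rich_of_mem hz)
    hw.improper.mem (by grind) hyz.symm (by grind [Sym2.eq_swap, hw.improper.color_ne]) (by lia)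
    (by lia)

lemma Tight.card_filter_color_eq_le {Y : Finset V} {f : V → V} (hmod : (ℓ : ZMod 3) = 1)
    (ht : K.Tight (a + 2) z) (hf : ∀ y ∈ Y, K.Defect (a + 1) y (f y)) :
    1000 * #{y ∈ Y | c s(z, f y) = b} ≤ 31 * d := by
  classical
  rcases eq_empty_or_nonempty {y ∈ Y | c s(z, f y) = b} with hempty | ⟨y₀, hy₀⟩
  · simp [hempty]
  obtain ⟨hy₀, hcy₀⟩ := mem_filter.1 hy₀
  have hcls : ∀ y ∈ Y, K.cls (f y) = a + 2 + 1 := fun y hy ↦ by rw [(hf y hy).cls_eq]; grind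
  have hfull := (hf y₀ hy₀).full
  rw [hmod, add_sub_cancel_right] at hfull
  refine (Nat.mul_le_mul_left _ (card_le_card fun y hy ↦ ?_)).trans hfull.card_sdiff_le
  obtain ⟨hy, hcy⟩ := mem_filter.1 hy
  have hfy : f y = f y₀ := ht.injOn (hcls y hy) (hcls y₀ hy₀) (hcy.trans hcy₀.symm)
  refine Finset.mem_sdiff.2 ⟨(hf y hy).improper.mem, fun hout ↦ (hf y hy).improper.color_ne ?_⟩
  rw [Sym2.eq_swap, hfy]
  exact (K.mem_outNbhd.1 hout).2.2

variable [Fintype V]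

lemma Majority.color_eq (hmod : (ℓ : ZMod 3) = 2) (h : K.Majority a b)
    (h' : K.Majority (a + 1) b') : b = b' := by
  by_contra hne
  obtain ⟨v, hv, hvD, hvb'⟩ := h.exists_mem_part (C := {b'}) (by simp)
  obtain ⟨v', hv', hvD', hvC'⟩ := h'.exists_mem_part (C := {b, K.color v})
    (card_le_two.trans (by lia))
  obtain ⟨w, hw, rfl⟩ := K.exists_defect hv (hvD ▸ mem_singleton_self b)
  obtain ⟨w', hw', rfl⟩ := K.exists_defect hv' (hvD' ▸ mem_singleton_self b')
  simp only [mem_insert, mem_singleton, not_or] at hvb' hvC'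
  have hcls : K.cls v ≠ K.cls v' ∧ K.cls v ≠ K.cls w' ∧ K.cls w ≠ K.cls v' ∧
      K.cls w ≠ K.cls w' := by
    rw [K.cls_of_mem hv, K.cls_of_mem hv', hw.cls_eq, hw'.cls_eq, hmod]
    clear * -
    revert a
    decide
  have hvert : [v, w, v', w'].Nodup := by
    have := hw.improper.adj.ne
    have := hw'.improper.adj.ne
    grind
  have hcol : [c s(v, w), c s(v', w'), K.color v, K.color v'].Nodup := by
    have := hw.improper.color_ne
    have := hw'.improper.color_ne
    grind
  exact K.not_hasRainbowCycle <| K.hasRainbowCycle_of_two_edges K.large (k := 3) hw.full.rich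
    hw'.full.rich hv (by convert hv' using 2; grind) (by push_cast; grind) (by lia)
    (K.eight_le hmod) hw.improper.adj hw'.improper.adj hvert hcol

lemma Tight.false_of_majority (hmod : (ℓ : ZMod 3) = 2) (hz : z ∈ K.part a) (ht : K.Tight a z)
    (hD : K.defectColors a z = {b}) (hb : K.Majority (a + 1) b) : False := by
  classical
  have hd := K.large
  obtain ⟨y, hy, hyD, hyz⟩ := hb.exists_mem (K.outNbhd_subset (j := a + 1) (w := z))
    (C := {K.color z}) (by have := K.card_outNbhd_ge hz; lia) (by simp)
  obtain ⟨hya, hzy, hcy⟩ := K.mem_outNbhd.1 hy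
  obtain ⟨w, hw, rfl⟩ := K.exists_defect hya (hyD ▸ mem_singleton_self b)
  have hwcls : K.cls w = a + 1 := by rw [hw.cls_eq, hmod]; grind
  obtain ⟨-, hzw, hcw⟩ := ht.improper hwcls
  obtain ⟨-, hcz, hcls⟩ := K.mem_defectColors.1 (hD ▸ mem_singleton_self (c s(y, w)))
  have hcwy : c s(z, w) ≠ K.color y := fun heq ↦
    hw.improper.adj.ne (ht.injOn (K.cls_of_mem hya) hwcls (hcy.trans heq.symm))
  have hcwb : c s(z, w) ≠ c s(y, w) := fun heq ↦ hcls w hzw heq hwcls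
  obtain ⟨s, hs, hsF, -⟩ := K.exists_fresh (F := {y, w}) (C := ∅)
    (K.inNbhd_subset (j := a - 1) (w := z))
    (by have := K.card_inNbhd_ge hz; have := card_le_two (a := y) (b := w); simp; lia)
  obtain ⟨hsa, hsz, hcs⟩ := K.mem_inNbhd.1 hs
  rw [Sym2.eq_swap] at hcs
  simp only [mem_insert, mem_singleton, not_or] at hsF hyz
  have hpath := RainbowPath.triple (c := c) hw.improper.adj hzw.symm hsz.symm hzy.ne'
    (Ne.symm hsF.1) (Ne.symm hsF.2) (by grind [Sym2.eq_swap]) (by grind)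
    (by grind [Sym2.eq_swap])
  have hl := K.eight_le hmod
  exact K.not_hasRainbowCycle <| K.hasRainbowCycle hd hpath (K.rich_of_mem hsa) hya (by grind)
    hsF.1 (by grind [Sym2.eq_swap, hw.improper.color_ne]) (by lia) (by lia)

lemma Tight.exists_defect_to_majority (hmod : (ℓ : ZMod 3) = 1) (hz : z ∈ K.part (a + 2))
    (ht : K.Tight (a + 2) z) (hb : K.Majority a b) (hb' : K.Majority (a + 1) b') :
    ∃ y w, K.Defect (a + 1) y w ∧ c s(y, w) = b' ∧ K.color y ≠ b ∧ w ∈ K.part a ∧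
      K.defectColors a w = {b} := by
  classical
  have hd := K.large
  set Y := {v ∈ K.part (a + 1) | K.defectColors (a + 1) v = {b'}} with hY
  have hdef : ∀ y ∈ Y, ∃ w, K.Defect (a + 1) y w ∧ c s(y, w) = b' := fun y hy ↦ by
    obtain ⟨hy, hyD⟩ := mem_filter.1 hy
    exact K.exists_defect hy (hyD ▸ mem_singleton_self b')
  choose! f hf hfc using hdef
  obtain ⟨R, hR, hcover⟩ := K.exists_cover
  set bad := R ∪ {v ∈ K.part a | K.defectColors a v ≠ {b}} with hbad
  have hbadCard : #bad ≤ #R + #{v ∈ K.part a | K.defectColors a v ≠ {b}} := card_union_le _ _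
  have hsame : 1000 * #{y ∈ Y | c s(z, f y) = b'} ≤ 31 * d :=
    ht.card_filter_color_eq_le hmod hf
  have hcolor : ∀ y ∈ Y, c s(z, f y) ≠ b' → c s(z, f y) = K.color y := fun y hy hne ↦
    (ht.color_eq_of_defect hmod hz (hf y hy)).resolve_left (by rwa [hfc y hy])
  have hsplit : #{y ∈ Y | c s(z, f y) = b'} + #{y ∈ Y | c s(z, f y) ≠ b'} = #Y :=
    card_filter_add_card_filter_not _
  have hbadImage : #{y ∈ {y ∈ Y | c s(z, f y) ≠ b'} | f y ∈ bad} ≤ #bad := by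
    refine card_le_card_of_injOn f (fun y hy ↦ (mem_filter.1 hy).2) fun y hy y' hy' hff ↦ ?_
    simp only [coe_filter, mem_filter, Set.mem_ofPred_eq] at hy hy'
    refine K.color_injOn _ (hf y hy.1.1).improper.mem (hf y' hy'.1.1).improper.mem ?_
    rw [← hcolor y hy.1.1 hy.1.2, ← hcolor y' hy'.1.1 hy'.1.2, hff]
  have hYcard : #Y + #{v ∈ K.part (a + 1) | K.defectColors (a + 1) v ≠ {b'}} =
      #(K.part (a + 1)) := card_filter_add_card_filter_not _
  have hpart := K.le_card_part (a + 1)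
  unfold Majority at hb hb'
  obtain ⟨y, hy, hyF, hyb⟩ := K.exists_fresh (i := a + 1) (T := {y ∈ Y | c s(z, f y) ≠ b'})
    (F := {y ∈ {y ∈ Y | c s(z, f y) ≠ b'} | f y ∈ bad}) (C := {b})
    ((filter_subset _ _).trans (filter_subset _ _)) (by rw [card_singleton]; lia)
  obtain ⟨hyY, -⟩ := mem_filter.1 hy
  have hfy : f y ∉ bad := fun h ↦ hyF (mem_filter.2 ⟨hy, h⟩)
  obtain ⟨i, hi⟩ := hcover (f y) (by grind)
  obtain rfl : i = a := by rw [← K.cls_of_mem hi, (hf y hyY).cls_eq, hmod]; grind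
  exact ⟨y, f y, hf y hyY, hfc y hyY, by simpa using hyb, hi, by grind⟩

lemma Tight.false_of_majority_of_majority (hmod : (ℓ : ZMod 3) = 1) (hz : z ∈ K.part (a + 2))
    (ht : K.Tight (a + 2) z) (hb : K.Majority a b) (hb' : K.Majority (a + 1) b') : False := by
  classical
  have hl := K.four_le
  obtain ⟨y, w, hw, rfl, hyb, hwa, hwD⟩ := ht.exists_defect_to_majority hmod hz hb hb'
  have hbD : b ∈ K.defectColors a w := hwD ▸ mem_singleton_self b
  have hycls := K.cls_of_mem hw.improper.mem
  have hne : c s(y, w) ≠ b := fun heq ↦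
    (K.mem_defectColors.1 hbD).2.2 y hw.improper.adj.symm (by rwa [Sym2.eq_swap]) hycls
  obtain ⟨x, hx, rfl⟩ := K.exists_defect hwa hbD
  have hyx : y ≠ x := by
    rintro rfl
    exact hx.cls_ne hycls
  have hpath := RainbowPath.pair hw.improper.adj hx.improper.adj hyx hne
  exact K.not_hasRainbowCycle <| K.hasRainbowCycle K.large hpath hx.full.rich hw.improper.mem
    (by grind) hyx.symm (by grind [hw.improper.color_ne]) (by lia) (by lia)

theorem three_mul_lt (K : RainbowFreeCore G c d ℓ) : 3 * d < Fintype.card V + 5 := by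
  by_contra! hcard
  set active : ZMod 3 → Prop := fun i ↦ ∀ v ∈ K.part i, (K.defectColors i v).Nonempty
  have hinactive : ∀ i, ¬ active i → ∃ z ∈ K.part i, #(K.defectColors i z) = 0 := fun i hi ↦ by
    simpa [active] using hi
  have hactive : ∀ i, active i → ∃ b z, K.Majority i b ∧ z ∈ K.part i ∧
      K.defectColors i z = {b} := fun i hi ↦ by
    obtain ⟨b, hb⟩ := K.exists_majority hi
    obtain ⟨z, hz, hzD, -⟩ := hb.exists_mem_part (C := ∅) (by simp)
    exact ⟨b, z, hb, hz, hzD⟩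
  have hsum : ∑ i, #(K.classSet (i + 1)) + 5 ≤ 3 * d := by
    have hshift := Equiv.sum_comp (Equiv.addRight 1) fun i ↦ #(K.classSet i)
    simp only [Equiv.coe_addRight] at hshift
    rwa [hshift, K.sum_card_classSet]
  obtain ⟨a, ha, ha₁, hsize, hsize₂, hsize₂'⟩ := exists_saturated hsum (active := active)
    (fun i hi ↦ by
      obtain ⟨b, z, -, hz, hzD⟩ := hactive i hi
      simpa [hzD] using K.le_card_classSet hz)
    (fun i hi ↦ by
      obtain ⟨z, hz, hzD⟩ := hinactive i hi
      simpa [hzD] using K.le_card_classSet hz)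
  obtain ⟨b, z, hb, hz, hzD⟩ := hactive a ha
  obtain ⟨b', -, hb', -⟩ := hactive (a + 1) ha₁
  rcases K.mod_three with hmod | hmod
  · obtain ⟨z, hz, ht⟩ : ∃ z ∈ K.part (a + 2), K.Tight (a + 2) z := by
      by_cases ha₂ : active (a + 2)
      · obtain ⟨b₂, z, -, hz, hzD⟩ := hactive _ ha₂
        exact ⟨z, hz, K.tight_of_card_le hz (by rw [hzD]; exact hsize₂ ha₂)⟩
      · obtain ⟨z, hz, hzD⟩ := hinactive _ ha₂
        exact ⟨z, hz, K.tight_of_card_le hz (by simpa [hzD] using hsize₂' ha₂)⟩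
    exact ht.false_of_majority_of_majority hmod hz hb hb'
  · obtain rfl := hb.color_eq hmod hb'
    exact (K.tight_of_card_le hz (by rw [hzD]; exact hsize)).false_of_majority hmod hz hzD hb'

end RainbowFreeCore

/-! ### Closed walks without rainbow cycles -/

section Tuples

variable {ι : Type*} [Fintype ι] [Fintype V]

lemma card_le_pow_of_determined {T : Finset (ι → V)} (a : ι)
    (h : ∀ x ∈ T, ∀ y ∈ T, (∀ i, i ≠ a → x i = y i) → x = y) :
    #T ≤ Fintype.card V ^ (Fintype.card ι - 1) := by
  classical
  calc #T ≤ #(univ : Finset ({i // i ≠ a} → V)) :=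
        card_le_card_of_injOn (fun x i ↦ x i) (fun _ _ ↦ mem_coe.2 (mem_univ _))
          fun x hx y hy hxy ↦ h x hx y hy fun i hi ↦ congrFun hxy ⟨i, hi⟩
    _ = Fintype.card V ^ (Fintype.card ι - 1) := by
        rw [card_univ, Fintype.card_fun, Fintype.card_subtype_compl, Fintype.card_subtype_eq]

lemma card_filter_pair_mem_le [DecidableEq V] [DecidableEq ι] (M : Finset (V × V)) {a b : ι}
    (hab : a ≠ b) :
    #{x : ι → V | (x a, x b) ∈ M} ≤ #M * Fintype.card V ^ (Fintype.card ι - 2) := by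
  classical
  calc #{x : ι → V | (x a, x b) ∈ M}
      ≤ #(M ×ˢ (univ : Finset ({i // ¬ (i = a ∨ i = b)} → V))) := by
        refine card_le_card_of_injOn (fun x ↦ ((x a, x b), fun i ↦ x i)) (by intro; simp) ?_
        intro x _ y _ hxy
        obtain ⟨⟨hxa, hxb⟩, hrest⟩ := by simpa only [Prod.mk.injEq] using hxy
        funext i
        by_cases hi : i = a ∨ i = b
        · rcases hi with rfl | rfl <;> assumption
        · exact congrFun hrest ⟨i, hi⟩
    _ = #M * Fintype.card V ^ (Fintype.card ι - 2) := by
        have hpair : ({i | i = a ∨ i = b} : Finset ι) = {a, b} := by ext; simp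
        rw [card_product, card_univ, Fintype.card_fun, Fintype.card_subtype_compl,
          Fintype.card_subtype, hpair, card_pair hab]

end Tuples

lemma fin_ne_add_one {k : ℕ} (hk : 2 ≤ k) (j : Fin (k + 1)) : j ≠ j + 1 := by
  have : NeZero k := ⟨by lia⟩
  simp

lemma fin_ne_add_two {k : ℕ} (hk : 2 ≤ k) (j : Fin (k + 1)) : j ≠ j + 1 + 1 := by
  intro h
  have h2 : (1 : Fin (k + 1)) + 1 = 0 := by simpa [add_assoc] using h
  rw [Fin.ext_iff, Fin.val_add, Fin.val_one', Fin.val_zero,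
    Nat.mod_eq_of_lt (by lia : 1 < k + 1), Nat.mod_eq_of_lt (by lia)] at h2
  lia

open Fin.CommRing in
lemma hasRainbowCycle_of_tuple {G : SimpleGraph V} {c : Sym2 V → ℕ} {k : ℕ} {x : Fin (k + 1) → V}
    (hx : x.Injective) (hadj : ∀ j, G.Adj (x j) (x (j + 1)))
    (hc : Function.Injective fun j ↦ c s(x j, x (j + 1))) : HasRainbowCycle G c (k + 1) := by
  classical
  have hcast {i j : ℕ} (hi : i ≤ k) (hj : j ≤ k) (h : (i : Fin (k + 1)) = j) : i = j := by
    have := congrArg Fin.val h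
    rwa [Fin.val_natCast, Fin.val_natCast, Nat.mod_eq_of_lt (by lia), Nat.mod_eq_of_lt (by lia)]
      at this
  have hpath : ∀ r ≤ k, RainbowPath G c (x r) (x 0) r ((range (r + 1)).image fun i : ℕ ↦ x i)
      ((range r).image fun i : ℕ ↦ c s(x i, x (i + 1))) := by
    intro r
    induction r with
    | zero => intro _; simpa using RainbowPath.nil (x 0)
    | succ r ih =>
      intro hr
      have hedge : s(x r, x (r + 1)) = s(x (r + 1 : ℕ), x r) := by simp [Sym2.eq_swap]
      rw [range_add_one (n := r + 1), image_insert, range_add_one (n := r),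
        image_insert (fun i : ℕ ↦ c s(x i, x (i + 1))), hedge, ← range_add_one]
      refine (ih (by lia)).cons (by simpa using (hadj r).symm) ?_ ?_
      · simp only [mem_image, mem_range, not_exists, not_and]
        exact fun i hi h ↦ by have := hcast (by lia) hr (hx h); lia
      · simp only [mem_image, mem_range, not_exists, not_and]
        intro i hi h
        rw [← hedge] at h
        have := hcast (by lia) (by lia) (hc h)
        lia
  have hlast : ((k : ℕ) : Fin (k + 1)) + 1 = 0 := by simp
  have hclose : G.Adj (x k) (x 0) := hlast ▸ hadj k
  refine (hpath k le_rfl).hasRainbowCycle (.single (c := c) hclose.symm) ?_ ?_ hclose.ne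
  · simp +contextual [or_comm]
  · simp only [disjoint_singleton_right, mem_image, mem_range, not_exists, not_and]
    intro i hi h
    rw [Sym2.eq_swap (a := x 0), ← hlast] at h
    have := hcast (by lia) le_rfl (hc h)
    lia

/-- An out-orientation of part of a rainbow-`ℓ`-cycle-free edge-colored graph on at most `3 * d`
vertices: every vertex `v` selects a set `S v` of `d` neighbors joined to `v` by edges of distinct
colors. -/
structure RainbowFreeSelection [Fintype V] (G : SimpleGraph V) (c : Sym2 V → ℕ) (S : V → Finset V)
    (d ℓ : ℕ) : Prop where
  adj : ∀ {v u}, u ∈ S v → G.Adj v u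
  color_injOn : ∀ v, Set.InjOn (fun u ↦ c s(v, u)) (S v)
  card_eq : ∀ v, #(S v) = d
  card_le : Fintype.card V ≤ 3 * d
  not_hasRainbowCycle : ¬ HasRainbowCycle G c ℓ

section Orientation

variable {k : ℕ} (σ : Fin (k + 1) → Bool)

/-- The tail of the `j`-th edge of the cycle `0, 1, …, k` when `σ` marks the reversed edges. -/
def edgeTail (j : Fin (k + 1)) : Fin (k + 1) := if σ j then j + 1 else j

/-- The head of the `j`-th edge of the cycle `0, 1, …, k` when `σ` marks the reversed edges. -/
def edgeHead (j : Fin (k + 1)) : Fin (k + 1) := if σ j then j else j + 1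

variable {σ}

lemma edgeHead_ne_edgeTail (hk : 2 ≤ k) (j : Fin (k + 1)) : edgeHead σ j ≠ edgeTail σ j := by
  unfold edgeHead edgeTail
  split_ifs
  exacts [fin_ne_add_one hk j, (fin_ne_add_one hk j).symm]

lemma mk_edgeTail_edgeHead (x : Fin (k + 1) → V) (j : Fin (k + 1)) :
    s(x (edgeTail σ j), x (edgeHead σ j)) = s(x j, x (j + 1)) := by
  unfold edgeHead edgeTail
  split_ifs
  exacts [Sym2.eq_swap, rfl]

lemma edgeHead_ne_edgeTail_of_eq (hk : 2 ≤ k) {a b : Fin (k + 1)} (hab : a ≠ b)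
    (h : edgeHead σ a = edgeTail σ b) : edgeHead σ b ≠ edgeTail σ a := by
  intro h'
  unfold edgeHead edgeTail at h h'
  split_ifs at h h'
  · exact fin_ne_add_two hk b (h ▸ h')
  · exact hab h
  · exact hab (add_right_cancel h)
  · exact fin_ne_add_two hk a (h ▸ h').symm

end Orientation

namespace RainbowFreeSelection

variable [Fintype V] {G : SimpleGraph V} {c : Sym2 V → ℕ} {S : V → Finset V}
  {d k : ℕ} {σ : Fin (k + 1) → Bool}

lemma card_filter_color_eq_le_of_ne (K : RainbowFreeSelection G c S d (k + 1)) (hk : 2 ≤ k)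
    {X : Finset (Fin (k + 1) → V)} (hX : ∀ x ∈ X, ∀ j, x (edgeHead σ j) ∈ S (x (edgeTail σ j)))
    {a b : Fin (k + 1)} (hhead : edgeHead σ a ≠ edgeHead σ b)
    (htail : edgeHead σ a ≠ edgeTail σ b) :
    #{x ∈ X | c s(x a, x (a + 1)) = c s(x b, x (b + 1))} ≤ Fintype.card V ^ k := by
  refine (card_le_pow_of_determined (edgeHead σ a) fun x hx y hy hxy ↦ ?_).trans_eq (by simp)
  obtain ⟨hxX, hxc⟩ := mem_filter.1 hx
  obtain ⟨hyX, hyc⟩ := mem_filter.1 hy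
  simp only [← mk_edgeTail_edgeHead (σ := σ)] at hxc hyc
  have htail_eq := hxy _ (edgeHead_ne_edgeTail hk a).symm
  rw [hxy _ hhead.symm, hxy _ htail.symm, ← hyc, htail_eq] at hxc
  have hhead_eq := K.color_injOn _ (htail_eq ▸ hX x hxX a) (hX y hyX a) hxc
  funext i
  by_cases hi : i = edgeHead σ a
  exacts [hi ▸ hhead_eq, hxy i hi]

lemma card_filter_color_eq_le (K : RainbowFreeSelection G c S d (k + 1)) (hk : 2 ≤ k)
    {X : Finset (Fin (k + 1) → V)} (hX : ∀ x ∈ X, ∀ j, x (edgeHead σ j) ∈ S (x (edgeTail σ j)))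
    {a b : Fin (k + 1)} (hab : a ≠ b)
    (hcol : ∀ x ∈ X, edgeHead σ a = edgeHead σ b → c s(x a, x (a + 1)) ≠ c s(x b, x (b + 1))) :
    #{x ∈ X | c s(x a, x (a + 1)) = c s(x b, x (b + 1))} ≤ Fintype.card V ^ k := by
  by_cases hhead : edgeHead σ a = edgeHead σ b
  · rw [filter_false_of_mem fun x hx ↦ hcol x hx hhead]
    simp
  by_cases htail : edgeHead σ a = edgeTail σ b
  · refine (card_le_card (monotone_filter_right X fun _ _ h ↦ h.symm)).trans ?_
    exact K.card_filter_color_eq_le_of_ne hk hX (Ne.symm hhead)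
      (edgeHead_ne_edgeTail_of_eq hk hab htail)
  · exact K.card_filter_color_eq_le_of_ne hk hX hhead htail

lemma card_closed_tuples_le (K : RainbowFreeSelection G c S d (k + 1)) (hk : 2 ≤ k)
    {X : Finset (Fin (k + 1) → V)} (hX : ∀ x ∈ X, ∀ j, x (edgeHead σ j) ∈ S (x (edgeTail σ j)))
    (hcol : ∀ x ∈ X, ∀ a b, a ≠ b → edgeHead σ a = edgeHead σ b →
      c s(x a, x (a + 1)) ≠ c s(x b, x (b + 1))) :
    #X ≤ 2 * (k + 1) ^ 2 * Fintype.card V ^ k := by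
  classical
  set P : Finset (Fin (k + 1) × Fin (k + 1)) := univ.offDiag
  have hP : #P ≤ (k + 1) ^ 2 := by
    rw [offDiag_card, card_univ, Fintype.card_fin, sq]
    exact Nat.sub_le _ _
  have hdegenerate : X ⊆ P.biUnion (fun p ↦ {x ∈ X | x p.1 = x p.2}) ∪
      P.biUnion fun p ↦ {x ∈ X | c s(x p.1, x (p.1 + 1)) = c s(x p.2, x (p.2 + 1))} := by
    intro x hx
    by_contra hcon
    simp only [mem_union, mem_biUnion, mem_filter, not_or, not_exists, not_and] at hcon
    have hmem {a b : Fin (k + 1)} (hab : a ≠ b) : (a, b) ∈ P := by simp [P, hab]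
    refine K.not_hasRainbowCycle (hasRainbowCycle_of_tuple (x := x) (fun a b h ↦ ?_) (fun j ↦ ?_)
      fun a b h ↦ ?_)
    · exact by_contra fun hab ↦ hcon.1 _ (hmem hab) hx h
    · rw [← SimpleGraph.mem_edgeSet, ← mk_edgeTail_edgeHead (σ := σ)]
      exact K.adj (hX x hx j)
    · exact by_contra fun hab ↦ hcon.2 _ (hmem hab) hx h
  have hvertex : ∀ p ∈ P, #{x ∈ X | x p.1 = x p.2} ≤ Fintype.card V ^ k := by
    rintro ⟨a, b⟩ hp
    have hab : a ≠ b := by simpa [P] using hp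
    refine (card_le_pow_of_determined a fun x hx y hy hxy ↦ ?_).trans_eq (by simp)
    funext i
    by_cases hi : i = a
    · rw [hi, (mem_filter.1 hx).2, (mem_filter.1 hy).2, hxy b hab.symm]
    · exact hxy i hi
  calc #X ≤ #P * Fintype.card V ^ k + #P * Fintype.card V ^ k := by
        refine (card_le_card hdegenerate).trans ((card_union_le _ _).trans (add_le_add ?_ ?_))
        · exact card_biUnion_le_card_mul _ _ _ hvertex
        · refine card_biUnion_le_card_mul _ _ _ fun p hp ↦ ?_
          have hab : p.1 ≠ p.2 := by simpa [P] using hp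
          exact K.card_filter_color_eq_le hk hX hab fun x hx ↦ hcol x hx _ _ hab
    _ = 2 * #P * Fintype.card V ^ k := by ring
    _ ≤ 2 * (k + 1) ^ 2 * Fintype.card V ^ k := by gcongr

lemma card_tuples_le (K : RainbowFreeSelection G c S d (k + 1)) (hk : 2 ≤ k)
    {X : Finset (Fin (k + 1) → V)} {M : Finset (V × V)}
    (hX : ∀ x ∈ X, ∀ j,
      x (edgeHead σ j) ∈ S (x (edgeTail σ j)) ∨ (x (edgeTail σ j), x (edgeHead σ j)) ∈ M)
    (hcol : ∀ x ∈ X, ∀ a b, a ≠ b → edgeHead σ a = edgeHead σ b →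
      c s(x a, x (a + 1)) ≠ c s(x b, x (b + 1))) :
    #X ≤ (k + 1) * (#M * Fintype.card V ^ (k - 1)) + 2 * (k + 1) ^ 2 * Fintype.card V ^ k := by
  classical
  set T := {x ∈ X | ∀ j, x (edgeHead σ j) ∈ S (x (edgeTail σ j))}
  set B : Fin (k + 1) → Finset (Fin (k + 1) → V) := fun j ↦
    {x | (x (edgeTail σ j), x (edgeHead σ j)) ∈ M}
  have hsub : X ⊆ univ.biUnion B ∪ T := by
    intro x hx
    by_cases h : ∀ j, x (edgeHead σ j) ∈ S (x (edgeTail σ j))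
    · exact mem_union_right _ (mem_filter.2 ⟨hx, h⟩)
    · push Not at h
      obtain ⟨j, hj⟩ := h
      exact mem_union_left _ (mem_biUnion.2 ⟨j, mem_univ _,
        mem_filter.2 ⟨mem_univ _, (hX x hx j).resolve_left hj⟩⟩)
  refine (card_le_card hsub).trans ((card_union_le _ _).trans (add_le_add ?_ ?_))
  · refine (card_biUnion_le_card_mul _ _ (#M * Fintype.card V ^ (k - 1)) fun j _ ↦ ?_).trans_eq
      (by simp)
    simpa using card_filter_pair_mem_le M (edgeHead_ne_edgeTail (σ := σ) hk j).symm
  · exact K.card_closed_tuples_le hk (fun x hx ↦ (mem_filter.1 hx).2)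
      fun x hx ↦ hcol x (mem_filter.1 hx).1

end RainbowFreeSelection

lemma exists_eventually_card_tuples_le {k : ℕ} (hk : 2 ≤ k) {τ : ℝ} (hτ : 0 < τ) :
    ∃ η > (0 : ℝ), ∀ᶠ d : ℕ in atTop, ∀ (V : Type u) [Fintype V]
      {G : SimpleGraph V} {c : Sym2 V → ℕ} {S : V → Finset V},
      RainbowFreeSelection G c S d (k + 1) →
      ∀ (σ : Fin (k + 1) → Bool) (X : Finset (Fin (k + 1) → V)) (M : Finset (V × V)),
      (#M : ℝ) ≤ η * d ^ 2 →
      (∀ x ∈ X, ∀ j,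
        x (edgeHead σ j) ∈ S (x (edgeTail σ j)) ∨ (x (edgeTail σ j), x (edgeHead σ j)) ∈ M) →
      (∀ x ∈ X, ∀ a b, a ≠ b → edgeHead σ a = edgeHead σ b →
        c s(x a, x (a + 1)) ≠ c s(x b, x (b + 1))) →
      (#X : ℝ) ≤ τ * d ^ (k + 1) := by
  obtain ⟨j, rfl⟩ : ∃ j, k = j + 1 := ⟨k - 1, by lia⟩
  set C : ℝ := 2 * (j + 2) ^ 2 * 3 ^ (j + 1)
  refine ⟨τ / (2 * ((j + 2) * 3 ^ j)), by positivity, ?_⟩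
  filter_upwards [tendsto_natCast_atTop_atTop.eventually_ge_atTop (2 * C / τ)]
    with d hd V _ G c S K σ X M hM hX hcol
  have hcard : (Fintype.card V : ℝ) ≤ 3 * d := by exact_mod_cast K.card_le
  have hdC : C ≤ τ / 2 * d := by
    rw [div_le_iff₀ hτ] at hd
    linarith
  calc (#X : ℝ) ≤ (j + 2) * (#M * Fintype.card V ^ j)
        + 2 * (j + 2) ^ 2 * Fintype.card V ^ (j + 1) := by
        have := K.card_tuples_le hk hX hcol
        rw [Nat.add_sub_cancel] at this
        exact_mod_cast this
    _ ≤ (j + 2) * (τ / (2 * ((j + 2) * 3 ^ j)) * d ^ 2 * (3 * d) ^ j)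
        + 2 * (j + 2) ^ 2 * (3 * d) ^ (j + 1) := by gcongr
    _ = τ / 2 * d ^ (j + 1 + 1) + C * d ^ (j + 1) := by
        simp only [C]
        field_simp
        ring
    _ ≤ τ / 2 * d ^ (j + 1 + 1) + τ / 2 * d * d ^ (j + 1) := by gcongr
    _ = τ * d ^ (j + 1 + 1) := by ring

lemma exists_eventually_exists_card_lt {k : ℕ} (hk : 2 ≤ k) {θ : ℝ} (hθ : 0 < θ) :
    ∃ η > (0 : ℝ), ∀ᶠ d : ℕ in atTop, ∀ (V : Type u) [Fintype V] {G : SimpleGraph V}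
      {c : Sym2 V → ℕ} {S : V → Finset V}, RainbowFreeSelection G c S d (k + 1) →
      ∀ (Y : Fin (k + 1) → Finset V) (M : Finset (V × V)), (#M : ℝ) ≤ η * d ^ 2 →
      (∀ j, ∀ a ∈ Y j, ∀ b ∈ Y (j + 1), b ∈ S a ∨ (a, b) ∈ M) → ∃ j, (#(Y j) : ℝ) < θ * d := by
  obtain ⟨η, hη, hev⟩ := exists_eventually_card_tuples_le hk (τ := θ ^ (k + 1) / 2) (by positivity)
  refine ⟨η, hη, ?_⟩
  filter_upwards [hev, eventually_gt_atTop 0] with d hd hd0 V _ G c S K Y M hM hY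
  by_contra! hcard
  have hupper := hd V K (fun _ ↦ false) (Fintype.piFinset Y) M hM
    (fun x hx j ↦ hY j _ (Fintype.mem_piFinset.1 hx j) _ (Fintype.mem_piFinset.1 hx (j + 1)))
    fun x _ a b hab h ↦ absurd (add_right_cancel h) hab
  have hlower : (θ * d) ^ (k + 1) ≤ #(Fintype.piFinset Y) := by
    rw [Fintype.card_piFinset]
    push_cast
    calc (θ * d) ^ (k + 1) = ∏ _j : Fin (k + 1), θ * (d : ℝ) := by simp
      _ ≤ ∏ j, (#(Y j) : ℝ) := prod_le_prod (fun _ _ ↦ by positivity) fun j _ ↦ hcard j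
  have hpos : 0 < (θ * d) ^ (k + 1) := by positivity
  rw [mul_pow] at hlower hpos
  linarith

/-! ### Eigenvalues -/

section Schur

open Matrix Polynomial

variable {ι κ : Type*} [Fintype ι] [Fintype κ]

/-- The family `μ` lists the eigenvalues of `B` with multiplicity; the last two fields record what a
Schur triangularization of `B` says about its powers. -/
structure IsEigenvalueFamily [DecidableEq ι] (B : Matrix ι ι ℂ) (μ : κ → ℂ) : Prop where
  charpoly_eq : B.charpoly = ∏ i, (X - C (μ i))
  trace_pow (k : ℕ) : (B ^ k).trace = ∑ i, μ i ^ k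
  sum_norm_pow_le (k : ℕ) : ∑ i, ‖μ i‖ ^ (2 * k) ≤ ∑ u, ∑ v, ‖(B ^ k) u v‖ ^ 2

lemma sum_norm_sq_eq_trace (M : Matrix ι κ ℂ) :
    ((∑ i, ∑ j, ‖M i j‖ ^ 2 : ℝ) : ℂ) = (M * Mᴴ).trace := by
  simp [trace, mul_apply, ← Complex.mul_conj']

lemma sum_norm_sq_conj [DecidableEq κ] {U : Matrix ι κ ℂ} (hU : Uᴴ * U = 1) (M : Matrix κ κ ℂ) :
    ∑ i, ∑ j, ‖(U * M * Uᴴ) i j‖ ^ 2 = ∑ i, ∑ j, ‖M i j‖ ^ 2 := by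
  apply Complex.ofReal_injective
  rw [sum_norm_sq_eq_trace, sum_norm_sq_eq_trace, conjTranspose_mul, conjTranspose_mul,
    conjTranspose_conjTranspose]
  calc (U * M * Uᴴ * (U * (Mᴴ * Uᴴ))).trace = (U * (M * ((Uᴴ * U) * (Mᴴ * Uᴴ)))).trace := by
        simp only [Matrix.mul_assoc]
    _ = (M * Mᴴ * (Uᴴ * U)).trace := by
        rw [hU, Matrix.one_mul, trace_mul_comm, Matrix.mul_assoc, Matrix.mul_assoc, hU,
          Matrix.mul_assoc]
    _ = (M * Mᴴ).trace := by rw [hU, Matrix.mul_one]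

lemma conj_pow_of_mul_eq_one {R : Type*} [Semiring R] [DecidableEq ι] [DecidableEq κ]
    {U : Matrix ι κ R} {U' : Matrix κ ι R} (h : U' * U = 1) (h' : U * U' = 1) (M : Matrix κ κ R)
    (k : ℕ) : (U * M * U') ^ k = U * M ^ k * U' := by
  induction k with
  | zero => simp [h']
  | succ k ih =>
    calc (U * M * U') ^ (k + 1) = U * M ^ k * (U' * U) * M * U' := by
          rw [pow_succ, ih]
          simp only [Matrix.mul_assoc]
      _ = U * M ^ (k + 1) * U' := by rw [h, pow_succ]; simp only [Matrix.mul_assoc, Matrix.one_mul]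

lemma IsEigenvalueFamily.conj {τ : Type*} [Fintype τ] [DecidableEq ι] [DecidableEq κ]
    {M : Matrix κ κ ℂ} {μ : τ → ℂ} (h : IsEigenvalueFamily M μ)
    (hcard : Fintype.card ι = Fintype.card κ) {U : Matrix ι κ ℂ} (hU : Uᴴ * U = 1) :
    IsEigenvalueFamily (U * M * Uᴴ) μ := by
  have hU' : U * Uᴴ = 1 := (mul_eq_one_comm_of_card_eq _ _ _ hcard.symm).1 hU
  have hpow := conj_pow_of_mul_eq_one hU hU' M
  refine ⟨?_, fun k ↦ ?_, fun k ↦ ?_⟩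
  · rw [Matrix.mul_assoc, charpoly_mul_comm_of_le _ _ hcard.ge, Matrix.mul_assoc, hU,
      Matrix.mul_one, hcard, Nat.sub_self, pow_zero, one_mul, h.charpoly_eq]
  · rw [hpow, trace_mul_comm, ← Matrix.mul_assoc, hU, Matrix.one_mul, h.trace_pow]
  · rw [hpow, sum_norm_sq_conj hU]
    exact h.sum_norm_pow_le k

lemma exists_fromBlocks_diagonal_pow [DecidableEq κ] (z : ℂ) (b : Matrix Unit κ ℂ)
    (D : Matrix κ κ ℂ) (k : ℕ) : ∃ b', fromBlocks (diagonal fun _ ↦ z) b 0 D ^ k =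
      fromBlocks (diagonal fun _ ↦ z ^ k) b' 0 (D ^ k) := by
  induction k with
  | zero => exact ⟨0, by simp [← fromBlocks_one]⟩
  | succ k ih =>
    obtain ⟨b', hb⟩ := ih
    exact ⟨_, by rw [pow_succ, hb, fromBlocks_multiply]; simp [pow_succ]; rfl⟩

lemma IsEigenvalueFamily.fromBlocks {n : ℕ} [DecidableEq κ] {D : Matrix κ κ ℂ} {μ : Fin n → ℂ}
    (h : IsEigenvalueFamily D μ) (z : ℂ) (b : Matrix Unit κ ℂ) :
    IsEigenvalueFamily (fromBlocks (diagonal fun _ ↦ z) b 0 D)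
      (Fin.cons z μ : Fin (n + 1) → ℂ) := by
  refine ⟨?_, fun k ↦ ?_, fun k ↦ ?_⟩
  · simp [charpoly_diagonal, h.charpoly_eq, Fin.prod_univ_succ]
  · obtain ⟨b', hb⟩ := exists_fromBlocks_diagonal_pow z b D k
    rw [hb, Fin.sum_univ_succ, Fin.cons_zero]
    simp [trace, ← h.trace_pow]
  · obtain ⟨b', hb⟩ := exists_fromBlocks_diagonal_pow z b D k
    calc ∑ i, ‖(Fin.cons z μ : Fin (n + 1) → ℂ) i‖ ^ (2 * k)
        = ‖z‖ ^ (2 * k) + 0 + ∑ i, ‖μ i‖ ^ (2 * k) := by simp [Fin.sum_univ_succ]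
      _ ≤ ‖z‖ ^ (2 * k) + ∑ x, ‖b' () x‖ ^ 2 + ∑ u, ∑ v, ‖(D ^ k) u v‖ ^ 2 := by
        gcongr
        exacts [by positivity, h.sum_norm_pow_le k]
      _ = _ := by simp [hb, ← pow_mul, mul_comm k 2]

lemma exists_eigenvector_norm_eq_one [Nonempty ι] (B : Matrix ι ι ℂ) :
    ∃ (v : EuclideanSpace ℂ ι) (z : ℂ), ‖v‖ = 1 ∧ B *ᵥ v = z • v.ofLp := by
  classical
  obtain ⟨z, hz⟩ := Module.End.exists_eigenvalue (toLin' B)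
  obtain ⟨v, hv⟩ := hz.exists_hasEigenvector
  have hv0 : WithLp.toLp 2 v ≠ 0 := by simpa using hv.2
  refine ⟨((‖WithLp.toLp 2 v‖⁻¹ : ℝ) : ℂ) • WithLp.toLp 2 v, z, ?_, ?_⟩
  · rw [norm_smul]
    simp [norm_ne_zero_iff.2 hv0]
  · have hBv : B *ᵥ v = z • v := by simpa using hv.apply_eq_smul
    simp [mulVec_smul, hBv, smul_comm z]

lemma exists_conj_fromBlocks [DecidableEq κ] (hcard : Fintype.card ι = Fintype.card κ + 1)
    (B : Matrix ι ι ℂ) :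
    ∃ (U : Matrix ι (Unit ⊕ κ) ℂ) (z : ℂ) (b : Matrix Unit κ ℂ) (D : Matrix κ κ ℂ),
      Uᴴ * U = 1 ∧ B = U * fromBlocks (diagonal fun _ ↦ z) b 0 D * Uᴴ := by
  classical
  have : Nonempty ι := Fintype.card_pos_iff.1 (by lia)
  obtain ⟨v, z, hv1, hBv⟩ := exists_eigenvector_norm_eq_one B
  have horth : Orthonormal ℂ (({Sum.inl ()} : Set (Unit ⊕ κ)).domRestrict fun _ ↦ v) :=
    ⟨fun _ ↦ hv1, fun i j hij ↦ absurd (Subsingleton.elim i j) hij⟩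
  obtain ⟨e, he⟩ := horth.exists_orthonormalBasis_extension_of_card_eq
    (by simp [hcard, add_comm])
  have hev : e (Sum.inl ()) = v := he _ rfl
  set U : Matrix ι (Unit ⊕ κ) ℂ := Matrix.of fun i j ↦ e j i
  have hU : Uᴴ * U = 1 := by
    ext i j
    rw [mul_apply, one_apply, ← orthonormal_iff_ite.1 e.orthonormal i j, PiLp.inner_apply]
    simp [U, conjTranspose_apply, mul_comm]
  have hU' : U * Uᴴ = 1 := 
    (mul_eq_one_comm_of_card_eq _ _ _ (by simp [hcard, add_comm])).1 hU
  set T := Uᴴ * B * U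
  have hcol (i) : T i (Sum.inl ()) = z * (1 : Matrix (Unit ⊕ κ) (Unit ⊕ κ) ℂ) i (Sum.inl ()) := by
    have hBU (x) : (B * U) x (Sum.inl ()) = z * U x (Sum.inl ()) := by
      simpa [mul_apply, mulVec, dotProduct, U, hev] using congrFun hBv x
    simp only [T, Matrix.mul_assoc, ← hU]
    simp only [mul_apply (M := Uᴴ), hBU, mul_sum, mul_left_comm z]
  have hT : T = fromBlocks (diagonal fun _ ↦ z) T.toBlocks₁₂ 0 T.toBlocks₂₂ := by
    conv_lhs => rw [← fromBlocks_toBlocks T]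
    congr 1
    · ext i j
      simpa [toBlocks₁₁] using hcol (Sum.inl i)
    · ext i j
      simpa [toBlocks₂₁] using hcol (Sum.inr i)
  refine ⟨U, z, T.toBlocks₁₂, T.toBlocks₂₂, hU, ?_⟩
  calc B = (U * Uᴴ) * B * (U * Uᴴ) := by simp [hU']
    _ = U * T * Uᴴ := by simp only [T, Matrix.mul_assoc]
    _ = U * Matrix.fromBlocks (diagonal fun _ ↦ z) T.toBlocks₁₂ 0 T.toBlocks₂₂ * Uᴴ := by rw [← hT]

lemma exists_isEigenvalueFamily_of_card_eq_succ [DecidableEq ι] {n : ℕ}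
    (hcard : Fintype.card ι = n + 1)
    (hn : ∀ D : Matrix (Fin n) (Fin n) ℂ, ∃ μ : Fin n → ℂ, IsEigenvalueFamily D μ)
    (B : Matrix ι ι ℂ) : ∃ μ : Fin (n + 1) → ℂ, IsEigenvalueFamily B μ := by
  obtain ⟨U, z, b, D, hU, rfl⟩ := exists_conj_fromBlocks (κ := Fin n) (by simpa using hcard) B
  obtain ⟨μ, hμ⟩ := hn D
  exact ⟨Fin.cons z μ, (hμ.fromBlocks z b).conj (by simp [hcard, add_comm]) hU⟩

lemma exists_isEigenvalueFamily_fin (n : ℕ) (B : Matrix (Fin n) (Fin n) ℂ) :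
    ∃ μ : Fin n → ℂ, IsEigenvalueFamily B μ := by
  induction n with
  | zero => exact ⟨Fin.elim0, by simp, by simp [trace], by simp⟩
  | succ n ih => exact exists_isEigenvalueFamily_of_card_eq_succ (by simp) ih B

lemma exists_isEigenvalueFamily [DecidableEq ι] [Nonempty ι] (B : Matrix ι ι ℂ) :
    ∃ (n : ℕ) (μ : Fin n → ℂ), IsEigenvalueFamily B μ := by
  obtain ⟨n, hn⟩ := Nat.exists_eq_add_of_lt (Fintype.card_pos (α := ι))
  exact ⟨n + 1, exists_isEigenvalueFamily_of_card_eq_succ (by lia)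
    (exists_isEigenvalueFamily_fin n) B⟩

end Schur

section ConjugatePair

variable {ι : Type*}

lemma sum_sq_le_half_sq_sum_abs {s : Finset ι} {y : ι → ℝ} (h : ∑ i ∈ s, y i = 0) :
    ∑ i ∈ s, y i ^ 2 ≤ (∑ i ∈ s, |y i|) ^ 2 / 2 := by
  classical
  have habs : ∀ i ∈ s, |y i| ≤ (∑ i ∈ s, |y i|) / 2 := by
    intro i hi
    have hrest : |∑ x ∈ s.erase i, y x| ≤ ∑ x ∈ s.erase i, |y x| := abs_sum_le_sum_abs ..
    rw [eq_neg_of_add_eq_zero_right ((add_sum_erase s y hi).trans h), abs_neg] at hrest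
    linarith [add_sum_erase s (fun i ↦ |y i|) hi]
  calc ∑ i ∈ s, y i ^ 2 ≤ ∑ i ∈ s, (∑ i ∈ s, |y i|) / 2 * |y i| := by
        refine sum_le_sum fun i hi ↦ ?_
        rw [← sq_abs, sq]
        exact mul_le_mul_of_nonneg_right (habs i hi) (abs_nonneg _)
    _ = (∑ i ∈ s, |y i|) ^ 2 / 2 := by rw [← mul_sum]; ring

lemma sq_sum_abs_re_add_sq_sum_abs_im_le (s : Finset ι) (w : ι → ℂ) :
    (∑ i ∈ s, |(w i).re|) ^ 2 + (∑ i ∈ s, |(w i).im|) ^ 2 ≤ (∑ i ∈ s, ‖w i‖) ^ 2 := by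
  set z : ι → ℂ := fun i ↦ ⟨|(w i).re|, |(w i).im|⟩
  have hz (i) : ‖z i‖ = ‖w i‖ := by simp [Complex.norm_eq_sqrt_sq_add_sq, z]
  calc _ = ‖∑ i ∈ s, z i‖ ^ 2 := by
        rw [Complex.sq_norm, Complex.normSq_apply, Complex.re_sum, Complex.im_sum, ← sq, ← sq]
    _ ≤ (∑ i ∈ s, ‖z i‖) ^ 2 := by gcongr; exact norm_sum_le ..
    _ = (∑ i ∈ s, ‖w i‖) ^ 2 := by simp only [hz]

lemma one_sub_le_of_sq_add_half_sq_le {ε e t p q : ℝ} (hε : 0 < ε) (hε1 : ε ≤ 1 / 10) (he : 0 ≤ e)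
    (heε : e ≤ ε ^ 2 / 100) (hq : 0 ≤ q) (het : -e ≤ t) (htq : t ≤ 1 - q)
    (hsq : p ^ 2 + q ^ 2 / 2 - e ≤ t ^ 2) (hpq : 1 - e ≤ p + q) : 1 - ε ≤ t := by
  have hε2 : ε ^ 2 ≤ ε / 10 := by nlinarith
  have he2 : e ^ 2 ≤ e := by nlinarith
  have hcauchy : (p + q) ^ 2 ≤ 3 * (p ^ 2 + q ^ 2 / 2) := by nlinarith [sq_nonneg (p - q / 2)]
  have hsum : (1 - e) ^ 2 ≤ (p + q) ^ 2 := by gcongr; linarith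
  have ht : 0 ≤ t := by
    by_contra! h
    have : t ^ 2 ≤ e ^ 2 := sq_le_sq' het (by linarith)
    linarith
  have hqe : q ≤ 1 - e := by
    by_contra! h
    have : t ^ 2 ≤ e ^ 2 := by gcongr; linarith
    linarith
  have hpe : (1 - e - q) ^ 2 ≤ p ^ 2 := by gcongr; linarith
  have ht2 : t ^ 2 ≤ (1 - q) ^ 2 := by gcongr
  have hq4 : q ≤ ε / 4 := by
    refine le_of_sq_le_sq ?_ (by positivity)
    linarith [mul_nonneg he hq, sq_nonneg e, sq_nonneg ε]
  have hlow : (1 - ε / 2) ^ 2 ≤ (1 - e - q) ^ 2 :=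
    pow_le_pow_left₀ (by linarith) (by linarith) 2
  by_contra! h
  have : t ^ 2 ≤ (1 - ε) ^ 2 := by gcongr
  linarith [sq_nonneg q]

variable [Fintype ι] {w : ι → ℂ} {b : ℝ}

lemma sum_re_sq_sub_im_sq (h : ∑ i, w i ^ 2 = (b : ℂ)) :
    ∑ i, ((w i).re ^ 2 - (w i).im ^ 2) = b := by
  rw [← Complex.ofReal_re b, ← h, Complex.re_sum]
  exact sum_congr rfl fun i _ ↦ by rw [sq (w i), Complex.mul_re, sq, sq]

lemma exists_im_ne_zero_and_le_norm (hb : b ≤ 1 / 4) (hsq : ∑ i, w i ^ 2 = ((-1 + b : ℝ) : ℂ))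
    (hnorm : ∑ i, ‖w i‖ ≤ 2) : ∃ i, (w i).im ≠ 0 ∧ 1 - b ≤ 2 * ‖w i‖ := by
  have hne : Nonempty ι := by
    by_contra! h
    rw [Fintype.sum_empty, eq_comm, Complex.ofReal_eq_zero] at hsq
    linarith
  obtain ⟨i, -, hmax⟩ := exists_max_image univ (fun i ↦ ‖w i‖) univ_nonempty
  have hnormSq (j) : ‖w j‖ ^ 2 = (w j).re ^ 2 + (w j).im ^ 2 := by
    rw [Complex.sq_norm, Complex.normSq_apply, sq, sq]
  have hmass : 2 * ∑ j, (w j).re ^ 2 + 1 - b ≤ 2 * ‖w i‖ := by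
    calc 2 * ∑ j, (w j).re ^ 2 + 1 - b = ∑ j, ‖w j‖ ^ 2 := by
          have := sum_re_sq_sub_im_sq hsq
          simp only [hnormSq, sum_add_distrib, sum_sub_distrib] at this ⊢
          linarith
      _ ≤ ∑ j, ‖w i‖ * ‖w j‖ := sum_le_sum fun j hj ↦ by
          rw [sq]; exact mul_le_mul_of_nonneg_right (hmax j hj) (norm_nonneg _)
      _ = ‖w i‖ * ∑ j, ‖w j‖ := by rw [mul_sum]
      _ ≤ 2 * ‖w i‖ := by nlinarith [norm_nonneg (w i)]
  have hsingle : (w i).re ^ 2 ≤ ∑ j, (w j).re ^ 2 :=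
    single_le_sum (f := fun j ↦ (w j).re ^ 2) (fun j _ ↦ sq_nonneg _) (mem_univ i)
  refine ⟨i, fun h ↦ ?_, by linarith [sq_nonneg (w i).re]⟩
  have := hnormSq i
  rw [h] at this
  nlinarith [sq_nonneg (‖w i‖ - 1 / 2)]

lemma one_sub_le_norm_of_conj_pair {ε a : ℝ} (hε : 0 < ε) (hε1 : ε ≤ 1 / 10) (ha : 0 ≤ a)
    (haε : a ≤ ε ^ 2 / 100) (hbε : b ≤ ε ^ 2 / 100)
    (hsum : ∑ i, w i = ((-1 + a : ℝ) : ℂ)) (hsq : ∑ i, w i ^ 2 = ((-1 + b : ℝ) : ℂ))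
    (hnorm : ∑ i, ‖w i‖ ≤ 2) {i j : ι} (hji : j ≠ i) (hconj : w j = star (w i))
    (hi : 1 - b ≤ 2 * ‖w i‖) : 1 - ε ≤ ‖w i‖ := by
  classical
  set s := (univ.erase i).erase j
  have hsplit (f : ι → ℝ) : ∑ x, f x = f i + f j + ∑ x ∈ s, f x := by
    rw [← add_sum_erase univ f (mem_univ i),
      ← add_sum_erase (univ.erase i) f (mem_erase.2 ⟨hji, mem_univ j⟩), add_assoc]
  have hre : -1 + a = 2 * (w i).re + ∑ x ∈ s, (w x).re := by
    have := congrArg Complex.re hsum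
    rw [Complex.re_sum, Complex.ofReal_re, hsplit, hconj, Complex.star_def, Complex.conj_re] at this
    linarith
  have him : ∑ x ∈ s, (w x).im = 0 := by
    have := congrArg Complex.im hsum
    rw [Complex.im_sum, Complex.ofReal_im, hsplit, hconj, Complex.star_def, Complex.conj_im] at this
    linarith
  have hsq' : -1 + b = 2 * ((w i).re ^ 2 - (w i).im ^ 2)
      + (∑ x ∈ s, (w x).re ^ 2 - ∑ x ∈ s, (w x).im ^ 2) := by
    have := sum_re_sq_sub_im_sq hsq
    rw [hsplit, hconj, Complex.star_def, Complex.conj_re, Complex.conj_im, sum_sub_distrib] at this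
    linarith
  have hrest : ∑ x ∈ s, ‖w x‖ ≤ 2 - 2 * ‖w i‖ := by
    rw [hsplit, hconj, norm_star] at hnorm
    linarith
  have hnormSq : ‖w i‖ ^ 2 = (w i).re ^ 2 + (w i).im ^ 2 := by
    rw [Complex.sq_norm, Complex.normSq_apply, sq, sq]
  have hrestSq : (∑ x ∈ s, |(w x).re|) ^ 2 + (∑ x ∈ s, |(w x).im|) ^ 2 ≤ (2 - 2 * ‖w i‖) ^ 2 :=
    (sq_sum_abs_re_add_sq_sum_abs_im_le s w).trans (by gcongr)
  have hre_rest : ∑ x ∈ s, |(w x).re| ≤ ∑ x ∈ s, ‖w x‖ :=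
    sum_le_sum fun x _ ↦ Complex.abs_re_le_norm _
  have hre_nonneg : 0 ≤ ∑ x ∈ s, (w x).re ^ 2 := sum_nonneg fun x _ ↦ sq_nonneg _
  have him_le := sum_sq_le_half_sq_sum_abs him
  have hmain : 1 - ε ≤ 2 * ‖w i‖ - 1 := by
    refine one_sub_le_of_sq_add_half_sq_le (e := max a b) (p := 2 * |(w i).re|)
      (q := ∑ x ∈ s, |(w x).re|) hε hε1 (le_max_of_le_left ha) (max_le haε hbε)
      (by positivity) ?_ (by linarith) ?_ ?_
    · linarith [le_max_right a b]
    · rw [mul_pow, sq_abs]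
      nlinarith [le_max_right a b]
    · linarith [le_max_left a b, neg_abs_le (w i).re, neg_abs_le (∑ x ∈ s, (w x).re),
        abs_sum_le_sum_abs (fun x ↦ (w x).re) s]
  linarith

end ConjugatePair

section RowRegular

variable {ι κ : Type*} [Fintype ι] [Fintype κ]

/-- `A` is the adjacency matrix of a weighted digraph with edge weights in `[0, 1]` in which every
out-degree is equal to `d`. -/
structure IsRowRegular (A : Matrix ι ι ℝ) (d : ℝ) : Prop where
  nonneg (u v : ι) : 0 ≤ A u v
  le_one (u v : ι) : A u v ≤ 1
  sum_row (u : ι) : ∑ v, A u v = d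

/-- The matrix `A` with the mean of each column subtracted from that column. For a row-regular
matrix this removes the eigenvalue `d` of the all-ones vector. -/
noncomputable def colCentered (A : Matrix ι ι ℝ) : Matrix ι ι ℝ :=
  Matrix.of fun u v ↦ A u v - (∑ x, A x v) / Fintype.card ι

lemma colCentered_apply (A : Matrix ι ι ℝ) (u v : ι) :
    colCentered A u v = A u v - (∑ x, A x v) / Fintype.card ι := rfl

lemma sum_colCentered_sq_le [Nonempty ι] {M : Matrix ι ι ℝ} {r : ℝ} (hM : ∀ u, ∑ v, M u v = r) :
    ∑ u, ∑ v, colCentered M u v ^ 2 ≤ ∑ u, ∑ v, M u v ^ 2 - r ^ 2 := by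
  have hn : (0 : ℝ) < Fintype.card ι := by positivity
  have hcol (v) : ∑ u, colCentered M u v ^ 2
      = ∑ u, M u v ^ 2 - (∑ x, M x v) ^ 2 / Fintype.card ι := by
    simp only [colCentered_apply, sub_sq, sum_add_distrib, sum_sub_distrib, ← sum_mul, ← mul_sum,
      sum_const, card_univ, nsmul_eq_mul]
    field_simp
    ring
  have htotal : ∑ v, ∑ x, M x v = Fintype.card ι * r := by
    rw [sum_comm]
    simp only [hM, sum_const, card_univ, nsmul_eq_mul]
  have hcauchy : r ^ 2 ≤ (∑ v, (∑ x, M x v) ^ 2) / Fintype.card ι := by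
    have := sq_sum_le_card_mul_sum_sq (s := univ) (f := fun v ↦ ∑ x, M x v)
    rw [htotal, card_univ, mul_pow, sq (Fintype.card ι : ℝ), mul_assoc] at this
    rw [le_div_iff₀' hn]
    exact le_of_mul_le_mul_left this hn
  rw [sum_comm, sum_congr rfl fun v _ ↦ hcol v, sum_sub_distrib, ← sum_div, sum_comm]
  linarith

lemma trace_colCentered [Nonempty ι] {M : Matrix ι ι ℝ} {r : ℝ} (hM : ∀ u, ∑ v, M u v = r) :
    (colCentered M).trace = M.trace - r := by
  simp only [Matrix.trace, Matrix.diag, colCentered_apply, sum_sub_distrib, ← sum_div]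
  rw [sum_comm]
  simp only [hM, sum_const, card_univ, nsmul_eq_mul]
  field_simp

lemma sum_sum_pow_four_le (K : ι → κ → ℝ) :
    (∑ x, ∑ y, K x y) ^ 4 ≤
      (Fintype.card ι * Fintype.card κ) ^ 2 * ∑ x, ∑ x', (∑ y, K x y * K x' y) ^ 2 := by
  have hcols := sq_sum_le_card_mul_sum_sq (s := univ) (f := fun y ↦ ∑ x, K x y)
  have hpairs := sq_sum_le_card_mul_sum_sq (s := univ)
    (f := fun p : ι × ι ↦ ∑ y, K p.1 y * K p.2 y)
  have hexpand : ∑ y, (∑ x, K x y) ^ 2 = ∑ p : ι × ι, ∑ y, K p.1 y * K p.2 y := by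
    rw [sum_comm]
    exact sum_congr rfl fun y _ ↦ by rw [sq, sum_mul_sum, ← sum_product', univ_product_univ]
  rw [card_univ] at hcols
  rw [card_univ, Fintype.card_prod, Nat.cast_mul] at hpairs
  calc (∑ x, ∑ y, K x y) ^ 4 = ((∑ y, ∑ x, K x y) ^ 2) ^ 2 := by rw [sum_comm, ← pow_mul]
    _ ≤ (Fintype.card κ * ∑ y, (∑ x, K x y) ^ 2) ^ 2 := by gcongr
    _ = Fintype.card κ ^ 2 * (∑ p : ι × ι, ∑ y, K p.1 y * K p.2 y) ^ 2 := by rw [hexpand, mul_pow]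
    _ ≤ Fintype.card κ ^ 2 * (Fintype.card ι * Fintype.card ι *
          ∑ x, ∑ x', (∑ y, K x y * K x' y) ^ 2) := by
        simp only [Fintype.sum_prod_type] at hpairs ⊢
        gcongr
    _ = _ := by ring

lemma sum_sq_le_sq_mul_trace {Q A : Matrix ι ι ℝ} {q : ℝ} (hQ : ∀ u v, 0 ≤ Q u v)
    (hQq : ∀ u v, Q u v ≤ q) (hA : ∀ u v, 0 ≤ A u v) (hA1 : ∀ u v, A u v ≤ 1) :
    ∑ x, ∑ x', (∑ y, Q x y * A y x * (Q x' y * A y x')) ^ 2 ≤ q ^ 2 * (Q * A * (Q * A)).trace := by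
  have hQA (u v x y) : 0 ≤ Q u v * A x y := mul_nonneg (hQ u v) (hA x y)
  have hQAq (u v x y) : Q u v * A x y ≤ q :=
    (mul_le_of_le_one_right (hQ u v) (hA1 x y)).trans (hQq u v)
  have htrace : (Q * A * (Q * A)).trace =
      ∑ x, ∑ x', ∑ y, ∑ y', Q x y * A y x' * (Q x' y' * A y' x) := by
    simp only [Matrix.trace, Matrix.diag, Matrix.mul_apply (M := Q * A)]
    exact sum_congr rfl fun x _ ↦ sum_congr rfl fun x' _ ↦ by
      rw [Matrix.mul_apply, Matrix.mul_apply, sum_mul_sum]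
  rw [htrace, mul_sum]
  refine sum_le_sum fun x _ ↦ ?_
  rw [mul_sum]
  refine sum_le_sum fun x' _ ↦ ?_
  rw [sq, sum_mul_sum, mul_sum]
  refine sum_le_sum fun y _ ↦ ?_
  rw [mul_sum]
  refine sum_le_sum fun y' _ ↦ ?_
  calc Q x y * A y x * (Q x' y * A y x') * (Q x y' * A y' x * (Q x' y' * A y' x'))
      = Q x' y * A y x * (Q x y' * A y' x') * (Q x y * A y x' * (Q x' y' * A y' x)) := by ring
    _ ≤ q * q * (Q x y * A y x' * (Q x' y' * A y' x)) := by
        refine mul_le_mul_of_nonneg_right ?_ (mul_nonneg (hQA ..) (hQA ..))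
        exact mul_le_mul (hQAq ..) (hQAq ..) (hQA ..) ((hQA x y x y).trans (hQAq ..))
    _ = q ^ 2 * (Q x y * A y x' * (Q x' y' * A y' x)) := by rw [sq]

namespace IsRowRegular

variable {A : Matrix ι ι ℝ} {d : ℝ}

lemma colCentered_mul [Nonempty ι] (h : IsRowRegular A d) (M : Matrix ι ι ℝ) :
    colCentered A * colCentered M = colCentered (A * M) := by
  have hrow (u) : ∑ v, colCentered A u v = 0 := by
    simp only [colCentered_apply, sum_sub_distrib, h.sum_row, ← sum_div]
    rw [sum_comm]
    simp only [h.sum_row, sum_const, card_univ, nsmul_eq_mul]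
    field_simp
    ring
  ext u v
  have hleft : (colCentered A * colCentered M) u v = ∑ w, colCentered A u w * M w v := by
    simp only [Matrix.mul_apply, colCentered_apply M, mul_sub, sum_sub_distrib, ← sum_mul, hrow,
      zero_mul, sub_zero]
  rw [hleft, colCentered_apply]
  simp only [colCentered_apply, sub_mul, sum_sub_distrib, Matrix.mul_apply]
  rw [sum_comm (γ := ι), sum_div]
  simp only [← sum_mul, div_mul_eq_mul_div]

variable [DecidableEq ι]

lemma pow_nonneg (h : IsRowRegular A d) (k : ℕ) (u v : ι) : 0 ≤ (A ^ k) u v := by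
  induction k generalizing v with
  | zero =>
    rw [pow_zero, Matrix.one_apply]
    positivity
  | succ k ih =>
    rw [pow_succ, Matrix.mul_apply]
    exact sum_nonneg fun w _ ↦ mul_nonneg (ih w) (h.nonneg w v)

lemma sum_pow_row (h : IsRowRegular A d) (k : ℕ) (u : ι) : ∑ v, (A ^ k) u v = d ^ k := by
  induction k with
  | zero => simp [Matrix.one_apply]
  | succ k ih =>
    simp only [pow_succ, Matrix.mul_apply]
    rw [sum_comm]
    simp only [← mul_sum, h.sum_row, ← sum_mul, ih]

lemma pow_succ_le (h : IsRowRegular A d) (k : ℕ) (u v : ι) : (A ^ (k + 1)) u v ≤ d ^ k := by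
  rw [pow_succ, Matrix.mul_apply, ← h.sum_pow_row k u]
  exact sum_le_sum fun w _ ↦ mul_le_of_le_one_right (h.pow_nonneg k u w) (h.le_one w v)

lemma trace_pow_nonneg (h : IsRowRegular A d) (k : ℕ) : 0 ≤ (A ^ k).trace :=
  sum_nonneg fun u _ ↦ h.pow_nonneg k u u

lemma sum_sq_pow_succ_le (h : IsRowRegular A d) (k : ℕ) :
    ∑ u, ∑ v, (A ^ (k + 1)) u v ^ 2 ≤ Fintype.card ι * d ^ (2 * k + 1) := by
  calc ∑ u, ∑ v, (A ^ (k + 1)) u v ^ 2 ≤ ∑ u : ι, ∑ v, d ^ k * (A ^ (k + 1)) u v := by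
        refine sum_le_sum fun u _ ↦ sum_le_sum fun v _ ↦ ?_
        rw [sq]
        exact mul_le_mul_of_nonneg_right (h.pow_succ_le k u v) (h.pow_nonneg _ u v)
    _ = _ := by
        simp only [← mul_sum, h.sum_pow_row, sum_const, card_univ, nsmul_eq_mul]
        ring

lemma trace_pow_four_le (h : IsRowRegular A d) (m : ℕ) :
    (A ^ (m + 2)).trace ^ 4 ≤ Fintype.card ι ^ 4 * (d ^ (2 * m) * (A ^ (2 * (m + 2))).trace) := by
  have htrace : (A ^ (m + 2)).trace = ∑ x, ∑ y, (A ^ (m + 1)) x y * A y x := by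
    rw [pow_succ A (m + 1)]
    exact sum_congr rfl fun x _ ↦ Matrix.mul_apply
  have hpow : A ^ (2 * (m + 2)) = A ^ (m + 1) * A * (A ^ (m + 1) * A) := by
    rw [← pow_succ, ← pow_add, two_mul]
  calc (A ^ (m + 2)).trace ^ 4
      ≤ (Fintype.card ι * Fintype.card ι) ^ 2 * ∑ x, ∑ x',
          (∑ y, (A ^ (m + 1)) x y * A y x * ((A ^ (m + 1)) x' y * A y x')) ^ 2 := by
        rw [htrace]
        exact sum_sum_pow_four_le _
    _ ≤ (Fintype.card ι * Fintype.card ι) ^ 2 * ((d ^ m) ^ 2 * (A ^ (2 * (m + 2))).trace) := by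
        rw [hpow]
        gcongr
        exact sum_sq_le_sq_mul_trace (h.pow_nonneg _) (h.pow_succ_le m) h.nonneg h.le_one
    _ = _ := by ring

variable [Nonempty ι]

lemma colCentered_pow_succ (h : IsRowRegular A d) (k : ℕ) :
    colCentered A ^ (k + 1) = colCentered (A ^ (k + 1)) := by
  induction k with
  | zero => simp
  | succ k ih => rw [pow_succ', ih, h.colCentered_mul, ← pow_succ']

end IsRowRegular

end RowRegular

open Polynomial in
lemma IsEigenvalueFamily.exists_eq_star {ι κ : Type*} [Fintype ι] [DecidableEq ι] [Fintype κ]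
    {B : Matrix ι ι ℝ} {μ : κ → ℂ} (hμ : IsEigenvalueFamily (B.map Complex.ofRealHom) μ) (i : κ) :
    ∃ j, μ j = star (μ i) := by
  have hcharpoly := hμ.charpoly_eq
  rw [Matrix.charpoly_map] at hcharpoly
  have hroot (z : ℂ) : aeval z B.charpoly = ∏ j, (z - μ j) := by
    change eval₂ Complex.ofRealHom z B.charpoly = _
    rw [← eval_map, hcharpoly, eval_prod]
    simp only [eval_sub, eval_X, eval_C]
  have hi : ∏ j, (star (μ i) - μ j) = 0 := by
    rw [← hroot, Complex.star_def, aeval_conj, hroot, prod_eq_zero (mem_univ i) (sub_self _),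
      map_zero]
  obtain ⟨j, -, hj⟩ := prod_eq_zero_iff.1 hi
  exact ⟨j, (sub_eq_zero.1 hj).symm⟩

namespace IsRowRegular

variable {ι κ : Type*} [Fintype ι] [DecidableEq ι] [Nonempty ι] [Fintype κ]
  {A : Matrix ι ι ℝ} {d : ℝ} {μ : κ → ℂ}

lemma sum_eigenvalue_pow_succ (h : IsRowRegular A d)
    (hμ : IsEigenvalueFamily ((colCentered A).map Complex.ofRealHom) μ) (k : ℕ) :
    ∑ i, μ i ^ (k + 1) = (((A ^ (k + 1)).trace - d ^ (k + 1) : ℝ) : ℂ) := by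
  rw [← hμ.trace_pow, ← Matrix.map_pow, h.colCentered_pow_succ,
    ← trace_colCentered (h.sum_pow_row (k + 1))]
  exact (Complex.ofReal_sum _ _).symm

lemma sum_norm_eigenvalue_pow_le (h : IsRowRegular A d)
    (hμ : IsEigenvalueFamily ((colCentered A).map Complex.ofRealHom) μ) (k : ℕ) :
    ∑ i, ‖μ i‖ ^ (2 * (k + 1)) ≤ ∑ u, ∑ v, (A ^ (k + 1)) u v ^ 2 - d ^ (2 * (k + 1)) := by
  calc ∑ i, ‖μ i‖ ^ (2 * (k + 1)) ≤ ∑ u, ∑ v, colCentered (A ^ (k + 1)) u v ^ 2 := by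
        refine (hμ.sum_norm_pow_le (k + 1)).trans_eq ?_
        simp [← Matrix.map_pow, h.colCentered_pow_succ]
    _ ≤ _ := by
        rw [mul_comm 2, pow_mul]
        exact sum_colCentered_sq_le (h.sum_pow_row (k + 1))

lemma sum_norm_eigenvalue_pow_le_two_mul (h : IsRowRegular A d) (hd : 0 ≤ d)
    (hcard : (Fintype.card ι : ℝ) ≤ 3 * d)
    (hμ : IsEigenvalueFamily ((colCentered A).map Complex.ofRealHom) μ) (k : ℕ) :
    ∑ i, ‖μ i‖ ^ (2 * (k + 1)) ≤ 2 * d ^ (2 * (k + 1)) := by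
  have hsub := h.sum_norm_eigenvalue_pow_le hμ k
  have hsq := h.sum_sq_pow_succ_le k
  have hn : (Fintype.card ι : ℝ) * d ^ (2 * k + 1) ≤ 3 * d * d ^ (2 * k + 1) := by gcongr
  have : 3 * d * d ^ (2 * k + 1) = 3 * d ^ (2 * (k + 1)) := by ring
  linarith

lemma sum_norm_div_pow_le (h : IsRowRegular A d) (hd : 0 < d)
    (hcard : (Fintype.card ι : ℝ) ≤ 3 * d)
    (hμ : IsEigenvalueFamily ((colCentered A).map Complex.ofRealHom) μ) (m : ℕ) :
    ∑ i, ‖(μ i / d) ^ (m + 2)‖ ≤ 2 := by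
  have hnormalized (k : ℕ) : ∑ i, ‖μ i / d‖ ^ (2 * (k + 1)) ≤ 2 := by
    simp only [norm_div, Complex.norm_of_nonneg hd.le, div_pow, ← sum_div]
    rw [div_le_iff₀ (by positivity)]
    exact h.sum_norm_eigenvalue_pow_le_two_mul hd.le hcard hμ k
  have hamgm (x : ℝ) : x ^ (m + 2) ≤ (x ^ (2 * (0 + 1)) + x ^ (2 * (m + 1))) / 2 := by
    have := two_mul_le_add_sq x (x ^ (m + 1))
    have : 2 * x * x ^ (m + 1) = 2 * x ^ (m + 2) := by ring
    have : (x ^ (m + 1)) ^ 2 = x ^ (2 * (m + 1)) := by ring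
    linarith
  calc ∑ i, ‖(μ i / d) ^ (m + 2)‖
      ≤ ∑ i, (‖μ i / d‖ ^ (2 * (0 + 1)) + ‖μ i / d‖ ^ (2 * (m + 1))) / 2 :=
        sum_le_sum fun i _ ↦ by rw [norm_pow]; exact hamgm _
    _ ≤ 2 := by
        rw [← sum_div, sum_add_distrib]
        linarith [hnormalized 0, hnormalized m]

lemma trace_div_pow_le (h : IsRowRegular A d) (hd : 0 < d) (hcard : (Fintype.card ι : ℝ) ≤ 3 * d)
    {m : ℕ} {e : ℝ} (he : 0 ≤ e)
    (htrace : (A ^ (2 * (m + 2))).trace ≤ e ^ 4 / 81 * d ^ (2 * (m + 2))) :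
    (A ^ (m + 2)).trace / d ^ (m + 2) ≤ e := by
  have hpow : ((A ^ (m + 2)).trace / d ^ (m + 2)) ^ 4 ≤ e ^ 4 := by
    rw [div_pow, div_le_iff₀ (by positivity)]
    calc (A ^ (m + 2)).trace ^ 4
        ≤ Fintype.card ι ^ 4 * (d ^ (2 * m) * (A ^ (2 * (m + 2))).trace) := h.trace_pow_four_le m
      _ ≤ (3 * d) ^ 4 * (d ^ (2 * m) * (e ^ 4 / 81 * d ^ (2 * (m + 2)))) := by
          have := h.trace_pow_nonneg (2 * (m + 2))
          gcongr
      _ = e ^ 4 * (d ^ (m + 2)) ^ 4 := by ring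
  exact le_of_pow_le_pow_left₀ four_ne_zero he hpow

lemma exists_conj_eigenvalues_of_trace_le (h : IsRowRegular A d) (hd : 0 < d)
    (hcard : (Fintype.card ι : ℝ) ≤ 3 * d)
    (hμ : IsEigenvalueFamily ((colCentered A).map Complex.ofRealHom) μ) {m : ℕ} {ε : ℝ} (hε : 0 < ε)
    (hε1 : ε ≤ 1 / 10)
    (htrace : (A ^ (2 * (m + 2))).trace ≤ (ε ^ 2 / 100) ^ 4 / 81 * d ^ (2 * (m + 2))) :
    ∃ i j, j ≠ i ∧ μ j = star (μ i) ∧ (1 - ε) * d ≤ ‖μ i‖ := by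
  have hdC : (d : ℂ) ≠ 0 := Complex.ofReal_ne_zero.2 hd.ne'
  have he1 : ε ^ 2 / 100 ≤ 1 / 4 := by nlinarith
  set e := ε ^ 2 / 100
  have he : 0 ≤ e := by positivity
  have he4 : e ^ 4 / 81 ≤ e := by
    have : e ^ 4 ≤ e := pow_le_of_le_one he (by linarith) four_ne_zero
    linarith
  set a : ℕ → ℝ := fun k ↦ (A ^ k).trace / d ^ k
  have hsum (k : ℕ) : ∑ i, (μ i / d) ^ (k + 1) = ((-1 + a (k + 1) : ℝ) : ℂ) := by
    simp only [div_pow, ← sum_div, h.sum_eigenvalue_pow_succ hμ k, a]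
    push_cast
    field_simp
    ring
  have hsq : ∑ i, ((μ i / d) ^ (m + 2)) ^ 2 = ((-1 + a (2 * (m + 2)) : ℝ) : ℂ) := by
    simp only [← pow_mul, mul_comm (m + 2) 2]
    exact hsum (2 * m + 3)
  have hb : a (2 * (m + 2)) ≤ e := by
    rw [div_le_iff₀ (by positivity)]
    exact htrace.trans (by gcongr)
  have hnorm := h.sum_norm_div_pow_le hd hcard hμ m
  obtain ⟨i, him, hi⟩ := exists_im_ne_zero_and_le_norm (hb.trans he1) hsq hnorm
  obtain ⟨j, hj⟩ := hμ.exists_eq_star i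
  have hconj : (μ j / d) ^ (m + 2) = star ((μ i / d) ^ (m + 2)) := by
    rw [hj, star_pow, star_div₀, Complex.star_def, Complex.conj_ofReal]
  have hji : j ≠ i := by
    rintro rfl
    exact him (Complex.conj_eq_iff_im.1 hconj.symm)
  refine ⟨i, j, hji, hj, ?_⟩
  have hlarge := one_sub_le_norm_of_conj_pair hε hε1
    (div_nonneg (h.trace_pow_nonneg (m + 2)) (by positivity))
    (h.trace_div_pow_le hd hcard he htrace) hb (hsum (m + 1)) hsq hnorm hji hconj hi
  rw [← Complex.norm_of_nonneg hd.le, ← le_div_iff₀ (norm_pos_iff.2 hdC), ← norm_div]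
  by_contra! hlt
  rw [norm_pow] at hlarge
  linarith [pow_le_of_le_one (norm_nonneg (μ i / d)) (by linarith) (by lia : m + 2 ≠ 0)]

theorem le_sum_sq_of_trace_le (h : IsRowRegular A d) (hd : 0 < d)
    (hcard : (Fintype.card ι : ℝ) ≤ 3 * d) {m : ℕ} {ε : ℝ} (hε : 0 < ε) (hε1 : ε ≤ 1 / 10)
    (htrace : (A ^ (2 * (m + 2))).trace ≤ (ε ^ 2 / 100) ^ 4 / 81 * d ^ (2 * (m + 2))) :
    (3 - 8 * ε) * d ^ 4 ≤ ∑ u, ∑ v, (A ^ 2) u v ^ 2 := by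
  obtain ⟨n, μ, hμ⟩ := exists_isEigenvalueFamily ((colCentered A).map Complex.ofRealHom)
  obtain ⟨i, j, hji, hj, hi⟩ := h.exists_conj_eigenvalues_of_trace_le hd hcard hμ hε hε1 htrace
  have hpair : 2 * ((1 - ε) * d) ^ 4 ≤ ∑ k, ‖μ k‖ ^ 4 := by
    calc 2 * ((1 - ε) * d) ^ 4 ≤ ‖μ i‖ ^ 4 + ‖μ j‖ ^ 4 := by
          have : ((1 - ε) * d) ^ 4 ≤ ‖μ i‖ ^ 4 :=
            pow_le_pow_left₀ (mul_nonneg (by linarith) hd.le) hi 4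
          rw [hj, norm_star]
          linarith
      _ = ∑ k ∈ ({i, j} : Finset _), ‖μ k‖ ^ 4 := by rw [sum_pair hji.symm]
      _ ≤ ∑ k, ‖μ k‖ ^ 4 := sum_le_univ_sum_of_nonneg fun k ↦ by positivity
  have hbernoulli : 1 - 4 * ε ≤ (1 - ε) ^ 4 := by
    simpa [sub_eq_add_neg] using one_add_mul_le_pow (a := -ε) (by linarith) 4
  have hd4 : (1 - 4 * ε) * d ^ 4 ≤ ((1 - ε) * d) ^ 4 := by
    rw [mul_pow]
    gcongr
  have hsum : ∑ k, ‖μ k‖ ^ 4 ≤ _ := h.sum_norm_eigenvalue_pow_le hμ 1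
  norm_num at hsum
  linarith

end IsRowRegular

/-! ### Cyclic triples -/

section SelectionMatrix

variable [DecidableEq V]

/-- The adjacency matrix of the digraph in which `S v` is the out-neighborhood of `v`. -/
noncomputable def selectionMatrix (S : V → Finset V) : Matrix V V ℝ :=
  Matrix.of fun v u ↦ if u ∈ S v then 1 else 0

lemma selectionMatrix_apply (S : V → Finset V) (v u : V) :
    selectionMatrix S v u = if u ∈ S v then 1 else 0 := rfl

variable [Fintype V]

/-- The walks `x 0, …, x k` from `u` to `v` in the digraph with out-neighborhoods `S`. -/
def walks (S : V → Finset V) (k : ℕ) (u v : V) : Finset (Fin (k + 1) → V) :=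
  {x | x 0 = u ∧ x (Fin.last k) = v ∧ ∀ i : Fin k, x i.succ ∈ S (x i.castSucc)}

variable {S : V → Finset V}

lemma mem_walks {k : ℕ} {u v : V} {x : Fin (k + 1) → V} :
    x ∈ walks S k u v ↔
      x 0 = u ∧ x (Fin.last k) = v ∧ ∀ i : Fin k, x i.succ ∈ S (x i.castSucc) := by
  simp only [walks, mem_filter_univ]

lemma sum_selectionMatrix_mul (S : V → Finset V) (v : V) (g : V → ℝ) :
    ∑ u, selectionMatrix S v u * g u = ∑ u ∈ S v, g u := by
  simp only [selectionMatrix_apply, ite_mul, one_mul, zero_mul, ← sum_filter, filter_univ_mem]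

lemma isRowRegular_selectionMatrix {d : ℕ} (h : ∀ v, #(S v) = d) :
    IsRowRegular (selectionMatrix S) d where
  nonneg v u := by rw [selectionMatrix_apply]; positivity
  le_one v u := by rw [selectionMatrix_apply]; split_ifs <;> norm_num
  sum_row v := by simpa [h v] using sum_selectionMatrix_mul S v 1

lemma sum_card_walks_le (S : V → Finset V) (k : ℕ) (u v : V) :
    ∑ w ∈ S u, #(walks S k w v) ≤ #(walks S (k + 1) u v) := by
  rw [← card_sigma]
  refine card_le_card_of_injOn (fun p ↦ Fin.cons u p.2) ?_ ?_
  · rintro ⟨w, x⟩ hp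
    obtain ⟨hw, h0, hlast, hx⟩ : w ∈ S u ∧ x 0 = w ∧ x (Fin.last k) = v ∧
      ∀ i : Fin k, x i.succ ∈ S (x i.castSucc) := by simpa [mem_walks] using hp
    refine mem_walks.2 ⟨Fin.cons_zero .., hlast, Fin.cases ?_ hx⟩
    simpa [h0] using hw
  · rintro ⟨w, x⟩ hp ⟨w', x'⟩ hp' h
    obtain rfl : x = x' := Fin.cons_right_injective (α := fun _ ↦ V) u h
    have hw : x 0 = w := (mem_walks.1 (mem_sigma.1 hp).2).1
    have hw' : x 0 = w' := (mem_walks.1 (mem_sigma.1 hp').2).1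
    rw [← hw, hw']

lemma selectionMatrix_pow_apply_le (S : V → Finset V) (k : ℕ) (u v : V) :
    (selectionMatrix S ^ k) u v ≤ #(walks S k u v) := by
  induction k generalizing u with
  | zero =>
    rw [pow_zero, Matrix.one_apply]
    split_ifs with h
    · have : (fun _ ↦ u) ∈ walks S 0 u v := by simp [mem_walks, h]
      exact_mod_cast card_pos.2 ⟨_, this⟩
    · positivity
  | succ k ih =>
    calc (selectionMatrix S ^ (k + 1)) u v = ∑ w ∈ S u, (selectionMatrix S ^ k) w v := by
          rw [pow_succ', Matrix.mul_apply, sum_selectionMatrix_mul]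
      _ ≤ ∑ w ∈ S u, (#(walks S k w v) : ℝ) := sum_le_sum fun w _ ↦ ih w
      _ ≤ #(walks S (k + 1) u v) := by exact_mod_cast sum_card_walks_le S k u v

lemma trace_selectionMatrix_pow_succ_le (S : V → Finset V) (k : ℕ) :
    (selectionMatrix S ^ (k + 1)).trace ≤ #{x : Fin (k + 1) → V | ∀ j, x (j + 1) ∈ S (x j)} := by
  have hwalks : ∑ u, #(walks S (k + 1) u u) ≤
      #{x : Fin (k + 1) → V | ∀ j, x (j + 1) ∈ S (x j)} := by
    rw [← card_sigma]
    refine card_le_card_of_injOn (fun p ↦ Fin.init p.2) ?_ ?_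
    · rintro ⟨u, x⟩ hp
      obtain ⟨h0, hlast, hx⟩ := mem_walks.1 (mem_sigma.1 hp).2
      refine mem_filter_univ _ |>.2 (Fin.lastCases ?_ fun i ↦ ?_)
      · have := hx (Fin.last k)
        rw [Fin.succ_last, hlast, ← h0] at this
        rwa [Fin.last_add_one]
      · rw [Fin.coeSucc_eq_succ]
        exact hx i.castSucc
    · rintro ⟨u, x⟩ hp ⟨u', x'⟩ hp' h
      obtain ⟨h0, hlast, -⟩ : x 0 = u ∧ x (Fin.last (k + 1)) = u ∧ _ :=
        mem_walks.1 (mem_sigma.1 hp).2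
      obtain ⟨h0', hlast', -⟩ : x' 0 = u' ∧ x' (Fin.last (k + 1)) = u' ∧ _ :=
        mem_walks.1 (mem_sigma.1 hp').2
      obtain rfl : u = u' := by rw [← h0, ← h0']; exact congrFun h 0
      have hinit : Fin.init x = Fin.init x' := h
      rw [← Fin.snoc_init_self x, ← Fin.snoc_init_self x', hlast, hlast', hinit]
  calc (selectionMatrix S ^ (k + 1)).trace ≤ ∑ u, (#(walks S (k + 1) u u) : ℝ) :=
        sum_le_sum fun u _ ↦ selectionMatrix_pow_apply_le S (k + 1) u u
    _ ≤ _ := by exact_mod_cast hwalks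

end SelectionMatrix

lemma eventually_trace_selectionMatrix_le {k : ℕ} (hk : 2 ≤ k) {τ : ℝ} (hτ : 0 < τ) :
    ∀ᶠ d : ℕ in atTop, ∀ (V : Type u) [Fintype V] [DecidableEq V] {G : SimpleGraph V}
      {c : Sym2 V → ℕ} {S : V → Finset V}, RainbowFreeSelection G c S d (k + 1) →
      (selectionMatrix S ^ (k + 1)).trace ≤ τ * d ^ (k + 1) := by
  obtain ⟨η, hη, hd⟩ := exists_eventually_card_tuples_le hk hτ
  filter_upwards [hd] with d hd V _ _ G c S K
  refine (trace_selectionMatrix_pow_succ_le S k).trans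
    (hd V K (fun _ ↦ false) _ ∅ (by rw [card_empty, Nat.cast_zero]; positivity) ?_ ?_)
  · exact fun x hx j ↦ .inl ((mem_filter_univ x).1 hx j)
  · exact fun x _ a b hab h ↦ absurd (add_right_cancel h) hab

lemma eventually_le_sum_sq_selectionMatrix (m : ℕ) {ε : ℝ} (hε : 0 < ε) (hε1 : ε ≤ 1 / 10) :
    ∀ᶠ d : ℕ in atTop, ∀ (V : Type u) [Fintype V] [DecidableEq V] [Nonempty V] {G : SimpleGraph V}
      {c : Sym2 V → ℕ} {S : V → Finset V}, RainbowFreeSelection G c S d (2 * m + 3 + 1) →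
      (3 - 8 * ε) * (d : ℝ) ^ 4 ≤ ∑ u, ∑ v, (selectionMatrix S ^ 2) u v ^ 2 := by
  filter_upwards [eventually_trace_selectionMatrix_le (by lia : 2 ≤ 2 * m + 3)
    (by positivity : 0 < (ε ^ 2 / 100) ^ 4 / 81), eventually_gt_atTop 0]
    with d htrace hd V _ _ _ G c S K
  exact (isRowRegular_selectionMatrix K.card_eq).le_sum_sq_of_trace_le (Nat.cast_pos.2 hd)
    (by exact_mod_cast K.card_le) hε hε1 (htrace V K)

lemma exists_walk_of_sum_le [Fintype V] [Nonempty V] {S : V → Finset V} {d : ℕ} (hd : 0 < d)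
    (h : ∀ v, #(S v) = d) {f : V → V → ℝ} (hf : ∀ u x, 0 ≤ f u x) {t : ℝ} (ht : 0 < t)
    (hsum : ∑ u, ∑ x ∈ S u, f u x ≤ t * d ^ 2 / 32) :
    ∃ p : ℕ → V, ∀ k, p (k + 1) ∈ S (p k) ∧ f (p k) (p (k + 1)) ≤ t := by
  classical
  set bad : V → Finset V := fun u ↦ {x ∈ S u | t < f u x}
  set Z : Finset V := {u | d < 4 * #(bad u)}
  have hZ : 4 * #Z < d := by
    have hbad (u) (hu : u ∈ Z) : d / 4 * t ≤ ∑ x ∈ S u, f u x := by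
      have hu' : (d : ℝ) ≤ 4 * #(bad u) := by exact_mod_cast ((mem_filter_univ u).1 hu).le
      calc d / 4 * t ≤ #(bad u) • t := by
            rw [nsmul_eq_mul]
            gcongr
            linarith
        _ ≤ ∑ x ∈ bad u, f u x := card_nsmul_le_sum _ _ _ fun x hx ↦ (mem_filter.1 hx).2.le
        _ ≤ ∑ x ∈ S u, f u x :=
            sum_le_sum_of_subset_of_nonneg (filter_subset ..) fun x _ _ ↦ hf u x
    have hcount : #Z * (d / 4 * t) ≤ t * d ^ 2 / 32 := by
      calc #Z * (d / 4 * t) = #Z • (d / 4 * t) := (nsmul_eq_mul ..).symm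
        _ ≤ ∑ u ∈ Z, ∑ x ∈ S u, f u x := card_nsmul_le_sum _ _ _ hbad
        _ ≤ ∑ u, ∑ x ∈ S u, f u x :=
            sum_le_univ_sum_of_nonneg fun u ↦ sum_nonneg fun x _ ↦ hf u x
        _ ≤ _ := hsum
    have hdR : (0 : ℝ) < d := Nat.cast_pos.2 hd
    have : (4 * #Z : ℝ) < d := by
      by_contra! hcon
      nlinarith [mul_pos hdR ht, mul_pos hdR (mul_pos hdR ht),
        mul_le_mul_of_nonneg_right hcon (mul_pos hdR ht).le]
    exact_mod_cast this
  have hnext (u : {u // u ∉ Z}) : ∃ x : {u // u ∉ Z}, x.1 ∈ S u ∧ f u x ≤ t := by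
    have hu : ¬ d < 4 * #(bad u) := fun hu ↦ u.2 ((mem_filter_univ _).2 hu)
    obtain ⟨x, hx, hx'⟩ := exists_mem_notMem_of_card_lt_card (s := bad u ∪ Z) (t := S u)
      (by have := card_union_le (bad u) Z; have := h u; lia)
    rw [mem_union, not_or] at hx'
    exact ⟨⟨x, hx'.2⟩, hx, not_lt.1 fun hlt ↦ hx'.1 (mem_filter.2 ⟨hx, hlt⟩)⟩
  choose next hnext using hnext
  obtain ⟨v⟩ := ‹Nonempty V›
  obtain ⟨u, -, hu⟩ := exists_mem_notMem_of_card_lt_card (s := Z) (t := S v) (by have := h v; lia)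
  refine ⟨fun k ↦ next^[k] ⟨u, hu⟩, fun k ↦ ?_⟩
  simp only [Function.iterate_succ_apply']
  exact hnext _

section MissingPairs

variable [DecidableEq V]

/-- The pairs in `P × Q` that are not arcs of the digraph with out-neighborhoods `S`. -/
def missingPairs (S : V → Finset V) (P Q : Finset V) : Finset (V × V) :=
  {p ∈ P ×ˢ Q | p.2 ∉ S p.1}

variable {S : V → Finset V} {P Q P' Q' : Finset V}

lemma mem_missingPairs {a b : V} : (a, b) ∈ missingPairs S P Q ↔ a ∈ P ∧ b ∈ Q ∧ b ∉ S a := by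
  simp only [missingPairs, mem_filter, mem_product, and_assoc]

lemma missingPairs_mono (hP : P ⊆ P') (hQ : Q ⊆ Q') :
    missingPairs S P Q ⊆ missingPairs S P' Q' :=
  filter_subset_filter _ (product_subset_product hP hQ)

lemma card_missingPairs (S : V → Finset V) (P Q : Finset V) :
    (#(missingPairs S P Q) : ℝ) = #P * #Q - ∑ y ∈ P, ∑ w ∈ Q, selectionMatrix S y w := by
  have harcs : ∑ y ∈ P, ∑ w ∈ Q, selectionMatrix S y w = #{p ∈ P ×ˢ Q | p.2 ∈ S p.1} := by
    simp only [card_filter, sum_product, selectionMatrix_apply, Nat.cast_sum, Nat.cast_ite,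
      Nat.cast_one, Nat.cast_zero]
  have hsplit := card_filter_add_card_filter_not (s := P ×ˢ Q) fun p ↦ p.2 ∈ S p.1
  rw [card_product] at hsplit
  rw [harcs, missingPairs, eq_sub_iff_add_eq']
  exact_mod_cast hsplit

variable [Fintype V]

lemma sum_sum_card_missingPairs {d : ℕ} (h : ∀ v, #(S v) = d) :
    ∑ u, ∑ x ∈ S u, (#(missingPairs S (S u) (S x)) : ℝ)
      = Fintype.card V * d ^ 3 - ∑ u, ∑ v, (selectionMatrix S ^ 2) u v ^ 2 := by
  have hpow (u w) : (selectionMatrix S ^ 2) u w = ∑ x ∈ S u, selectionMatrix S x w := by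
    rw [sq, Matrix.mul_apply, sum_selectionMatrix_mul]
  have hvertex (u) : ∑ x ∈ S u, (#(missingPairs S (S u) (S x)) : ℝ)
      = d ^ 3 - ∑ w, (selectionMatrix S ^ 2) u w ^ 2 := by
    have hcodeg : ∑ x ∈ S u, ∑ y ∈ S u, ∑ w ∈ S x, selectionMatrix S y w
        = ∑ w, (selectionMatrix S ^ 2) u w ^ 2 := by
      simp only [hpow, sq, sum_mul_sum]
      rw [sum_comm (s := univ)]
      refine sum_congr rfl fun x _ ↦ ?_
      rw [sum_comm (s := univ)]
      exact sum_congr rfl fun y _ ↦ (sum_selectionMatrix_mul S x _).symm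
    simp only [card_missingPairs, sum_sub_distrib, h, hcodeg, sum_const, nsmul_eq_mul]
    ring
  simp only [hvertex, sum_sub_distrib, sum_const, card_univ, nsmul_eq_mul]

lemma exists_walk_card_missingPairs_le [Nonempty V] {d : ℕ} (hd : 0 < d) (h : ∀ v, #(S v) = d)
    (hcard : Fintype.card V ≤ 3 * d) {η : ℝ} (hη : 0 < η)
    (hsq : (3 - η / 32) * (d : ℝ) ^ 4 ≤ ∑ u, ∑ v, (selectionMatrix S ^ 2) u v ^ 2) :
    ∃ p : ℕ → V, ∀ k, p (k + 1) ∈ S (p k) ∧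
      #(missingPairs S (S (p k)) (S (p (k + 1)))) ≤ η * (d : ℝ) ^ 2 := by
  refine exists_walk_of_sum_le hd h (f := fun u x ↦ #(missingPairs S (S u) (S x)))
    (fun _ _ ↦ by positivity) (by positivity) ?_
  have hn : (Fintype.card V : ℝ) * d ^ 3 ≤ 3 * d * d ^ 3 := by
    gcongr
    exact_mod_cast hcard
  rw [sum_sum_card_missingPairs h]
  linarith

end MissingPairs

section CyclicTriple

variable [DecidableEq V]

/-- `Q 0 → Q 1 → Q 2 → Q 0` is, up to a proportion `ζ`, a blow-up of a directed triangle with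
parts of size `d` in the digraph whose out-neighborhoods are `S`. -/
structure IsCyclicTriple (S : V → Finset V) (d : ℕ) (ζ : ℝ) (Q : ZMod 3 → Finset V) : Prop where
  eq_of_mem {i j : ZMod 3} {v : V} : v ∈ Q i → v ∈ Q j → i = j
  card_le (i : ZMod 3) : #(Q i) ≤ d
  card_ge (i : ZMod 3) : (1 - ζ) * d ≤ #(Q i)
  card_missingPairs_le (i : ZMod 3) : #(missingPairs S (Q i) (Q (i + 1))) ≤ ζ * (d : ℝ) ^ 2

variable {S : V → Finset V} {d : ℕ} {ζ ζ' : ℝ} {Q : ZMod 3 → Finset V}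

lemma IsCyclicTriple.mono (hQ : IsCyclicTriple S d ζ Q) (h : ζ ≤ ζ') :
    IsCyclicTriple S d ζ' Q where
  eq_of_mem := hQ.eq_of_mem
  card_le := hQ.card_le
  card_ge i := le_trans (by gcongr) (hQ.card_ge i)
  card_missingPairs_le i := (hQ.card_missingPairs_le i).trans (by gcongr)

lemma card_le_card_sdiff_union (A B C : Finset V) :
    #A ≤ #(A \ (B ∪ C)) + (#(A ∩ B) + #(A ∩ C)) := by
  have := card_sdiff_add_card_inter A (B ∪ C)
  have := card_union_le (A ∩ B) (A ∩ C)
  rw [← inter_union_distrib_left] at this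
  lia

lemma card_add_card_add_card_le (A B C : Finset V) :
    #A + #B + #C ≤ #(A ∪ B ∪ C) + #(A ∩ B) + #(A ∩ C) + #(B ∩ C) := by
  have := card_union_add_card_inter A B
  have := card_union_add_card_inter (A ∪ B) C
  have hinter := card_union_le (A ∩ C) (B ∩ C)
  rw [← union_inter_distrib_right] at hinter
  lia

lemma card_sdiff_union_sdiff_add_le [Fintype V] (A B C D : Finset V) :
    #((A \ (B ∪ C)) \ D) + (#B + #C + #D)
      ≤ Fintype.card V + (#(B ∩ C) + #(B ∩ D) + #(C ∩ D)) := by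
  have hunion : #((A \ (B ∪ C)) \ D) + #(B ∪ C ∪ D) ≤ Fintype.card V := by
    rw [← card_union_of_disjoint]
    · exact card_le_univ _
    · rw [disjoint_union_right]
      exact ⟨sdiff_disjoint.mono_left sdiff_subset, sdiff_disjoint⟩
  have := card_add_card_add_card_le B C D
  lia

lemma card_missingPairs_le_add (P Q R : Finset V) :
    #(missingPairs S P Q) ≤ #(missingPairs S P R) + #P * #(Q \ R) := by
  rw [← card_product]
  refine (card_le_card fun ⟨a, b⟩ hab ↦ ?_).trans (card_union_le _ _)
  rw [mem_missingPairs] at hab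
  rw [mem_union, mem_missingPairs, mem_product, Finset.mem_sdiff]
  tauto

lemma card_missingPairs_sdiff_union_le [Fintype V] (hcard : Fintype.card V ≤ 3 * d)
    (A : Finset V) {B C D : Finset V} (hB : #B = d) (hC : #C = d) (hD : #D = d)
    (hBC : #(B ∩ C) ≤ ζ / 6 * d) (hBD : #(B ∩ D) ≤ ζ / 6 * d) (hCD : #(C ∩ D) ≤ ζ / 6 * d)
    (hmissing : #(missingPairs S C D) ≤ ζ / 6 * (d : ℝ) ^ 2) :
    #(missingPairs S C (A \ (B ∪ C))) ≤ ζ * (d : ℝ) ^ 2 := by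
  have hsdiff : #((A \ (B ∪ C)) \ D) ≤ ζ / 2 * d := by
    have hle := card_sdiff_union_sdiff_add_le A B C D
    have : (#((A \ (B ∪ C)) \ D) : ℝ) ≤ #(B ∩ C) + #(B ∩ D) + #(C ∩ D) := by
      norm_cast
      lia
    linarith
  have hle := card_missingPairs_le_add (S := S) C (A \ (B ∪ C)) D
  rw [hC] at hle
  calc (#(missingPairs S C (A \ (B ∪ C))) : ℝ)
      ≤ #(missingPairs S C D) + d * #((A \ (B ∪ C)) \ D) := mod_cast hle
    _ ≤ ζ / 6 * d ^ 2 + d * (ζ / 2 * d) := by gcongr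
    _ ≤ ζ * d ^ 2 := by linarith [hmissing.trans' (Nat.cast_nonneg _)]

lemma isCyclicTriple_of_card_inter_le [Fintype V] (hcard : Fintype.card V ≤ 3 * d)
    {P : ℕ → Finset V} (hP : ∀ k, #(P k) = d)
    (hinter₁ : ∀ k, #(P k ∩ P (k + 1)) ≤ ζ / 6 * d) (hinter₂ : ∀ k, #(P k ∩ P (k + 2)) ≤ ζ / 6 * d)
    (hmissing : ∀ k, #(missingPairs S (P k) (P (k + 1))) ≤ ζ / 6 * (d : ℝ) ^ 2) :
    IsCyclicTriple S d ζ
      (![P 0 \ (P 1 ∪ P 2), P 1 \ P 2, P 2] : Fin 3 → Finset V) := by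
  have hζd : 0 ≤ ζ / 6 * d := (Nat.cast_nonneg _).trans (hinter₁ 0)
  have hcases : ∀ i : ZMod 3, i = 0 ∨ i = 1 ∨ i = 2 := by decide
  constructor
  · intro i j v hi hj
    rcases hcases i with rfl | rfl | rfl <;> rcases hcases j with rfl | rfl | rfl <;>
      simp_all
  · intro i
    rcases hcases i with rfl | rfl | rfl
    · exact (card_le_card sdiff_subset).trans_eq (hP 0)
    · exact (card_le_card sdiff_subset).trans_eq (hP 1)
    · exact (hP 2).le
  · have hge₀ : (d : ℝ) ≤ #(P 0 \ (P 1 ∪ P 2)) + (#(P 0 ∩ P 1) + #(P 0 ∩ P 2)) := by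
      rw [← hP 0]
      exact_mod_cast card_le_card_sdiff_union (P 0) (P 1) (P 2)
    have hge₁ : (#(P 1 \ P 2) : ℝ) + #(P 1 ∩ P 2) = d := by
      rw [← hP 1]
      exact_mod_cast card_sdiff_add_card_inter (P 1) (P 2)
    intro i
    rcases hcases i with rfl | rfl | rfl
    · change (1 - ζ) * d ≤ #(P 0 \ (P 1 ∪ P 2))
      linarith [hinter₁ 0, hinter₂ 0]
    · change (1 - ζ) * d ≤ #(P 1 \ P 2)
      linarith [hinter₁ 1]
    · change (1 - ζ) * d ≤ #(P 2)
      rw [hP]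
      linarith
  · have hζd2 : 0 ≤ ζ / 6 * (d : ℝ) ^ 2 := (Nat.cast_nonneg _).trans (hmissing 0)
    intro i
    rcases hcases i with rfl | rfl | rfl
    · refine (Nat.cast_le.2 <| card_le_card <| missingPairs_mono sdiff_subset sdiff_subset).trans
        ((hmissing 0).trans ?_)
      linarith
    · refine (Nat.cast_le.2 <| card_le_card <| missingPairs_mono sdiff_subset Subset.rfl).trans
        ((hmissing 1).trans ?_)
      linarith
    · exact card_missingPairs_sdiff_union_le hcard (P 0) (hP 1) (hP 2) (hP 3) (hinter₁ 1)
        (hinter₂ 1) (hinter₁ 2) (hmissing 2)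

end CyclicTriple

lemma exists_eventually_card_inter_le {k : ℕ} (hk : 2 ≤ k) (hodd : Odd k) {θ : ℝ} (hθ : 0 < θ) :
    ∃ η > 0, ∀ᶠ d : ℕ in atTop, ∀ (V : Type u) [Fintype V] [DecidableEq V] {G : SimpleGraph V}
      {c : Sym2 V → ℕ} {S : V → Finset V}, RainbowFreeSelection G c S d (k + 1) →
      ∀ P₁ P₂ P₃ : Finset V, θ * d ≤ #P₂ →
      #(missingPairs S P₁ P₂) ≤ η * (d : ℝ) ^ 2 → #(missingPairs S P₂ P₃) ≤ η * (d : ℝ) ^ 2 →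
      #(P₁ ∩ P₂) ≤ θ * d ∧ #(P₁ ∩ P₃) ≤ θ * d := by
  obtain ⟨η, hη, h⟩ := exists_eventually_exists_card_lt.{u} hk hθ
  refine ⟨η / 2, by positivity, ?_⟩
  filter_upwards [h] with d h V _ _ G c S K P₁ P₂ P₃ hP₂ hM₁ hM₂
  constructor <;> by_contra! hcon
  · obtain ⟨_, hj⟩ := h V K (fun _ ↦ P₁ ∩ P₂) (missingPairs S P₁ P₂)
      (hM₁.trans (by gcongr; linarith)) fun _ a ha b hb ↦ by
        rw [mem_missingPairs]
        grind
    exact hj.not_gt hcon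
  · have hM : (#(missingPairs S P₁ P₂ ∪ missingPairs S P₂ P₃) : ℝ) ≤ η * d ^ 2 := by
      have : (#(missingPairs S P₁ P₂ ∪ missingPairs S P₂ P₃) : ℝ)
          ≤ #(missingPairs S P₁ P₂) + #(missingPairs S P₂ P₃) := mod_cast card_union_le _ _
      linarith
    have hparity (j : Fin (k + 1)) : Even (j + 1).val ↔ ¬ Even j.val := by
      rw [Fin.val_add_one]
      split_ifs with hj
      · simpa [hj] using hodd
      · exact Nat.even_add_one
    obtain ⟨j, hj⟩ := h V K (fun j ↦ if Even j.val then P₁ ∩ P₃ else P₂)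
      (missingPairs S P₁ P₂ ∪ missingPairs S P₂ P₃) hM fun j a ha b hb ↦ by
        rw [mem_union, mem_missingPairs, mem_missingPairs]
        simp only [hparity] at hb
        grind
    split_ifs at hj
    · exact hj.not_gt hcon
    · exact hj.not_ge hP₂

lemma eventually_exists_isCyclicTriple (m : ℕ) {ζ : ℝ} (hζ : 0 < ζ) (hζ1 : ζ ≤ 1) :
    ∀ᶠ d : ℕ in atTop, ∀ (V : Type u) [Fintype V] [DecidableEq V] [Nonempty V]
      {G : SimpleGraph V} {c : Sym2 V → ℕ} {S : V → Finset V},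
      RainbowFreeSelection G c S d (2 * m + 3 + 1) → ∃ Q, IsCyclicTriple S d ζ Q := by
  obtain ⟨η₀, hη₀, hinter⟩ := exists_eventually_card_inter_le.{u} (k := 2 * m + 3) (by lia)
    ⟨m + 1, by ring⟩ (θ := ζ / 6) (by positivity)
  set η := min η₀ (ζ / 6)
  have hη : 0 < η := lt_min hη₀ (by positivity)
  set ε := min (η / 256) (1 / 10)
  have hsq := eventually_le_sum_sq_selectionMatrix.{u} m (ε := ε) (by positivity) (min_le_right _ _)
  filter_upwards [hinter, hsq, eventually_gt_atTop 0] with d hinter hsq hd V _ _ _ G c S K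
  obtain ⟨p, hp⟩ := exists_walk_card_missingPairs_le hd K.card_eq K.card_le hη <| by
    refine le_trans ?_ (hsq V K)
    gcongr
    linarith [min_le_left (η / 256) (1 / 10)]
  have hmissing (k) : #(missingPairs S (S (p k)) (S (p (k + 1)))) ≤ η₀ * (d : ℝ) ^ 2 :=
    (hp k).2.trans (by gcongr; exact min_le_left _ _)
  have hinter (k) := hinter V K (S (p k)) (S (p (k + 1))) (S (p (k + 2)))
    (by rw [K.card_eq]; nlinarith [hd]) (hmissing k) (hmissing (k + 1))
  exact ⟨_, isCyclicTriple_of_card_inter_le (P := fun k ↦ S (p k)) K.card_le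
    (fun k ↦ K.card_eq _) (fun k ↦ (hinter k).1) (fun k ↦ (hinter k).2)
    fun k ↦ (hp k).2.trans (by gcongr; exact min_le_right _ _)⟩

/-! ### Monochromatic in-stars -/

section CyclicMissingPairs

variable [DecidableEq V] {S : V → Finset V} {d : ℕ} {ζ : ℝ} {Q : ZMod 3 → Finset V}

/-- The pairs missing from the three bipartite digraphs `Q i → Q (i + 1)`. -/
def cyclicMissingPairs (S : V → Finset V) (Q : ZMod 3 → Finset V) : Finset (V × V) :=
  univ.biUnion fun i ↦ missingPairs S (Q i) (Q (i + 1))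

lemma mem_or_mem_cyclicMissingPairs {i j : ZMod 3} (hij : j = i + 1) {a b : V} (ha : a ∈ Q i)
    (hb : b ∈ Q j) : b ∈ S a ∨ (a, b) ∈ cyclicMissingPairs S Q := by
  subst hij
  refine or_iff_not_imp_left.2 fun hab ↦ mem_biUnion.2 ⟨i, mem_univ i, ?_⟩
  exact mem_missingPairs.2 ⟨ha, hb, hab⟩

lemma IsCyclicTriple.card_cyclicMissingPairs_le (hQ : IsCyclicTriple S d ζ Q) :
    #(cyclicMissingPairs S Q) ≤ 3 * ζ * (d : ℝ) ^ 2 := by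
  calc (#(cyclicMissingPairs S Q) : ℝ)
      ≤ ∑ i : ZMod 3, (#(missingPairs S (Q i) (Q (i + 1))) : ℝ) := mod_cast card_biUnion_le
    _ ≤ ∑ _i : ZMod 3, ζ * (d : ℝ) ^ 2 := sum_le_sum fun i _ ↦ hQ.card_missingPairs_le i
    _ = 3 * ζ * (d : ℝ) ^ 2 := by
      rw [sum_const, card_univ, ZMod.card, nsmul_eq_mul]
      norm_num
      ring

end CyclicMissingPairs

lemma exists_eventually_not_isCyclicTriple {k : ℕ} (hk : 2 ≤ k) (h3 : ((k + 1 : ℕ) : ZMod 3) = 0) :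
    ∃ ζ > 0, ζ ≤ 1 ∧ ∀ᶠ d : ℕ in atTop, ∀ (V : Type u) [Fintype V] [DecidableEq V]
      {G : SimpleGraph V} {c : Sym2 V → ℕ} {S : V → Finset V},
      RainbowFreeSelection G c S d (k + 1) → ∀ Q, ¬ IsCyclicTriple S d ζ Q := by
  obtain ⟨η, hη, h⟩ := exists_eventually_exists_card_lt.{u} hk (θ := 1 / 2) (by norm_num)
  refine ⟨min (η / 3) (1 / 2), by positivity, (min_le_right _ _).trans (by norm_num), ?_⟩
  filter_upwards [h] with d h V _ _ G c S K Q hQ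
  have hM : #(cyclicMissingPairs S Q) ≤ η * (d : ℝ) ^ 2 :=
    hQ.card_cyclicMissingPairs_le.trans
      (by gcongr; linarith [min_le_left (η / 3) (1 / 2)])
  have hsucc (j : Fin (k + 1)) : (((j + 1).val : ℕ) : ZMod 3) = (j.val : ZMod 3) + 1 := by
    rw [Fin.val_add_one]
    split_ifs with hj
    · simpa [hj] using h3.symm
    · push_cast
      rfl
  obtain ⟨j, hj⟩ := h V K (fun j ↦ Q j.val) _ hM
    fun j a ha b hb ↦ mem_or_mem_cyclicMissingPairs (hsucc j) ha hb
  have hge := (hQ.mono (min_le_right _ _)).card_ge j.val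
  linarith

lemma card_mul_pow_le_card_filter_piFinset [DecidableEq V] {ι : Type*} [Fintype ι] [DecidableEq ι]
    {a₁ a₂ a₃ : ι} (h₁₂ : a₁ ≠ a₂) (h₁₃ : a₁ ≠ a₃) (h₂₃ : a₂ ≠ a₃) {Y : ι → Finset V} {r : ℝ}
    (hr : 0 ≤ r) (hY : ∀ j, r ≤ #(Y j)) {T : Finset (V × V × V)}
    (hT : T ⊆ Y a₁ ×ˢ Y a₂ ×ˢ Y a₃) :
    #T * r ^ (Fintype.card ι - 3) ≤ #{x ∈ Fintype.piFinset Y | (x a₁, x a₂, x a₃) ∈ T} := by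
  have hfiber : ∀ t ∈ T, r ^ (Fintype.card ι - 3)
      ≤ #{x ∈ {x ∈ Fintype.piFinset Y | (x a₁, x a₂, x a₃) ∈ T} | (x a₁, x a₂, x a₃) = t} := by
    rintro ⟨u₁, u₂, u₃⟩ ht
    obtain ⟨hu₁, hu₂, hu₃⟩ : u₁ ∈ Y a₁ ∧ u₂ ∈ Y a₂ ∧ u₃ ∈ Y a₃ := by
      simpa only [mem_product] using hT ht
    set Z : ι → Finset V := fun j ↦
      if j = a₁ then {u₁} else if j = a₂ then {u₂} else if j = a₃ then {u₃} else Y j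
    have hZ : Fintype.piFinset Z
        ⊆ {x ∈ {x ∈ Fintype.piFinset Y | (x a₁, x a₂, x a₃) ∈ T} |
            (x a₁, x a₂, x a₃) = (u₁, u₂, u₃)} := by
      intro x hx
      have hx (j) : x j ∈ Z j := Fintype.mem_piFinset.1 hx j
      have := hx a₁
      have := hx a₂
      have := hx a₃
      have hxY (j) : x j ∈ Y j := by
        have := hx j
        grind
      simp only [mem_filter, Fintype.mem_piFinset]
      grind
    calc r ^ (Fintype.card ι - 3) = ∏ j : ι, if j ∈ ({a₁, a₂, a₃} : Finset ι) then 1 else r := by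
          rw [prod_ite, prod_const_one, one_mul, prod_const, filter_notMem_eq_sdiff,
            card_sdiff_of_subset (subset_univ _), card_eq_three.2 ⟨_, _, _, h₁₂, h₁₃, h₂₃, rfl⟩,
            card_univ]
      _ ≤ ∏ j, (#(Z j) : ℝ) := prod_le_prod (by grind) fun j _ ↦ by
          have := hY j
          simp only [Z, mem_insert, mem_singleton]
          split_ifs <;> simp_all
      _ = #(Fintype.piFinset Z) := by
          rw [Fintype.card_piFinset, Nat.cast_prod]
      _ ≤ _ := Nat.cast_le.2 (card_le_card hZ)
  calc #T * r ^ (Fintype.card ι - 3) = ∑ _t ∈ T, r ^ (Fintype.card ι - 3) := by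
        rw [sum_const, nsmul_eq_mul]
    _ ≤ _ := sum_le_sum hfiber
    _ = #{x ∈ Fintype.piFinset Y | (x a₁, x a₂, x a₃) ∈ T} := by
      rw [card_eq_sum_card_fiberwise (t := T) (f := fun x ↦ (x a₁, x a₂, x a₃)), Nat.cast_sum]
      exact fun x hx ↦ (mem_filter.1 hx).2

section Labeling

variable {k : ℕ}

/-- The class of the `j`-th vertex of a closed walk of length `k + 1` in a cyclic triple whose
first `t` edges are traversed backwards, when vertex `0` lies in class `s + 1`. -/
def walkClass (t : ℕ) (s : ZMod 3) (j : Fin (k + 1)) : ZMod 3 :=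
  if j.val < t then s + 1 - j.val else s + 1 - 2 * t + j.val

lemma walkClass_of_le {t : ℕ} (s : ZMod 3) {j : Fin (k + 1)} (h : j.val ≤ t) :
    walkClass t s j = s + 1 - j.val := by
  rcases h.eq_or_lt with h | h
  · rw [walkClass, if_neg h.not_lt, h]
    ring
  · rw [walkClass, if_pos h]

lemma walkClass_of_ge {t : ℕ} (s : ZMod 3) {j : Fin (k + 1)} (h : t ≤ j.val) :
    walkClass t s j = s + 1 - 2 * t + j.val := by
  rw [walkClass, if_neg h.not_gt]

lemma walkClass_zero (t : ℕ) (s : ZMod 3) : walkClass (k := k) t s 0 = s + 1 := by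
  rw [walkClass_of_le s (Nat.zero_le t), Fin.val_zero, Nat.cast_zero, sub_zero]

lemma val_one_of_one_le (hk : 1 ≤ k) : (1 : Fin (k + 1)).val = 1 := by
  rw [Fin.val_one', Nat.mod_eq_of_lt (by lia)]

lemma walkClass_one {t : ℕ} (ht : 1 ≤ t) (htk : t ≤ k) (s : ZMod 3) :
    walkClass (k := k) t s 1 = s := by
  have hone := val_one_of_one_le (ht.trans htk)
  rw [walkClass_of_le s (by rwa [hone]), hone, Nat.cast_one, add_sub_cancel_right]

lemma walkClass_last {t : ℕ} (htk : t ≤ k) (h : ((k + 1 : ℕ) : ZMod 3) = 2 * t) (s : ZMod 3) :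
    walkClass t s (Fin.last k) = s := by
  rw [walkClass_of_ge s htk, Fin.val_last]
  push_cast at h ⊢
  linear_combination h

lemma walkClass_edgeHead {t : ℕ} (htk : t ≤ k) (h : ((k + 1 : ℕ) : ZMod 3) = 2 * t)
    (s : ZMod 3) (j : Fin (k + 1)) :
    walkClass t s (edgeHead (fun j ↦ decide (j.val < t)) j)
      = walkClass t s (edgeTail (fun j ↦ decide (j.val < t)) j) + 1 := by
  rcases lt_or_ge j.val t with hj | hj
  · have hsucc : (j + 1).val = j.val + 1 := Fin.val_add_one_of_lt' (by lia)
    simp only [edgeHead, edgeTail, hj, decide_true, if_true]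
    rw [walkClass_of_le s hj.le, walkClass_of_le s (by lia), hsucc]
    push_cast
    ring
  · simp only [edgeHead, edgeTail, hj.not_gt, decide_false, Bool.false_eq_true, if_false]
    rw [walkClass_of_ge s hj]
    rcases eq_or_ne j (Fin.last k) with rfl | hlast
    · rw [Fin.last_add_one, walkClass_of_le s (Nat.zero_le t), Fin.val_zero, Fin.val_last]
      push_cast at h ⊢
      linear_combination -h
    · have hsucc : (j + 1).val = j.val + 1 := by rw [Fin.val_add_one, if_neg hlast]
      rw [walkClass_of_ge s (by lia), hsucc]
      push_cast
      ring

lemma eq_zero_and_eq_last_of_edgeHead_eq {t : ℕ} (ht : 1 ≤ t) (htk : t ≤ k) {a b : Fin (k + 1)}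
    (hab : a ≠ b)
    (h : edgeHead (fun j ↦ decide (j.val < t)) a = edgeHead (fun j ↦ decide (j.val < t)) b) :
    a = 0 ∧ b = Fin.last k ∨ a = Fin.last k ∧ b = 0 := by
  simp only [edgeHead, decide_eq_true_eq] at h
  have hval := congrArg Fin.val h
  have ha := Fin.val_add_one a
  have hb := Fin.val_add_one b
  simp only [Fin.ext_iff, Fin.val_last, Fin.val_zero] at hab ha hb ⊢
  split_ifs at hval ha hb <;> lia

end Labeling

/-- The triples `(u, u', y)` with `u, u' ∈ P` and `y ∈ R` whose two edges into `y` have different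
colors. -/
def bichromaticTriples (c : Sym2 V → ℕ) (P R : Finset V) : Finset (V × V × V) :=
  {t ∈ P ×ˢ P ×ˢ R | c s(t.1, t.2.2) ≠ c s(t.2.1, t.2.2)}

lemma mem_bichromaticTriples {c : Sym2 V → ℕ} {P R : Finset V} {u u' y : V} :
    (u, u', y) ∈ bichromaticTriples c P R
      ↔ u ∈ P ∧ u' ∈ P ∧ y ∈ R ∧ c s(u, y) ≠ c s(u', y) := by
  simp only [bichromaticTriples, mem_filter, mem_product, and_assoc]

lemma card_bichromaticTriples_mul_pow_le [DecidableEq V] {k t : ℕ} (hk : 3 ≤ k) (ht : 1 ≤ t)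
    (htk : t ≤ k) (h : ((k + 1 : ℕ) : ZMod 3) = 2 * t) {c : Sym2 V → ℕ} {Q : ZMod 3 → Finset V}
    {r : ℝ} (hr : 0 ≤ r) (hQ : ∀ i, r ≤ #(Q i)) (s : ZMod 3) :
    #(bichromaticTriples c (Q s) (Q (s + 1))) * r ^ (k - 2)
      ≤ #{x ∈ Fintype.piFinset fun j : Fin (k + 1) ↦ Q (walkClass t s j) |
          (x (Fin.last k), x 1, x 0) ∈ bichromaticTriples c (Q s) (Q (s + 1))} := by
  have hone := val_one_of_one_le (ht.trans htk)
  have hT : bichromaticTriples c (Q s) (Q (s + 1))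
      ⊆ Q (walkClass t s (Fin.last k)) ×ˢ Q (walkClass (k := k) t s 1)
        ×ˢ Q (walkClass (k := k) t s 0) := by
    rw [walkClass_last htk h, walkClass_one ht htk, walkClass_zero]
    exact filter_subset ..
  have hle := card_mul_pow_le_card_filter_piFinset (a₁ := Fin.last k) (a₂ := 1) (a₃ := 0)
    (by simp only [ne_eq, Fin.ext_iff, Fin.val_last, hone]; lia)
    (by simp only [ne_eq, Fin.ext_iff, Fin.val_last, Fin.val_zero]; lia)
    (by simp only [ne_eq, Fin.ext_iff, hone, Fin.val_zero]; lia) hr (fun j ↦ hQ _) hT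
  rwa [Fintype.card_fin, show k + 1 - 3 = k - 2 by lia] at hle

lemma exists_eventually_card_bichromaticTriples_le {k : ℕ} (hk : 3 ≤ k)
    (h3 : ((k + 1 : ℕ) : ZMod 3) = 1 ∨ ((k + 1 : ℕ) : ZMod 3) = 2) {τ : ℝ} (hτ : 0 < τ) :
    ∃ ζ > 0, ∀ᶠ d : ℕ in atTop, ∀ (V : Type u) [Fintype V] [DecidableEq V] {G : SimpleGraph V}
      {c : Sym2 V → ℕ} {S : V → Finset V}, RainbowFreeSelection G c S d (k + 1) →
      ∀ Q, IsCyclicTriple S d ζ Q → ∀ s,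
        #(bichromaticTriples c (Q s) (Q (s + 1))) ≤ τ * (d : ℝ) ^ 3 := by
  obtain ⟨t, ht, htk, h⟩ : ∃ t, 1 ≤ t ∧ t ≤ k ∧ ((k + 1 : ℕ) : ZMod 3) = 2 * t := by
    rcases h3 with h | h
    · exact ⟨2, by lia, by lia, by rw [h]; decide⟩
    · exact ⟨1, by lia, by lia, by rw [h]; decide⟩
  obtain ⟨η, hη, hev⟩ := exists_eventually_card_tuples_le.{u} (k := k) (by lia)
    (τ := τ * (1 / 2) ^ (k - 2)) (by positivity)
  refine ⟨min (η / 3) (1 / 2), by positivity, ?_⟩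
  filter_upwards [hev, eventually_gt_atTop 0] with d hev hd V _ _ G c S K Q hQ s
  have hM : #(cyclicMissingPairs S Q) ≤ η * (d : ℝ) ^ 2 :=
    hQ.card_cyclicMissingPairs_le.trans
      (by gcongr; linarith [min_le_left (η / 3) (1 / 2)])
  set T := bichromaticTriples c (Q s) (Q (s + 1))
  set X : Finset (Fin (k + 1) → V) :=
    {x ∈ Fintype.piFinset fun j ↦ Q (walkClass t s j) | (x (Fin.last k), x 1, x 0) ∈ T}
  have hupper : #X ≤ τ * (1 / 2) ^ (k - 2) * (d : ℝ) ^ (k + 1) := by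
    refine hev V K (fun j ↦ decide (j.val < t)) X _ hM (fun x hx j ↦ ?_) fun x hx a b hab hhead ↦ ?_
    · have hx (j) := Fintype.mem_piFinset.1 (mem_filter.1 hx).1 j
      exact mem_or_mem_cyclicMissingPairs (walkClass_edgeHead htk h s j) (hx _) (hx _)
    · obtain ⟨-, -, -, hne⟩ := mem_bichromaticTriples.1 (mem_filter.1 hx).2
      rcases eq_zero_and_eq_last_of_edgeHead_eq ht htk hab hhead with ⟨rfl, rfl⟩ | ⟨rfl, rfl⟩
      · rw [zero_add, Fin.last_add_one, Sym2.eq_swap]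
        exact hne.symm
      · rw [zero_add, Fin.last_add_one, Sym2.eq_swap (a := x 0)]
        exact hne
  have hlower : #T * (1 / 2 * d : ℝ) ^ (k - 2) ≤ #X := by
    refine card_bichromaticTriples_mul_pow_le hk ht htk h (by positivity) (fun i ↦ ?_) s
    linarith [(hQ.mono (min_le_right _ _)).card_ge i]
  refine le_of_mul_le_mul_right (hlower.trans (hupper.trans_eq ?_))
    (show 0 < (1 / 2 * d : ℝ) ^ (k - 2) by positivity)
  obtain ⟨n, rfl⟩ : ∃ n, k = n + 2 := ⟨k - 2, by lia⟩
  rw [Nat.add_sub_cancel, mul_pow]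
  ring

section Averaging

variable {ι : Type*}

lemma exists_card_mul_card_filter_ne_le {β : Type*} [DecidableEq β] {A : Finset ι}
    (hA : A.Nonempty) (f : ι → β) :
    ∃ b, #A * #{u ∈ A | f u ≠ b} ≤ #{t ∈ A ×ˢ A | f t.1 ≠ f t.2} := by
  obtain ⟨u, -, hu⟩ := exists_min_image A (fun u ↦ #{v ∈ A | f v ≠ f u}) hA
  refine ⟨f u, ?_⟩
  calc #A * #{v ∈ A | f v ≠ f u} = ∑ _w ∈ A, #{v ∈ A | f v ≠ f u} := by
        rw [sum_const, smul_eq_mul]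
    _ ≤ ∑ w ∈ A, #{v ∈ A | f v ≠ f w} := sum_le_sum hu
    _ = #{t ∈ A ×ˢ A | f t.1 ≠ f t.2} := by simp only [card_filter, sum_product_right]

lemma card_filter_lt_mul_le {A : Finset ι} {f : ι → ℕ} {N d : ℕ} (hd : 0 < d) {κ : ℝ}
    (h : ∑ x ∈ A, (f x : ℝ) ≤ κ * (d : ℝ) ^ 2) : #{x ∈ A | d < N * f x} ≤ N * κ * d := by
  refine le_of_mul_le_mul_right ?_ (Nat.cast_pos (α := ℝ).2 hd)
  calc (#{x ∈ A | d < N * f x} * d : ℝ) = ∑ x ∈ A with d < N * f x, (d : ℝ) := by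
        rw [sum_const, nsmul_eq_mul]
    _ ≤ ∑ x ∈ A with d < N * f x, (N * f x : ℝ) :=
        sum_le_sum fun x hx ↦ mod_cast (mem_filter.1 hx).2.le
    _ ≤ ∑ x ∈ A, (N * f x : ℝ) :=
        sum_le_sum_of_subset_of_nonneg (filter_subset ..) fun _ _ _ ↦ by positivity
    _ = N * ∑ x ∈ A, (f x : ℝ) := (mul_sum ..).symm
    _ ≤ N * (κ * (d : ℝ) ^ 2) := by gcongr
    _ = N * κ * d * d := by ring

lemma card_le_card_filter_and_add (A : Finset ι) (p q : ι → Prop) [DecidablePred p]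
    [DecidablePred q] : #A ≤ #{x ∈ A | p x ∧ q x} + #{x ∈ A | ¬p x} + #{x ∈ A | ¬q x} := by
  classical
  rw [← card_filter_add_card_filter_not (s := A) fun x ↦ p x ∧ q x, add_assoc]
  gcongr
  refine (card_le_card fun x hx ↦ ?_).trans (card_union_le _ _)
  grind

lemma sum_card_filter_color_ne (c : Sym2 V → ℕ) (P R : Finset V) :
    ∑ y ∈ R, #{t ∈ P ×ˢ P | c s(t.1, y) ≠ c s(t.2, y)} = #(bichromaticTriples c P R) := by
  simp only [bichromaticTriples, card_filter, sum_product, sum_comm (s := R)]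

end Averaging

section Exceptional

variable [DecidableEq V] {G : SimpleGraph V} {c : Sym2 V → ℕ} {S : V → Finset V} {d : ℕ}
  {Q : ZMod 3 → Finset V} {m : V → ℕ} {P R : Finset V} {i : ZMod 3} {u v y : V}

/-- The vertices `u ∈ P` from which there is no selected edge of color `a` to `y`. -/
def exceptionalTails (S : V → Finset V) (c : Sym2 V → ℕ) (a : ℕ) (P : Finset V) (y : V) :
    Finset V :=
  {u ∈ P | ¬(y ∈ S u ∧ c s(u, y) = a)}

/-- The vertices `y ∈ R` to which there is no selected edge of color `m y` from `u`. -/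
def exceptionalHeads (S : V → Finset V) (c : Sym2 V → ℕ) (m : V → ℕ) (R : Finset V) (u : V) :
    Finset V :=
  {y ∈ R | ¬(y ∈ S u ∧ c s(u, y) = m y)}

lemma sum_card_exceptionalHeads (S : V → Finset V) (c : Sym2 V → ℕ) (m : V → ℕ)
    (P R : Finset V) :
    ∑ u ∈ P, #(exceptionalHeads S c m R u) = ∑ y ∈ R, #(exceptionalTails S c (m y) P y) :=
  sum_card_bipartiteAbove_eq_sum_card_bipartiteBelow fun u y ↦ ¬(y ∈ S u ∧ c s(u, y) = m y)

lemma exists_color_card_exceptionalTails_le (hP : #P ≤ d) (hP' : 3 * d ≤ 4 * #P) (hd : 0 < d)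
    (S : V → Finset V) (c : Sym2 V → ℕ) (y : V) :
    ∃ a, d * #(exceptionalTails S c a P y)
      ≤ 5 * d * #{u ∈ P | y ∉ S u} + 2 * #{t ∈ P ×ˢ P | c s(t.1, y) ≠ c s(t.2, y)} := by
  have hsplit := card_filter_add_card_filter_not (s := P) fun u ↦ y ∈ S u
  set A := {u ∈ P | y ∈ S u}
  set miss := #{u ∈ P | y ∉ S u}
  rcases le_or_gt d (4 * miss) with hmiss | hmiss
  · refine ⟨0, ?_⟩
    have hle : #(exceptionalTails S c 0 P y) ≤ 4 * miss :=
      (card_filter_le ..).trans (hP.trans hmiss)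
    nlinarith
  · obtain ⟨a, ha⟩ := exists_card_mul_card_filter_ne_le (A := A) (card_pos.1 (by lia))
      fun u ↦ c s(u, y)
    have hpairs : #{t ∈ A ×ˢ A | c s(t.1, y) ≠ c s(t.2, y)}
        ≤ #{t ∈ P ×ˢ P | c s(t.1, y) ≠ c s(t.2, y)} := by
      gcongr <;> exact filter_subset ..
    have hexc : #(exceptionalTails S c a P y) ≤ miss + #{u ∈ A | c s(u, y) ≠ a} := by
      refine (card_le_card fun u hu ↦ ?_).trans (card_union_le _ _)
      grind [exceptionalTails]
    refine ⟨a, ?_⟩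
    nlinarith [show d ≤ 2 * #A by lia]

lemma sum_card_filter_notMem (S : V → Finset V) (P R : Finset V) :
    ∑ y ∈ R, #{u ∈ P | y ∉ S u} = #(missingPairs S P R) := by
  simp only [missingPairs, card_filter, sum_product_right]

lemma IsCyclicTriple.exists_color_sum_card_le {ζ τ : ℝ} (hQ : IsCyclicTriple S d ζ Q)
    (hd : 0 < d) (hζ : ζ ≤ 1 / 4)
    (hτ : ∀ i, #(bichromaticTriples c (Q i) (Q (i + 1))) ≤ τ * (d : ℝ) ^ 3) :
    ∃ m : V → ℕ, ∀ i, ∑ y ∈ Q (i + 1), (#(exceptionalTails S c (m y) (Q i) y) : ℝ)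
      ≤ (5 * ζ + 2 * τ) * (d : ℝ) ^ 2 := by
  have hsize i : 3 * d ≤ 4 * #(Q i) := by
    have : (3 * d : ℝ) ≤ 4 * #(Q i) := by linarith [(hQ.mono hζ).card_ge i]
    exact_mod_cast this
  have hcolor (y) : ∃ a, ∀ i, y ∈ Q (i + 1) → d * #(exceptionalTails S c a (Q i) y)
      ≤ 5 * d * #{u ∈ Q i | y ∉ S u}
        + 2 * #{t ∈ Q i ×ˢ Q i | c s(t.1, y) ≠ c s(t.2, y)} := by
    by_cases hy : ∃ i, y ∈ Q (i + 1)
    · obtain ⟨i, hi⟩ := hy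
      obtain ⟨a, ha⟩ := exists_color_card_exceptionalTails_le (hQ.card_le i) (hsize i) hd S c y
      refine ⟨a, fun j hj ↦ ?_⟩
      obtain rfl := add_right_cancel (hQ.eq_of_mem hi hj)
      exact ha
    · exact ⟨0, fun i hi ↦ (hy ⟨i, hi⟩).elim⟩
  choose m hm using hcolor
  refine ⟨m, fun i ↦ le_of_mul_le_mul_left ?_ (Nat.cast_pos (α := ℝ).2 hd)⟩
  have hsum : d * ∑ y ∈ Q (i + 1), #(exceptionalTails S c (m y) (Q i) y)
      ≤ 5 * d * #(missingPairs S (Q i) (Q (i + 1)))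
        + 2 * #(bichromaticTriples c (Q i) (Q (i + 1))) := by
    rw [← sum_card_filter_notMem, ← sum_card_filter_color_ne, mul_sum, mul_sum, mul_sum,
      ← sum_add_distrib]
    exact sum_le_sum fun y hy ↦ hm y i hy
  calc (d : ℝ) * ∑ y ∈ Q (i + 1), (#(exceptionalTails S c (m y) (Q i) y) : ℝ)
      ≤ 5 * d * #(missingPairs S (Q i) (Q (i + 1)))
        + 2 * #(bichromaticTriples c (Q i) (Q (i + 1))) := mod_cast hsum
    _ ≤ 5 * d * (ζ * (d : ℝ) ^ 2) + 2 * (τ * (d : ℝ) ^ 3) := by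
        gcongr
        exacts [hQ.card_missingPairs_le i, hτ i]
    _ = d * ((5 * ζ + 2 * τ) * (d : ℝ) ^ 2) := by ring

/-- The vertices of `Q i` which have few exceptional heads in `Q (i + 1)` and few exceptional
tails in `Q (i - 1)`. -/
def cleanPart (S : V → Finset V) (c : Sym2 V → ℕ) (m : V → ℕ) (d : ℕ) (Q : ZMod 3 → Finset V)
    (i : ZMod 3) : Finset V :=
  {v ∈ Q i | 4000 * #(exceptionalHeads S c m (Q (i + 1)) v) ≤ d ∧
    4000 * #(exceptionalTails S c (m v) (Q (i - 1)) v) ≤ d}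

lemma mem_cleanPart : v ∈ cleanPart S c m d Q i ↔ v ∈ Q i ∧
    4000 * #(exceptionalHeads S c m (Q (i + 1)) v) ≤ d ∧
    4000 * #(exceptionalTails S c (m v) (Q (i - 1)) v) ≤ d := mem_filter

lemma cleanPart_subset : cleanPart S c m d Q i ⊆ Q i := filter_subset ..

lemma le_card_cleanPart (hd : 0 < d) (hQ : IsCyclicTriple S d (10⁻¹ ^ 5) Q)
    (hm : ∀ i, ∑ y ∈ Q (i + 1), (#(exceptionalTails S c (m y) (Q i) y) : ℝ)
      ≤ 10⁻¹ ^ 9 * (d : ℝ) ^ 2) (i : ZMod 3) :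
    49999 * d ≤ 50000 * #(cleanPart S c m d Q i) := by
  have hheads : ∑ u ∈ Q i, (#(exceptionalHeads S c m (Q (i + 1)) u) : ℝ)
      ≤ 10⁻¹ ^ 9 * (d : ℝ) ^ 2 := by
    have := hm i
    rw [← Nat.cast_sum, ← sum_card_exceptionalHeads] at this
    exact_mod_cast this
  have htails := hm (i - 1)
  rw [sub_add_cancel] at htails
  have hheads' := card_filter_lt_mul_le (N := 4000) hd hheads
  have htails' := card_filter_lt_mul_le (N := 4000) hd htails
  have hsplit := card_le_card_filter_and_add (Q i)
    (fun v ↦ 4000 * #(exceptionalHeads S c m (Q (i + 1)) v) ≤ d)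
    fun v ↦ 4000 * #(exceptionalTails S c (m v) (Q (i - 1)) v) ≤ d
  simp only [not_le] at hsplit
  have hsplit' : (#(Q i) : ℝ) ≤ #(cleanPart S c m d Q i)
      + #{v ∈ Q i | d < 4000 * #(exceptionalHeads S c m (Q (i + 1)) v)}
      + #{v ∈ Q i | d < 4000 * #(exceptionalTails S c (m v) (Q (i - 1)) v)} := by
    exact_mod_cast hsplit
  have : (49999 * d : ℝ) ≤ 50000 * #(cleanPart S c m d Q i) := by
    have := hQ.card_ge i
    norm_num at hheads' htails' this
    linarith
  exact_mod_cast this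

end Exceptional

namespace RainbowFreeSelection

variable [Fintype V] [DecidableEq V] {G : SimpleGraph V} {c : Sym2 V → ℕ} {S : V → Finset V}
  {d ℓ : ℕ} {Q : ZMod 3 → Finset V} {m : V → ℕ} {i : ZMod 3}

lemma color_injOn_cleanPart (K : RainbowFreeSelection G c S d ℓ) (h : d < 2000 * #(Q (i - 1))) :
    Set.InjOn m (cleanPart S c m d Q i) := by
  intro v hv w hw hvw
  have hv := (mem_cleanPart.1 hv).2.2
  have hw := (mem_cleanPart.1 hw).2.2
  have hunion := card_union_le (exceptionalTails S c (m v) (Q (i - 1)) v)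
    (exceptionalTails S c (m w) (Q (i - 1)) w)
  obtain ⟨x, hx, hx'⟩ := exists_mem_notMem_of_card_lt_card
    (s := exceptionalTails S c (m v) (Q (i - 1)) v ∪ exceptionalTails S c (m w) (Q (i - 1)) w)
    (t := Q (i - 1)) (by lia)
  simp only [exceptionalTails, mem_union, mem_filter, hx, true_and, not_or, not_not] at hx'
  exact K.color_injOn x hx'.1.1 hx'.2.1 (hx'.1.2.trans (hvw.trans hx'.2.2.symm))

lemma card_compl_biUnion_cleanPart_le (K : RainbowFreeSelection G c S d ℓ)
    (hQ : ∀ {i j v}, v ∈ Q i → v ∈ Q j → i = j)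
    (hlarge : ∀ i, 49999 * d ≤ 50000 * #(cleanPart S c m d Q i)) :
    1000 * #(univ.biUnion (cleanPart S c m d Q))ᶜ ≤ d := by
  have hunion : #(univ.biUnion (cleanPart S c m d Q)) = ∑ i, #(cleanPart S c m d Q i) :=
    card_biUnion fun i _ j _ hij ↦ disjoint_left.2 fun v hi hj ↦
      hij (hQ (cleanPart_subset hi) (cleanPart_subset hj))
  rw [sum_zmod_three _ 0] at hunion
  have hcompl := card_add_card_compl (univ.biUnion (cleanPart S c m d Q))
  have := K.card_le
  have := hlarge 0
  have := hlarge (0 + 1)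
  have := hlarge (0 + 2)
  lia

lemma nonempty_core (K : RainbowFreeSelection G c S d ℓ) (hd : 0 < d)
    (hQ : IsCyclicTriple S d (10⁻¹ ^ 5) Q)
    (hm : ∀ i, ∑ y ∈ Q (i + 1), (#(exceptionalTails S c (m y) (Q i) y) : ℝ)
      ≤ 10⁻¹ ^ 9 * (d : ℝ) ^ 2) : Nonempty (Core G c d) := by
  classical
  have hlarge := le_card_cleanPart hd hQ hm
  have hle i : #(cleanPart S c m d Q i) ≤ #(Q i) := card_le_card cleanPart_subset
  refine ⟨{
    part := cleanPart S c m d Q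
    color := m
    nonempty i := card_pos.1 (by have := hlarge i; lia)
    eq_of_mem hi hj := hQ.eq_of_mem (cleanPart_subset hi) (cleanPart_subset hj)
    color_injOn i := K.color_injOn_cleanPart
      (by have := hlarge (i - 1); have := hle (i - 1); lia)
    card_part_le i := by have := hle i; have := hQ.card_le i; lia
    card_out_ge {i v} hv := ?_
    card_in_ge {i v} hv := ?_
    exists_cover := ⟨(univ.biUnion (cleanPart S c m d Q))ᶜ,
      K.card_compl_biUnion_cleanPart_le hQ.eq_of_mem hlarge, fun v hv ↦ by simpa using hv⟩ }⟩
  · have hsplit := card_le_card_sdiff_add_card (s := cleanPart S c m d Q (i + 1))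
      (t := exceptionalHeads S c m (Q (i + 1)) v)
    grw [card_le_card (t := {u ∈ cleanPart S c m d Q (i + 1) | G.Adj v u ∧ c s(v, u) = m u})
      (fun u hu ↦ by grind [exceptionalHeads, mem_cleanPart, K.adj])] at hsplit
    have := hlarge (i + 1)
    have := (mem_cleanPart.1 hv).2.1
    lia
  · have hsplit := card_le_card_sdiff_add_card (s := cleanPart S c m d Q (i - 1))
      (t := exceptionalTails S c (m v) (Q (i - 1)) v)
    grw [card_le_card (t := {u ∈ cleanPart S c m d Q (i - 1) | G.Adj u v ∧ c s(u, v) = m v})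
      (fun u hu ↦ by grind [exceptionalTails, mem_cleanPart, K.adj])] at hsplit
    have := hlarge (i - 1)
    have := (mem_cleanPart.1 hv).2.2
    lia

end RainbowFreeSelection

lemma exists_subset_card_eq_of_le_colorDeg [Finite V] {G : SimpleGraph V} {c : Sym2 V → ℕ}
    {d : ℕ} {v : V} (h : d ≤ colorDeg G c v) :
    ∃ T : Finset V, #T = d ∧ (∀ u ∈ T, G.Adj v u) ∧ Set.InjOn (fun u ↦ c s(v, u)) T := by
  classical
  have := Fintype.ofFinite V
  rw [colorDeg_eq_card_colorSet] at h
  obtain ⟨C, hC, rfl⟩ := exists_subset_card_eq h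
  have hrep (α : C) : ∃ u, G.Adj v u ∧ c s(v, u) = α := mem_colorSet.1 (hC α.2)
  choose g hadj hcolor using hrep
  have hinj : Function.Injective g := fun α β h ↦ by
    rw [Subtype.ext_iff, ← hcolor, ← hcolor, h]
  refine ⟨univ.image g, ?_, ?_, ?_⟩
  · rw [card_image_of_injective _ hinj, card_univ, Fintype.card_coe]
  · exact forall_mem_image.2 fun α _ ↦ hadj α
  · intro u hu w hw huw
    obtain ⟨α, -, rfl⟩ := mem_image.1 hu
    obtain ⟨β, -, rfl⟩ := mem_image.1 hw
    simp only [hcolor] at huw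
    rw [Subtype.ext huw]

lemma exists_rainbowFreeSelection [Fintype V] {G : SimpleGraph V} {c : Sym2 V → ℕ} {d ℓ : ℕ}
    (hcard : Fintype.card V ≤ 3 * d) (hdeg : ∀ v, d ≤ colorDeg G c v)
    (hno : ¬ HasRainbowCycle G c ℓ) : ∃ S, RainbowFreeSelection G c S d ℓ := by
  choose S hS hadj hinj using fun v ↦ exists_subset_card_eq_of_le_colorDeg (hdeg v)
  exact ⟨S, hadj _ _, hinj, hS, hcard, hno⟩

lemma exists_eventually_nonempty_core {k : ℕ} (hk : 3 ≤ k)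
    (h3 : ((k + 1 : ℕ) : ZMod 3) = 1 ∨ ((k + 1 : ℕ) : ZMod 3) = 2) :
    ∃ ζ > 0, ζ ≤ 1 ∧ ∀ᶠ d : ℕ in atTop, ∀ (V : Type u) [Fintype V] [DecidableEq V]
      {G : SimpleGraph V} {c : Sym2 V → ℕ} {S : V → Finset V},
      RainbowFreeSelection G c S d (k + 1) → ∀ Q, IsCyclicTriple S d ζ Q →
        Nonempty (Core G c d) := by
  obtain ⟨ζ, hζ, hev⟩ := exists_eventually_card_bichromaticTriples_le.{u} hk h3
    (τ := 10⁻¹ ^ 10) (by positivity)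
  refine ⟨min ζ (10⁻¹ ^ 10), by positivity, (min_le_right _ _).trans (by norm_num), ?_⟩
  filter_upwards [hev, eventually_gt_atTop 0] with d hev hd V _ _ G c S K Q hQ
  have hQ' := hQ.mono (min_le_right _ _)
  obtain ⟨m, hm⟩ := hQ'.exists_color_sum_card_le hd (by norm_num)
    (hev V K Q (hQ.mono (min_le_left _ _)))
  exact K.nonempty_core hd (hQ'.mono (by norm_num)) fun i ↦
    (hm i).trans (by gcongr; norm_num)

theorem eventually_hasRainbowCycle {ℓ : ℕ} (heven : Even ℓ) (hℓ : 4 ≤ ℓ) :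
    ∀ᶠ d : ℕ in atTop, ∀ (V : Type u) [Fintype V] [Nonempty V] {G : SimpleGraph V}
      {c : Sym2 V → ℕ}, Fintype.card V + 5 ≤ 3 * d → (∀ v, d ≤ colorDeg G c v) →
        HasRainbowCycle G c ℓ := by
  classical
  obtain ⟨m, rfl⟩ : ∃ m, ℓ = 2 * m + 3 + 1 := by
    obtain ⟨r, rfl⟩ := heven
    exact ⟨r - 2, by lia⟩
  have hmod : ((2 * m + 3 + 1 : ℕ) : ZMod 3) = 0 ∨ ((2 * m + 3 + 1 : ℕ) : ZMod 3) = 1 ∨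
      ((2 * m + 3 + 1 : ℕ) : ZMod 3) = 2 :=
    (by decide : ∀ r : ZMod 3, r = 0 ∨ r = 1 ∨ r = 2) _
  rcases hmod with h3 | h3
  · obtain ⟨ζ, hζ, hζ1, hnot⟩ := exists_eventually_not_isCyclicTriple.{u} (by lia) h3
    filter_upwards [hnot, eventually_exists_isCyclicTriple.{u} m hζ hζ1]
      with d hnot htriple V _ _ G c hcard hdeg
    by_contra hno
    obtain ⟨S, K⟩ := exists_rainbowFreeSelection (by lia) hdeg hno
    obtain ⟨Q, hQ⟩ := htriple V K
    exact hnot V K Q hQ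
  · obtain ⟨ζ, hζ, hζ1, hcore⟩ := exists_eventually_nonempty_core.{u} (by lia) h3
    filter_upwards [hcore, eventually_exists_isCyclicTriple.{u} m hζ hζ1,
      eventually_ge_atTop (1000 * (10 * (2 * m + 3 + 1) + 10))]
      with d hcore htriple hd V _ _ G c hcard hdeg
    by_contra hno
    obtain ⟨S, K⟩ := exists_rainbowFreeSelection (by lia) hdeg hno
    obtain ⟨Q, hQ⟩ := htriple V K
    obtain ⟨core⟩ := hcore V K Q hQ
    have hfree : RainbowFreeCore G c d (2 * m + 3 + 1) :=
      { core with
        four_le := hℓ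
        even := heven
        mod_three := h3
        large := hd
        not_hasRainbowCycle := hno
        le_colorDeg := hdeg }
    exact hfree.three_mul_lt.not_ge hcard

end RainbowEvenCycle

theorem stmt18 (ℓ : ℕ) (heven : Even ℓ) (hl : 4 ≤ ℓ) :
    ∃ N₀ : ℕ, ∀ (W : Type) (_ : Fintype W) (G : SimpleGraph W) (c : Sym2 W → ℕ),
      N₀ ≤ Fintype.card W →
      ((Fintype.card W : ℚ) + 5) / 3 ≤ (minColorDeg G c : ℚ) →
      HasRainbowCycle G c ℓ := by
  obtain ⟨N, hN⟩ := Filter.eventually_atTop.1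
    (RainbowEvenCycle.eventually_hasRainbowCycle.{0} heven hl)
  refine ⟨3 * N + 1, fun W _ G c hcard hdeg ↦ ?_⟩
  have : Nonempty W := Fintype.card_pos_iff.1 (by lia)
  have hdeg : Fintype.card W + 5 ≤ 3 * minColorDeg G c := by
    rw [div_le_iff₀' (by norm_num)] at hdeg
    exact_mod_cast hdeg
  exact hN _ (by lia) W hdeg fun w ↦ ciInf_le (OrderBot.bddBelow _) w
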